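/- arXiv:1607.03600 — 2 statements merged into one kernel-verified Lean document; each statement's English description precedes it below -/
import Mathlib

section
/- Let A₁, A₂ be finite subsets of ℂ, let Π ⊆ A₁×A₂, and let Γ be a finite multiset of algebraic curves in ℂ² of degree at most δ such that the system (Π,Γ) has (λ,μ)-bounded multiplicity. Then I(Π,Γ) ≤ c·(|A₁|^{2/3}|A₂|^{2/3}|Γ|^{2/3} + |A₁||A₂| + |Γ|), where c is a constant depending only (polynomially) on δ, λ and μ, and I(Π,Γ) denotes the number of incidences counted with multiplicity. -/
open MvPolynomial

noncomputable section

attribute [local instance] Classical.propDecidable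

def ev2 (g : MvPolynomial (Fin 2) ℂ) (p : ℂ × ℂ) : ℂ := eval ![p.1, p.2] g

/-- The system `(Π,Γ)` has `(λ,μ)`-bounded multiplicity:
(a) for each curve `γ ∈ Γ` there are at most `lam` other curves of `Γ` (with multiplicity)
meeting `γ` in more than `mu` points;
(b) for each point `p ∈ Π` there are at most `lam` other points of `Π` lying together with
`p` on more than `mu` curves of `Γ` (with multiplicity). -/
def BddMult (Pi : Finset (ℂ × ℂ)) (Γ : Multiset (Set (ℂ × ℂ))) (lam mu : ℕ) : Prop :=
  (∀ γ ∈ Γ, Multiset.card ((Γ.erase γ).filter fun γ' =>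
      (γ ∩ γ' : Set (ℂ × ℂ)).Infinite ∨ mu < (γ ∩ γ' : Set (ℂ × ℂ)).ncard) ≤ lam) ∧
  (∀ p ∈ Pi, ((Pi.erase p).filter fun p' =>
      mu < Multiset.card (Γ.filter fun γ => p ∈ γ ∧ p' ∈ γ)).card ≤ lam)

/-- The number of incidences between the point set `Π` and the multiset of curves `Γ`,
counted with the multiplicity of the curves. -/
def incidences (Pi : Finset (ℂ × ℂ)) (Γ : Multiset (Set (ℂ × ℂ))) : ℕ :=
  (Γ.map fun γ => (Pi.filter fun p => p ∈ γ).card).sum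

section

open Metric

/-- If the derivative stays within `b` of `a` on a convex open set, then `f` stays within
`b * ‖x - y‖` of the affine map of slope `a`. -/
lemma norm_sub_affine_le {f : ℂ → ℂ} {s : Set ℂ} (hs : Convex ℝ s) (ho : IsOpen s)
    (hf : DifferentiableOn ℂ f s) {a : ℂ} {b : ℝ}
    (hb : ∀ x ∈ s, ‖deriv f x - a‖ ≤ b) {x y : ℂ} (hx : x ∈ s) (hy : y ∈ s) :
    ‖f y - f x - a * (y - x)‖ ≤ b * ‖y - x‖ := by
  have h := hs.norm_image_sub_le_of_norm_hasDerivWithin_le (f := fun x => f x - a * x)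
    (f' := fun x => deriv f x - a) (C := b) (x := x) (y := y) (fun z hz => by
      have h1 := (hf.differentiableAt (ho.mem_nhds hz)).hasDerivAt
      have h2 := (h1.sub ((hasDerivAt_id z).const_mul a)).hasDerivWithinAt (s := s)
      simp only [mul_one] at h2
      exact h2) hb hx hy
  refine le_trans (le_of_eq ?_) h
  congr 1
  ring

/-- A quantitative open mapping theorem (Bloch): the image of a disc of radius `R` about `c`
contains a disc of radius `‖u' c‖ * R / 192`. -/
lemma bloch {u : ℂ → ℂ} {c : ℂ} {R : ℝ} (hR : 0 < R) (hu : DifferentiableOn ℂ u (ball c R)) :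
    ∃ w, ball w (‖deriv u c‖ * R / 192) ⊆ u '' ball c R := by
  by_cases h0 : deriv u c = 0
  · exact ⟨0, by simp [h0]⟩
  have hdu : DifferentiableOn ℂ (deriv u) (ball c R) := hu.deriv isOpen_ball
  set ρ := R / 2 with hρ
  have hρ0 : 0 < ρ := by positivity
  have hsub : closedBall c ρ ⊆ ball c R := closedBall_subset_ball (by linarith)
  obtain ⟨x₀, hx₀, hmax⟩ := (isCompact_closedBall c ρ).exists_isMaxOn
    (f := fun x => ‖deriv u x‖ * (ρ - dist x c)) ⟨c, by simp [hρ0.le]⟩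
    ((hdu.continuousOn.mono hsub).norm.mul (by fun_prop))
  have hc := hmax (show c ∈ closedBall c ρ by simp [hρ0.le])
  simp only [Set.mem_ofPred_eq, dist_self, sub_zero] at hc
  set M := ‖deriv u x₀‖ with hM
  set t := (ρ - dist x₀ c) / 2 with ht
  have hpos : 0 < M * (ρ - dist x₀ c) := lt_of_lt_of_le (by positivity) hc
  have ht0 : 0 < t := by
    have := pos_of_mul_pos_right hpos (norm_nonneg _)
    positivity
  have hM0 : 0 < M := by
    rcases (norm_nonneg (deriv u x₀)).eq_or_lt with h | h
    · rw [hM, ← h] at hpos; simp at hpos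
    · exact h
  have hball : ball x₀ t ⊆ ball c R := by
    intro x hx
    rw [mem_ball] at *
    have := dist_triangle x x₀ c
    linarith
  have hbd : ∀ x ∈ ball x₀ t, ‖deriv u x‖ ≤ 2 * M := by
    intro x hx
    rw [mem_ball] at hx
    have h1 := dist_triangle x x₀ c
    have h2 := hmax (show x ∈ closedBall c ρ by rw [mem_closedBall]; linarith)
    simp only [Set.mem_ofPred_eq] at h2
    have h3 : t ≤ ρ - dist x c := by linarith
    have h4 : ‖deriv u x‖ * t ≤ 2 * M * t := by
      calc _ ≤ ‖deriv u x‖ * (ρ - dist x c) := by gcongr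
        _ ≤ _ := h2
        _ = _ := by rw [ht]; ring
    exact le_of_mul_le_mul_right h4 ht0
  have hclose : ∀ x ∈ ball x₀ (t / 6), ‖deriv u x - deriv u x₀‖ ≤ M / 2 := by
    intro x hx
    have hx' : x ∈ ball x₀ t := ball_subset_ball (by linarith) hx
    have := Complex.dist_le_div_mul_dist_of_mapsTo_ball (R₂ := 3 * M) (hdu.mono hball)
      (fun y hy => by
        rw [mem_closedBall, dist_eq_norm]
        have := norm_sub_le (deriv u y) (deriv u x₀)
        have := hbd y hy
        linarith) hx'
    rw [dist_eq_norm] at this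
    rw [mem_ball] at hx
    calc _ ≤ _ := this
      _ ≤ 3 * M / t * (t / 6) := by gcongr
      _ = M / 2 := by field_simp; norm_num
  have hd12 : DifferentiableOn ℂ u (ball x₀ (t/6)) :=
    hu.mono ((ball_subset_ball (by linarith)).trans hball)
  have hlow : ∀ x ∈ ball x₀ (t / 6), M / 2 * ‖x - x₀‖ ≤ ‖u x - u x₀‖ := by
    intro x hx
    have h1 := norm_sub_affine_le (convex_ball x₀ (t/6)) isOpen_ball hd12 hclose
      (mem_ball_self (by positivity)) hx
    have h2 := norm_sub_norm_le (deriv u x₀ * (x - x₀)) (u x - u x₀)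
    rw [norm_mul] at h2
    have : M * ‖x - x₀‖ - ‖u x - u x₀‖ ≤ M / 2 * ‖x - x₀‖ := by
      refine le_trans h2 (le_trans (le_of_eq ?_) h1)
      rw [norm_sub_rev]
    linarith
  refine ⟨u x₀, ?_⟩
  have hsub2 : closedBall x₀ (t/12) ⊆ ball x₀ (t/6) := closedBall_subset_ball (by linarith)
  have key := DiffContOnCl.ball_subset_image_closedBall (f := u) (z₀ := x₀) (r := t / 12)
    (ε := M * t / 24)
    ((hd12.mono hsub2).diffContOnCl_ball subset_rfl)
    (by positivity) (fun z hz => by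
      refine le_trans (le_of_eq ?_) (hlow z (hsub2 (sphere_subset_closedBall hz)))
      rw [mem_sphere, dist_eq_norm] at hz
      rw [hz]; ring)
    (by
      refine Filter.Eventually.frequently (f := nhdsWithin x₀ {x₀}ᶜ) ?_ |>.filter_mono
        nhdsWithin_le_nhds
      filter_upwards [self_mem_nhdsWithin, mem_nhdsWithin_of_mem_nhds
        (ball_mem_nhds x₀ (show 0 < t/6 by positivity))] with x hx hx2 heq
      have := hlow x hx2
      rw [heq, sub_self, norm_zero] at this
      have h3 : 0 < ‖x - x₀‖ := norm_pos_iff.2 (sub_ne_zero.2 hx)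
      have : 0 < M / 2 * ‖x - x₀‖ := by positivity
      linarith)
  refine (ball_subset_ball ?_).trans (key.trans (Set.image_mono (hsub2.trans
    ((ball_subset_ball (by linarith)).trans hball))))
  have : M * (ρ - dist x₀ c) = 2 * (M * t) := by rw [ht]; ring
  rw [this] at hc
  have : ‖deriv u c‖ * R = 2 * (‖deriv u c‖ * ρ) := by rw [hρ]; ring
  rw [this]
  linarith

/-- A holomorphic function on a disc without zeros that takes no value more than `N` times
is nearly constant on a concentric disc of proportional radius. -/
lemma exists_nearly_constant (N : ℕ) : ∃ κ : ℝ, 0 < κ ∧ κ ≤ 1 ∧ ∀ (g : ℂ → ℂ) (c : ℂ) (R : ℝ),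
    0 < R → DifferentiableOn ℂ g (ball c R) → (∀ x ∈ ball c R, g x ≠ 0) →
    (∀ v, ∀ S : Finset ℂ, (∀ x ∈ S, x ∈ ball c R ∧ g x = v) → S.card ≤ N) →
    ∀ x ∈ ball c (κ * R), ‖g x - g c‖ ≤ ‖g c‖ / 2 := by
  set L : ℝ := 384 * (2 * Real.pi * (N + 1)) with hL
  have hLp : 0 < L := by positivity
  have hL4 : 1 ≤ L := by
    have h1 : (0:ℝ) ≤ N := N.cast_nonneg
    have h2 := Real.pi_gt_three
    have : Real.pi * 1 ≤ Real.pi * (N + 1) := by gcongr; linarith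
    rw [hL]; linarith
  refine ⟨1 / (4 * L), by positivity, ?_, ?_⟩
  · rw [div_le_one (by positivity)]; linarith
  intro g c R hR hg hg0 hN
  have hdg : DifferentiableOn ℂ (deriv g) (ball c R) := hg.deriv isOpen_ball
  obtain ⟨u, huc, hu⟩ := (hdg.div hg hg0).isExactOn_ball.with_val_at c 0
  have hud : DifferentiableOn ℂ u (ball c R) :=
    fun x hx => (hu x hx).differentiableAt.differentiableWithinAt
  have hexp : ∀ x ∈ ball c R, g x = Complex.exp (u x) * g c := by
    have hconst : ∀ x ∈ ball c R, Complex.exp (-u x) * g x = Complex.exp (-u c) * g c := by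
      intro x hx
      refine (convex_ball c R).is_const_of_fderivWithin_eq_zero (𝕜 := ℂ)
        (f := fun x => Complex.exp (-u x) * g x) ?_ ?_ hx (mem_ball_self hR)
      · exact ((hud.neg.cexp).mul hg)
      · intro y hy
        have h1 := (hu y hy).neg.cexp.mul (hg.differentiableAt (isOpen_ball.mem_nhds hy)).hasDerivAt
        have h2 := h1.hasFDerivAt.hasFDerivWithinAt (s := ball c R)
        refine (h2.fderivWithin (isOpen_ball.uniqueDiffWithinAt hy)).trans ?_
        ext
        simp only [Pi.div_apply]
        have := hg0 y hy
        field_simp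
        simp
    intro x hx
    have := hconst x hx
    rw [huc, neg_zero, Complex.exp_zero, one_mul] at this
    rw [← this, ← mul_assoc, ← Complex.exp_add]
    simp
  have hub : ∀ x ∈ ball c (R / 2), ‖deriv u x‖ ≤ L / R := by
    intro x hx
    by_contra! hcon
    have hsub : ball x (R / 2) ⊆ ball c R := by
      intro y hy
      rw [mem_ball] at *
      have := dist_triangle y x c
      linarith
    obtain ⟨w, hw⟩ := bloch (half_pos hR) (hud.mono hsub)
    have hbig : 2 * Real.pi * (N + 1) < ‖deriv u x‖ * (R / 2) / 192 := by
      rw [div_lt_iff₀ hR] at hcon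
      rw [hL] at hcon
      linarith
    have hpt : ∀ k : ℕ, k ≤ N → ∃ y ∈ ball c R, u y = w + k * (2 * Real.pi * Complex.I) := by
      intro k hk
      have : w + k * (2 * Real.pi * Complex.I) ∈ ball w (‖deriv u x‖ * (R / 2) / 192) := by
        rw [mem_ball, dist_eq_norm, add_sub_cancel_left]
        refine lt_of_le_of_lt ?_ hbig
        simp only [norm_mul, Complex.norm_natCast, Complex.norm_I, Complex.norm_real, mul_one,
          Complex.norm_ofNat, Real.norm_eq_abs, abs_of_pos Real.pi_pos]
        have : (k:ℝ) ≤ N := by exact_mod_cast hk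
        nlinarith [Real.pi_pos]
      obtain ⟨y, hy, hy2⟩ := hw this
      exact ⟨y, hsub hy, hy2⟩
    choose! y hy1 hy2 using hpt
    have hinj : Set.InjOn y (Finset.range (N + 1) : Set ℕ) := by
      intro i hi j hj hij
      simp only [Finset.coe_range, Set.mem_Iio] at hi hj
      have h1 := hy2 i (by omega)
      rw [hij, hy2 j (by omega)] at h1
      have h2 : (j : ℂ) = i := by
        have := add_left_cancel h1
        exact mul_right_cancel₀ Complex.two_pi_I_ne_zero this
      exact_mod_cast h2.symm
    have := hN (Complex.exp w * g c) ((Finset.range (N + 1)).image y) (by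
      intro z hz
      obtain ⟨k, hk, rfl⟩ := Finset.mem_image.1 hz
      have hk' : k ≤ N := by simp at hk; omega
      refine ⟨hy1 k hk', ?_⟩
      rw [hexp _ (hy1 k hk'), hy2 k hk', Complex.exp_add, Complex.exp_nat_mul_two_pi_mul_I, mul_one])
    rw [Finset.card_image_of_injOn hinj, Finset.card_range] at this
    omega
  intro x hx
  have hκ : 1 / (4 * L) * R ≤ R / 2 := by
    rw [div_mul_eq_mul_div, one_mul]
    exact div_le_div_of_nonneg_left hR.le (by norm_num) (by linarith)
  have hxR2 : x ∈ ball c (R / 2) := ball_subset_ball hκ hx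
  have hxR : x ∈ ball c R := ball_subset_ball (by linarith) hxR2
  have hux : ‖u x‖ ≤ 1 / 4 := by
    have := norm_sub_affine_le (a := 0) (b := L / R) (convex_ball c (R/2)) isOpen_ball
      (hud.mono (ball_subset_ball (by linarith))) (by simpa using hub)
      (mem_ball_self (half_pos hR)) hxR2
    rw [huc] at this
    simp only [sub_zero, zero_mul] at this
    rw [mem_ball, dist_eq_norm] at hx
    calc _ ≤ _ := this
      _ ≤ L / R * (1 / (4 * L) * R) := by gcongr
      _ = 1 / 4 := by field_simp
  have h1 := Complex.norm_exp_sub_one_le (x := u x) (by linarith)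
  rw [hexp x hxR]
  calc ‖Complex.exp (u x) * g c - g c‖ = ‖Complex.exp (u x) - 1‖ * ‖g c‖ := by
        rw [← norm_mul]; ring_nf
    _ ≤ (1 / 2) * ‖g c‖ := by gcongr; linarith
    _ = _ := by ring

open scoped Polynomial Polynomial.Bivariate
open Polynomial.Bivariate (swap)

/-- Both partial degrees of the bivariate polynomial `P` are at most `d`. -/
def BiDegLE (P : ℂ[X][Y]) (d : ℕ) : Prop :=
  ∀ i j, (P.coeff i).coeff j ≠ 0 → i ≤ d ∧ j ≤ d

lemma BiDegLE.natDegree_le {P : ℂ[X][Y]} {d : ℕ} (h : BiDegLE P d) : P.natDegree ≤ d := by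
  rw [Polynomial.natDegree_le_iff_coeff_eq_zero]
  intro i hi
  ext j
  by_contra hc
  exact absurd (h i j hc).1 (by omega)

lemma BiDegLE.natDegree_coeff_le {P : ℂ[X][Y]} {d : ℕ} (h : BiDegLE P d) (i : ℕ) :
    (P.coeff i).natDegree ≤ d := by
  rw [Polynomial.natDegree_le_iff_coeff_eq_zero]
  intro j hj
  by_contra hc
  exact absurd (h i j hc).2 (by omega)

lemma BiDegLE.add {P Q : ℂ[X][Y]} {d : ℕ} (hP : BiDegLE P d) (hQ : BiDegLE Q d) :
    BiDegLE (P + Q) d := by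
  intro i j hij
  by_cases h : (P.coeff i).coeff j = 0
  · by_cases h' : (Q.coeff i).coeff j = 0
    · simp [h, h'] at hij
    · exact hQ i j h'
  · exact hP i j h

lemma coeff_coeff_swap (P : ℂ[X][Y]) (i j : ℕ) :
    ((swap P).coeff i).coeff j = (P.coeff j).coeff i := by
  induction P using Polynomial.induction_on' with
  | add p q hp hq => simp [hp, hq]
  | monomial n a =>
    induction a using Polynomial.induction_on' with
    | add p q hp hq => simp only [map_add, Polynomial.coeff_add, hp, hq]
    | monomial m c =>
      rw [Polynomial.Bivariate.swap_monomial_monomial]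
      simp only [Polynomial.coeff_monomial]
      split_ifs <;> simp_all [Polynomial.coeff_monomial]

lemma BiDegLE.swap {P : ℂ[X][Y]} {d : ℕ} (h : BiDegLE P d) :
    BiDegLE (Polynomial.Bivariate.swap P) d := by
  intro i j hij
  rw [coeff_coeff_swap] at hij
  exact (h j i hij).symm

lemma evalEval_swap (P : ℂ[X][Y]) (x y : ℂ) :
    (swap P).evalEval x y = P.evalEval y x := by
  have := Polynomial.Bivariate.aevalAeval_swap (R := ℂ) x y P
  rwa [Polynomial.coe_aevalAeval_eq_evalEval, Polynomial.coe_aevalAeval_eq_evalEval] at this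

lemma BiDegLE.derivative {P : ℂ[X][Y]} {d : ℕ} (h : BiDegLE P d) :
    BiDegLE (Polynomial.derivative P) d := by
  intro i j hij
  rw [Polynomial.coeff_derivative] at hij
  have : (P.coeff (i + 1)).coeff j ≠ 0 := by
    intro h0
    apply hij
    have : (P.coeff (i + 1)) * ((i : ℂ[X]) + 1) = P.coeff (i+1) * Polynomial.C ((i : ℂ) + 1) := by
      simp
    rw [this, Polynomial.coeff_mul_C, h0, zero_mul]
  have := h _ _ this
  exact ⟨by omega, this.2⟩

/-- The partial derivative of a bivariate polynomial in its first variable. -/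
def dX (P : ℂ[X][Y]) : ℂ[X][Y] := swap (Polynomial.derivative (swap P))

lemma BiDegLE.dX {P : ℂ[X][Y]} {d : ℕ} (h : BiDegLE P d) : BiDegLE (dX P) d :=
  h.swap.derivative.swap

lemma dX_monomial (n : ℕ) (a : ℂ[X]) :
    dX (Polynomial.monomial n a) = Polynomial.monomial n (Polynomial.derivative a) := by
  induction a using Polynomial.induction_on' with
  | add p q hp hq =>
    unfold dX at *
    simp only [map_add, hp, hq]
  | monomial m c =>
    unfold dX
    rw [Polynomial.Bivariate.swap_monomial_monomial, Polynomial.derivative_monomial,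
      Polynomial.derivative_monomial]
    have : (Polynomial.monomial n c : ℂ[X]) * (m : ℂ[X]) = Polynomial.monomial n (c * (m : ℂ)) := by
      rw [← Polynomial.C_eq_natCast, Polynomial.monomial_mul_C]
    rw [this, Polynomial.Bivariate.swap_monomial_monomial]

lemma hasDerivAt_evalEval (P : ℂ[X][Y]) {f : ℂ → ℂ} {f' x : ℂ} (hf : HasDerivAt f f' x) :
    HasDerivAt (fun t => P.evalEval t (f t))
      ((dX P).evalEval x (f x) + f' * (Polynomial.derivative P).evalEval x (f x)) x := by
  induction P using Polynomial.induction_on' with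
  | add p q hp hq =>
    have h := hp.add hq
    unfold dX at *
    simp only [map_add, Polynomial.evalEval_add] at *
    refine h.congr_deriv ?_
    ring
  | monomial n a =>
    rw [dX_monomial, Polynomial.derivative_monomial]
    have h := (a.hasDerivAt x).mul (hf.pow n)
    have he : ∀ (k : ℕ) (b : ℂ[X]) (s t : ℂ),
        (Polynomial.monomial k b).evalEval s t = b.eval s * t ^ k := by
      intro k b s t
      simp [Polynomial.evalEval, Polynomial.eval_monomial]
    simp only [he, Polynomial.eval_mul, Polynomial.eval_natCast]
    refine h.congr_deriv ?_
    simp only [Pi.pow_apply]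
    ring

/-- Two bivariate polynomials, the first irreducible and not dividing the second, have common
zeros over only boundedly many first coordinates. -/
lemma exists_eliminant {d : ℕ} {P H : ℂ[X][Y]} (hP : Irreducible P) (hdeg : 1 ≤ P.natDegree)
    (hPH : ¬ P ∣ H) (hPd : BiDegLE P d) (hHd : BiDegLE H d) :
    ∃ r : ℂ[X], r ≠ 0 ∧ r.natDegree ≤ 2 * d * d ∧
      ∀ x y, P.evalEval x y = 0 → H.evalEval x y = 0 → r.eval x = 0 := by
  refine ⟨P.resultant H, ?_, ?_, ?_⟩
  · intro h0
    have hprim : P.IsPrimitive := hP.isPrimitive (by omega)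
    set φ := algebraMap ℂ[X] (RatFunc ℂ)
    have hinj : Function.Injective φ := IsFractionRing.injective ℂ[X] (RatFunc ℂ)
    have h1 : (P.map φ).resultant (H.map φ) = 0 := by
      rw [Polynomial.natDegree_map_eq_of_injective hinj,
        Polynomial.natDegree_map_eq_of_injective hinj, Polynomial.resultant_map_map, h0, map_zero]
    rw [Polynomial.resultant_eq_zero_iff] at h1
    have hirr : Irreducible (P.map φ) :=
      (hprim.irreducible_iff_irreducible_map_fraction_map (K := RatFunc ℂ)).1 hP
    have := (hirr.coprime_iff_not_dvd (n := H.map φ)).not.1 h1.2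
    exact hPH (hprim.dvd_of_fraction_map_dvd_fraction_map (K := RatFunc ℂ) (not_not.1 this))
  · rw [Polynomial.resultant, Matrix.det_apply]
    refine Polynomial.natDegree_sum_le_of_forall_le _ _ fun σ _ => ?_
    refine (Polynomial.natDegree_smul_le _ _).trans ((Polynomial.natDegree_prod_le _ _).trans ?_)
    refine (Finset.sum_le_card_nsmul _ _ d fun i _ => ?_).trans ?_
    · rw [Polynomial.sylvester, Matrix.of_apply]
      induction i using Fin.addCases with
      | left i =>
        rw [Fin.addCases_left]
        split_ifs
        · exact hHd.natDegree_coeff_le _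
        · simp
      | right i =>
        rw [Fin.addCases_right]
        split_ifs
        · exact hPd.natDegree_coeff_le _
        · simp
    · simp only [Finset.card_univ, Fintype.card_fin, smul_eq_mul]
      have := hPd.natDegree_le
      have := hHd.natDegree_le
      gcongr
      omega
  · intro x y h1 h2
    obtain ⟨p, q, -, -, h⟩ := Polynomial.exists_mul_add_mul_eq_C_resultant P H le_rfl le_rfl
      (Or.inl (by omega))
    have := congrArg (Polynomial.evalEval x y) h
    rw [Polynomial.evalEval_add, Polynomial.evalEval_mul, Polynomial.evalEval_mul, h1, h2,
      Polynomial.evalEval_C] at this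
    simpa using this.symm

lemma not_dvd_derivative {P : ℂ[X][Y]} (hdeg : 1 ≤ P.natDegree) :
    ¬ P ∣ Polynomial.derivative P := by
  intro h
  have h0 : Polynomial.derivative P ≠ 0 := by
    intro h0
    have := Polynomial.derivative_eq_zero.1 h0
    omega
  have := Polynomial.natDegree_le_of_dvd h h0
  have := Polynomial.natDegree_derivative_lt (p := P) (by omega)
  omega

lemma not_dvd_dX {P : ℂ[X][Y]} (hdeg : 1 ≤ (swap P).natDegree) : ¬ P ∣ dX P := by
  intro h
  apply not_dvd_derivative hdeg
  have := map_dvd (swap (R := ℂ)) h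
  rwa [dX, Polynomial.Bivariate.swap_swap_apply] at this

/-- The leading coefficient is nonzero over `x` and both partial derivatives are nonzero at each
zero of `P` over `x`. -/
def RegularOver (P : ℂ[X][Y]) (x : ℂ) : Prop :=
  P.leadingCoeff.eval x ≠ 0 ∧ ∀ y, P.evalEval x y = 0 →
    (Polynomial.derivative P).evalEval x y ≠ 0 ∧ (dX P).evalEval x y ≠ 0

lemma exists_special {d : ℕ} {P : ℂ[X][Y]} (hP : Irreducible P) (hdeg : 1 ≤ P.natDegree)
    (hdeg' : 1 ≤ (swap P).natDegree) (hPd : BiDegLE P d) :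
    ∃ Z : Finset ℂ, Z.card ≤ d + 4 * d * d ∧ ∀ x ∉ Z, RegularOver P x := by
  obtain ⟨r, hr0, hr1, hr2⟩ := exists_eliminant hP hdeg (not_dvd_derivative hdeg) hPd hPd.derivative
  obtain ⟨q, hq0, hq1, hq2⟩ := exists_eliminant hP hdeg (not_dvd_dX hdeg') hPd hPd.dX
  have hl0 : P.leadingCoeff ≠ 0 := by simpa using hP.ne_zero
  refine ⟨P.leadingCoeff.roots.toFinset ∪ (r.roots.toFinset ∪ q.roots.toFinset), ?_, ?_⟩
  · refine (Finset.card_union_le _ _).trans ?_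
    have h1 := (Multiset.toFinset_card_le P.leadingCoeff.roots).trans
      ((Polynomial.card_roots' _).trans (hPd.natDegree_coeff_le _))
    have h2 := (Finset.card_union_le r.roots.toFinset q.roots.toFinset)
    have h3 := (Multiset.toFinset_card_le r.roots).trans ((Polynomial.card_roots' _).trans hr1)
    have h4 := (Multiset.toFinset_card_le q.roots).trans ((Polynomial.card_roots' _).trans hq1)
    linarith
  · intro x hx
    simp only [Finset.mem_union, Multiset.mem_toFinset, Polynomial.mem_roots hl0,
      Polynomial.mem_roots hr0, Polynomial.mem_roots hq0, Polynomial.IsRoot.def, not_or] at hx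
    exact ⟨hx.1, fun y hy => ⟨fun h => hx.2.1 (hr2 x y hy h), fun h => hx.2.2 (hq2 x y hy h)⟩⟩

lemma evalEval_monomial (k : ℕ) (b : ℂ[X]) (s t : ℂ) :
    (Polynomial.monomial k b).evalEval s t = b.eval s * t ^ k := by
  simp [Polynomial.evalEval, Polynomial.eval_monomial]

lemma hasStrictFDerivAt_evalEval (P : ℂ[X][Y]) (p : ℂ × ℂ) :
    HasStrictFDerivAt (fun q : ℂ × ℂ => P.evalEval q.1 q.2)
      ((dX P).evalEval p.1 p.2 • ContinuousLinearMap.fst ℂ ℂ ℂ +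
        (Polynomial.derivative P).evalEval p.1 p.2 • ContinuousLinearMap.snd ℂ ℂ ℂ) p := by
  induction P using Polynomial.induction_on' with
  | add p q hp hq =>
    have h := hp.add hq
    unfold dX at *
    simp only [map_add, Polynomial.evalEval_add] at *
    refine h.congr_fderiv ?_
    ext <;> simp
  | monomial n a =>
    rw [dX_monomial, Polynomial.derivative_monomial]
    have h := ((a.hasStrictDerivAt p.1).comp_hasStrictFDerivAt p
      (hasStrictFDerivAt_fst (𝕜 := ℂ) (E := ℂ) (F := ℂ) (p := p))).mul
      ((hasStrictFDerivAt_snd (𝕜 := ℂ) (E := ℂ) (F := ℂ) (p := p)).pow n)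
    simp only [evalEval_monomial, Polynomial.eval_mul, Polynomial.eval_natCast]
    refine h.congr_fderiv ?_
    ext <;> simp <;> ring

lemma continuous_evalEval (P : ℂ[X][Y]) : Continuous (fun q : ℂ × ℂ => P.evalEval q.1 q.2) :=
  continuous_iff_continuousAt.2 fun p => (hasStrictFDerivAt_evalEval P p).continuousAt

/-- The map `(x, y) ↦ (x, P(x, y))`. -/
def fiberMap (P : ℂ[X][Y]) (p : ℂ × ℂ) : ℂ × ℂ := (p.1, P.evalEval p.1 p.2)

lemma exists_openPartialHomeomorph_fiberMap (P : ℂ[X][Y]) (p : ℂ × ℂ)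
    (hp : (Polynomial.derivative P).evalEval p.1 p.2 ≠ 0) :
    ∃ e : OpenPartialHomeomorph (ℂ × ℂ) (ℂ × ℂ), p ∈ e.source ∧ fiberMap P = e ∧
      DifferentiableAt ℂ e.symm (fiberMap P p) := by
  set a := (dX P).evalEval p.1 p.2
  set b := (Polynomial.derivative P).evalEval p.1 p.2
  let L : (ℂ × ℂ) ≃L[ℂ] (ℂ × ℂ) := ContinuousLinearEquiv.equivOfInverse
    ((ContinuousLinearMap.fst ℂ ℂ ℂ).prod
      (a • ContinuousLinearMap.fst ℂ ℂ ℂ + b • ContinuousLinearMap.snd ℂ ℂ ℂ))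
    ((ContinuousLinearMap.fst ℂ ℂ ℂ).prod
      (b⁻¹ • (ContinuousLinearMap.snd ℂ ℂ ℂ - a • ContinuousLinearMap.fst ℂ ℂ ℂ)))
    (fun q => by ext <;> simp; field_simp) (fun q => by ext <;> simp; field_simp; ring)
  have hd : HasStrictFDerivAt (fiberMap P) (L : (ℂ × ℂ) →L[ℂ] (ℂ × ℂ)) p :=
    (hasStrictFDerivAt_fst (𝕜 := ℂ) (E := ℂ) (F := ℂ) (p := p)).prodMk
      (hasStrictFDerivAt_evalEval P p)
  refine ⟨hd.toOpenPartialHomeomorph _, hd.mem_toOpenPartialHomeomorph_source, rfl, ?_⟩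
  exact hd.to_localInverse.hasFDerivAt.differentiableAt

lemma evalEval_eq_sum_range (P : ℂ[X][Y]) (x y : ℂ) :
    P.evalEval x y = ∑ i ∈ Finset.range (P.natDegree + 1), (P.coeff i).eval x * y ^ i := by
  rw [← Polynomial.eval₂_evalRingHom, Polynomial.eval₂_eq_sum_range]
  rfl

lemma norm_le_of_monic {P : ℂ[X][Y]} (hP : P.Monic) (x y : ℂ) (hd : 1 ≤ P.natDegree) :
    ‖y‖ ≤ 1 + (∑ i ∈ Finset.range P.natDegree, ‖(P.coeff i).eval x‖ + ‖P.evalEval x y‖) := by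
  have hnn : 0 ≤ ∑ i ∈ Finset.range P.natDegree, ‖(P.coeff i).eval x‖ :=
    Finset.sum_nonneg fun _ _ => norm_nonneg _
  rcases le_or_gt ‖y‖ 1 with h | h
  · have := norm_nonneg (P.evalEval x y)
    linarith
  obtain ⟨n, hn⟩ : ∃ n, P.natDegree = n + 1 := ⟨P.natDegree - 1, by omega⟩
  have h1 := evalEval_eq_sum_range P x y
  rw [Finset.sum_range_succ, Polynomial.coeff_natDegree, hP.leadingCoeff, Polynomial.eval_one,
    one_mul] at h1
  have h2 : y ^ P.natDegree = P.evalEval x y -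
      ∑ i ∈ Finset.range P.natDegree, (P.coeff i).eval x * y ^ i := by rw [h1]; ring
  have h3 : ‖y‖ ^ P.natDegree ≤ (∑ i ∈ Finset.range P.natDegree, ‖(P.coeff i).eval x‖ +
      ‖P.evalEval x y‖) * ‖y‖ ^ n := by
    rw [← norm_pow, h2]
    refine (norm_sub_le _ _).trans ?_
    rw [add_mul, add_comm]
    refine add_le_add ?_ ?_
    · rw [Finset.sum_mul]
      refine (norm_sum_le _ _).trans (Finset.sum_le_sum fun i hi => ?_)
      rw [norm_mul, norm_pow]
      have : i ≤ n := by have := Finset.mem_range.1 hi; omega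
      gcongr
      exact h.le
    · exact le_mul_of_one_le_right (norm_nonneg _) (one_le_pow₀ h.le)
  rw [hn, pow_succ, mul_comm] at h3
  have := le_of_mul_le_mul_right h3 (by positivity)
  rw [hn]
  linarith

lemma isClosedMap_fiberMap {P : ℂ[X][Y]} (hP : P.Monic) (hd : 1 ≤ P.natDegree) :
    IsClosedMap (fiberMap P) := by
  have hcont : Continuous (fiberMap P) := continuous_fst.prodMk (continuous_evalEval P)
  refine (isProperMap_iff_isCompact_preimage.2 ⟨hcont, fun K hK => ?_⟩).isClosedMap
  refine Metric.isCompact_of_isClosed_isBounded (hK.isClosed.preimage hcont) ?_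
  obtain ⟨B, hB⟩ := hK.exists_bound_of_continuousOn (f := fun q : ℂ × ℂ =>
    1 + (∑ i ∈ Finset.range P.natDegree, ‖(P.coeff i).eval q.1‖ + ‖q.2‖)) (by fun_prop)
  obtain ⟨B', hB'⟩ := hK.exists_bound_of_continuousOn (f := fun q : ℂ × ℂ => q.1) (by fun_prop)
  refine (isBounded_iff_forall_norm_le).2 ⟨max B' B, fun q hq => ?_⟩
  rw [Prod.norm_def]
  refine max_le_max (hB' (fiberMap P q) hq) ?_
  exact (norm_le_of_monic hP q.1 q.2 hd).trans ((le_abs_self _).trans (hB (fiberMap P q) hq))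

lemma finite_zeros_of_leadingCoeff {P : ℂ[X][Y]} {x : ℂ} (hx : P.leadingCoeff.eval x ≠ 0) :
    {y | P.evalEval x y = 0} ⊆ ((P.map (Polynomial.evalRingHom x)).roots.toFinset : Set ℂ) := by
  intro y hy
  have h0 : P.map (Polynomial.evalRingHom x) ≠ 0 := by
    intro h
    apply hx
    have := congrArg (fun q => Polynomial.coeff q P.natDegree) h
    simpa [Polynomial.coeff_map] using this
  simp only [Finset.mem_coe, Multiset.mem_toFinset, Polynomial.mem_roots h0, Polynomial.IsRoot.def,
    Polynomial.map_evalRingHom_eval]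
  exact hy

/-- Existence of holomorphic branches for monic polynomials. -/
lemma exists_branch_monic {P : ℂ[X][Y]} (hP : P.Monic) (hd : 1 ≤ P.natDegree) {c y₀ : ℂ} {R : ℝ}
    (hR : 0 < R) (hreg : ∀ x ∈ ball c R, ∀ y, P.evalEval x y = 0 →
      (Polynomial.derivative P).evalEval x y ≠ 0) (h0 : P.evalEval c y₀ = 0) :
    ∃ f : ℂ → ℂ, DifferentiableOn ℂ f (ball c R) ∧ f c = y₀ ∧
      ∀ x ∈ ball c R, P.evalEval x (f x) = 0 := by
  set s : Set (ℂ × ℂ) := (fun x : ℂ => (x, (0 : ℂ))) '' ball c R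
  have hpre : ∀ q ∈ fiberMap P ⁻¹' s, q.1 ∈ ball c R ∧ P.evalEval q.1 q.2 = 0 := by
    rintro q ⟨x, hx, hxq⟩
    simp only [fiberMap, Prod.mk.injEq] at hxq
    exact ⟨hxq.1 ▸ hx, hxq.2.symm⟩
  have hcov : IsCoveringMapOn (fiberMap P) s := by
    refine (isClosedMap_fiberMap hP hd).isCoveringMapOn_of_isLocalHomeomorphOn ?_ ?_
    · rintro _ ⟨x, hx, rfl⟩
      refine Set.Finite.subset (Set.Finite.prod (Set.finite_singleton x)
        (Finset.finite_toSet ((P.map (Polynomial.evalRingHom x)).roots.toFinset))) ?_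
      rintro ⟨a, b⟩ hq
      simp only [fiberMap, Set.mem_preimage, Set.mem_singleton_iff, Prod.mk.injEq] at hq
      obtain ⟨rfl, hq⟩ := hq
      exact ⟨rfl, finite_zeros_of_leadingCoeff (by simp [hP.leadingCoeff]) hq⟩
    · intro q hq
      obtain ⟨h1, h2⟩ := hpre q hq
      obtain ⟨e, he, he2, -⟩ := exists_openPartialHomeomorph_fiberMap P q (hreg _ h1 _ h2)
      exact ⟨e, he, he2⟩
  have : ContractibleSpace (ball c R) := contractibleSpace_ball hR
  have : LocallyPathConnectedSpace (ball c R) :=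
    isOpen_ball.isOpenEmbedding_subtypeVal.locallyPathConnectedSpace
  obtain ⟨F, ⟨hF1, hF2⟩, -⟩ := hcov.existsUnique_continuousMap_lifts
    (A := ball c R) ⟨fun x => ((x : ℂ), (0 : ℂ)), by fun_prop⟩
    (a₀ := ⟨c, mem_ball_self hR⟩) (e₀ := (c, y₀)) (by simp [fiberMap, h0])
    (fun a => ⟨a, a.2, rfl⟩)
  have hF : ∀ x : ball c R, fiberMap P (F x) = ((x : ℂ), 0) := fun x => congrFun hF2 x
  have hF1' : ∀ x : ball c R, (F x).1 = x := fun x => congrArg Prod.fst (hF x)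
  have hF2' : ∀ x : ball c R, P.evalEval (x : ℂ) (F x).2 = 0 := fun x => by
    have := congrArg Prod.snd (hF x)
    simpa only [fiberMap, hF1'] using this
  refine ⟨fun x => if hx : x ∈ ball c R then (F ⟨x, hx⟩).2 else 0, ?_, ?_, ?_⟩
  · intro x hx
    refine DifferentiableAt.differentiableWithinAt ?_
    obtain ⟨e, he, he2, he3⟩ := exists_openPartialHomeomorph_fiberMap P (F ⟨x, hx⟩)
      (by rw [hF1']; exact hreg _ hx _ (hF2' ⟨x, hx⟩))
    rw [hF] at he3
    have hdiff : DifferentiableAt ℂ (fun t : ℂ => (e.symm (t, (0:ℂ))).2) x := by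
      have h1 : DifferentiableAt ℂ (fun t : ℂ => (t, (0 : ℂ))) x := by fun_prop
      have h2 : DifferentiableAt ℂ (fun t : ℂ => e.symm (t, (0:ℂ))) x := he3.comp x h1
      exact h2.snd
    refine hdiff.congr_of_eventuallyEq ?_
    have hnear : ∀ᶠ t : ball c R in nhds ⟨x, hx⟩, F t ∈ e.source :=
      F.continuous.continuousAt (e.open_source.mem_nhds he)
    rw [nhds_subtype_eq_comap, Filter.eventually_comap] at hnear
    filter_upwards [hnear, isOpen_ball.mem_nhds hx] with t ht htb
    have := ht ⟨t, htb⟩ rfl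
    rw [dif_pos htb]
    have h4 : e (F ⟨t, htb⟩) = (t, 0) := by rw [← he2]; exact hF _
    rw [← h4, e.left_inv this]
  · simp only [mem_ball_self hR, dif_pos]
    rw [hF1]
  · intro x hx
    simp only [hx, dif_pos]
    exact hF2' ⟨x, hx⟩

/-- Existence of holomorphic branches over a disc of regular points. -/
lemma exists_branch {P : ℂ[X][Y]} (hd : 1 ≤ P.natDegree) {c y₀ : ℂ} {R : ℝ}
    (hR : 0 < R) (hreg : ∀ x ∈ ball c R, RegularOver P x) (h0 : P.evalEval c y₀ = 0) :
    ∃ f : ℂ → ℂ, DifferentiableOn ℂ f (ball c R) ∧ f c = y₀ ∧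
      ∀ x ∈ ball c R, P.evalEval x (f x) = 0 := by
  set Q := P.integralNormalization
  set l := P.leadingCoeff
  have hP0 : P ≠ 0 := by rintro rfl; simp at hd
  have hQ : Q.Monic := Polynomial.monic_integralNormalization hP0
  have hdQ : Q.natDegree = P.natDegree := by
    simp only [Q, Polynomial.natDegree, Polynomial.degree_integralNormalization]
  have hev : ∀ x y, Q.evalEval x (l.eval x * y) =
      l.eval x ^ (P.natDegree - 1) * P.evalEval x y := by
    intro x y
    rw [← Polynomial.eval₂_evalRingHom]
    exact Polynomial.integralNormalization_eval₂_leadingCoeff_mul hd (Polynomial.evalRingHom x) y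
  have hregQ : ∀ x ∈ ball c R, ∀ y, Q.evalEval x y = 0 →
      (Polynomial.derivative Q).evalEval x y ≠ 0 := by
    intro x hx y hy hcon
    obtain ⟨hl, hr⟩ := hreg x hx
    set t := y / l.eval x
    have hyt : y = l.eval x * t := by simp only [t, l]; field_simp
    have hPt : P.evalEval x t = 0 := by
      have := hev x t
      rw [← hyt, hy] at this
      exact (mul_eq_zero.1 this.symm).resolve_left (pow_ne_zero _ hl)
    have dP : ∀ (T : ℂ[X][Y]) (z : ℂ), HasDerivAt (fun s => T.evalEval x s)
        ((Polynomial.derivative T).evalEval x z) z := by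
      intro T z
      have := (T.map (Polynomial.evalRingHom x)).hasDerivAt z
      simp only [Polynomial.derivative_map, Polynomial.map_evalRingHom_eval] at this
      exact this
    have h1 := (dP P t).const_mul (l.eval x ^ (P.natDegree - 1))
    have hlin : HasDerivAt (fun s => l.eval x * s) (l.eval x) t := by
      simpa using (hasDerivAt_id t).const_mul (l.eval x)
    have h2 := HasDerivAt.comp t (h₂ := fun s => Q.evalEval x s) (dP Q _) hlin
    have h3 : ((fun s => Q.evalEval x s) ∘ fun s => l.eval x * s) =
        fun s => l.eval x ^ (P.natDegree - 1) * P.evalEval x s := funext fun s => hev x s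
    rw [h3, ← hyt, hcon, zero_mul] at h2
    have := h1.unique h2
    exact (hr t hPt).1 ((mul_eq_zero.1 this).resolve_left (pow_ne_zero _ hl))
  obtain ⟨g, hg1, hg2, hg3⟩ := exists_branch_monic (y₀ := l.eval c * y₀) hQ (hdQ ▸ hd) hR hregQ
    (by rw [hev, h0, mul_zero])
  refine ⟨fun x => g x / l.eval x, ?_, ?_, ?_⟩
  · exact hg1.div (l.differentiable.differentiableOn) fun x hx => (hreg x hx).1
  · have := (hreg c (mem_ball_self hR)).1
    change g c / _ = _
    rw [hg2]; exact mul_div_cancel_left₀ _ this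
  · intro x hx
    have hl := (hreg x hx).1
    have := hev x (g x / l.eval x)
    rw [mul_div_cancel₀ _ hl, hg3 x hx] at this
    exact (mul_eq_zero.1 this.symm).resolve_left (pow_ne_zero _ hl)

lemma eqOn_of_branches {P : ℂ[X][Y]} {U : Set ℂ} (hU : IsOpen U) (hc : IsPreconnected U)
    {f g : ℂ → ℂ} (hf : DifferentiableOn ℂ f U) (hg : DifferentiableOn ℂ g U)
    (hfP : ∀ x ∈ U, P.evalEval x (f x) = 0) (hgP : ∀ x ∈ U, P.evalEval x (g x) = 0)
    {x₀ : ℂ} (hx₀ : x₀ ∈ U) (hfg : f x₀ = g x₀)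
    (hreg : (Polynomial.derivative P).evalEval x₀ (f x₀) ≠ 0) : Set.EqOn f g U := by
  refine (hf.analyticOnNhd hU).eqOn_of_preconnected_of_eventuallyEq (hg.analyticOnNhd hU) hc hx₀ ?_
  obtain ⟨e, he, he2, -⟩ := exists_openPartialHomeomorph_fiberMap P (x₀, f x₀) hreg
  have hUx := hU.mem_nhds hx₀
  have h1 : ∀ᶠ x in nhds x₀, (x, f x) ∈ e.source :=
    (continuousAt_id.prodMk (hf.differentiableAt hUx).continuousAt)
      (e.open_source.mem_nhds he)
  have h2 : ∀ᶠ x in nhds x₀, (x, g x) ∈ e.source := by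
    refine (continuousAt_id.prodMk (hg.differentiableAt hUx).continuousAt)
      (e.open_source.mem_nhds ?_)
    rw [hfg] at he
    exact he
  filter_upwards [h1, h2, hUx] with x hx1 hx2 hxU
  have : e (x, f x) = e (x, g x) := by
    rw [← he2]; simp [fiberMap, hfP x hxU, hgP x hxU]
  exact congrArg Prod.snd (e.injOn hx1 hx2 this)

/-- Through `p` passes a holomorphic branch of the curve `P = 0`, defined over the disc of
radius `r` and staying within `b` of the height of `p`. -/
def HasBranch (P : ℂ[X][Y]) (p : ℂ × ℂ) (r b : ℝ) : Prop :=
  ∃ f : ℂ → ℂ, DifferentiableOn ℂ f (ball p.1 r) ∧ f p.1 = p.2 ∧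
    (∀ x ∈ ball p.1 r, P.evalEval x (f x) = 0 ∧
      (Polynomial.derivative P).evalEval x (f x) ≠ 0) ∧
    ∀ x ∈ ball p.1 r, ‖f x - p.2‖ ≤ b

/-- Among more than `P.natDegree` points with mutually close first coordinates and with branches,
two have close second coordinates. -/
lemma exists_close_of_branches {P : ℂ[X][Y]} {S : Finset (ℂ × ℂ)} {r : ℝ} {b : ℂ × ℂ → ℝ}
    (hr : 0 < r) (hS : ∀ p ∈ S, HasBranch P p r (b p)) (hcard : P.natDegree < S.card)
    (hclose : ∀ p ∈ S, ∀ q ∈ S, ‖p.1 - q.1‖ < r) :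
    ∃ p ∈ S, ∃ q ∈ S, p ≠ q ∧ ‖p.2 - q.2‖ ≤ min (b p) (b q) := by
  choose! f hf1 hf2 hf3 hf4 using hS
  obtain ⟨o, ho⟩ : S.Nonempty := Finset.card_pos.1 (by omega)
  have hmem : ∀ p ∈ S, ∀ q ∈ S, q.1 ∈ ball p.1 r := fun p hp q hq => by
    rw [mem_ball, dist_eq_norm]; exact hclose q hq p hp
  have hP0 : P.map (Polynomial.evalRingHom o.1) ≠ 0 := by
    intro h
    apply (hf3 o ho o.1 (mem_ball_self hr)).2
    rw [← Polynomial.map_evalRingHom_eval, ← Polynomial.derivative_map, h]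
    simp
  obtain ⟨p, hp, q, hq, hpq, heq⟩ := Finset.exists_ne_map_eq_of_card_lt_of_maps_to
    (s := S) (t := (P.map (Polynomial.evalRingHom o.1)).roots.toFinset) (f := fun p => f p o.1)
    (by
      refine lt_of_le_of_lt (Multiset.toFinset_card_le _) (lt_of_le_of_lt
        (Polynomial.card_roots' _) (lt_of_le_of_lt Polynomial.natDegree_map_le hcard)))
    (by
      intro p hp
      simp only [Finset.mem_coe, Multiset.mem_toFinset, Polynomial.mem_roots hP0,
        Polynomial.IsRoot.def, Polynomial.map_evalRingHom_eval]
      exact (hf3 p hp o.1 (hmem p hp o ho)).1)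
  refine ⟨p, hp, q, hq, hpq, ?_⟩
  have hE : Set.EqOn (f p) (f q) (ball p.1 r ∩ ball q.1 r) :=
    eqOn_of_branches (P := P) (isOpen_ball.inter isOpen_ball)
      ((convex_ball _ _).inter (convex_ball _ _)).isPreconnected
      ((hf1 p hp).mono Set.inter_subset_left) ((hf1 q hq).mono Set.inter_subset_right)
      (fun x hx => (hf3 p hp x hx.1).1) (fun x hx => (hf3 q hq x hx.2).1)
      ⟨hmem p hp o ho, hmem q hq o ho⟩ heq (hf3 p hp _ (hmem p hp o ho)).2
  refine le_min ?_ ?_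
  · have := hE ⟨hmem p hp q hq, hmem q hq q hq⟩
    rw [hf2 q hq] at this
    rw [norm_sub_rev, ← this]
    exact hf4 p hp _ (hmem p hp q hq)
  · have := hE ⟨hmem p hp p hp, hmem q hq p hp⟩
    rw [hf2 p hp] at this
    rw [this]
    exact hf4 q hq _ (hmem q hq p hp)

/-- A branch over a disc of regular points is, on a smaller disc, nearly affine. -/
lemma exists_nearly_affine (d : ℕ) : ∃ κ : ℝ, 0 < κ ∧ κ ≤ 1 ∧ ∀ (P : ℂ[X][Y]), Irreducible P →
    1 ≤ P.natDegree → BiDegLE P d → ∀ (c : ℂ) (R : ℝ), 0 < R →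
    (∀ x ∈ ball c R, RegularOver P x) → ∀ f : ℂ → ℂ, DifferentiableOn ℂ f (ball c R) →
    (∀ x ∈ ball c R, P.evalEval x (f x) = 0) →
    (∀ x ∈ ball c R, deriv f x ≠ 0) ∧
    ∀ x ∈ ball c (κ * R), ‖deriv f x - deriv f c‖ ≤ ‖deriv f c‖ / 2 := by
  obtain ⟨κ, hκ0, hκ1, hκ⟩ := exists_nearly_constant (2 * d * d)
  refine ⟨κ, hκ0, hκ1, fun P hP hdeg hPd c R hR hreg f hf hfP => ?_⟩
  have hode : ∀ x ∈ ball c R, (dX P).evalEval x (f x) +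
      deriv f x * (Polynomial.derivative P).evalEval x (f x) = 0 := by
    intro x hx
    have h1 := hasDerivAt_evalEval P
      (hf.differentiableAt (isOpen_ball.mem_nhds hx)).hasDerivAt
    have h2 : HasDerivAt (fun t => P.evalEval t (f t)) 0 x := by
      refine (hasDerivAt_const x (0:ℂ)).congr_of_eventuallyEq ?_
      filter_upwards [isOpen_ball.mem_nhds hx] with t ht using hfP t ht
    exact h1.unique h2
  have hne : ∀ x ∈ ball c R, deriv f x ≠ 0 := by
    intro x hx h0
    have := hode x hx
    rw [h0, zero_mul, add_zero] at this
    exact ((hreg x hx).2 _ (hfP x hx)).2 this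
  refine ⟨hne, ?_⟩
  set H : ℂ → ℂ[X][Y] := fun v =>
    dX P + Polynomial.C (Polynomial.C v) * Polynomial.derivative P
  have hH : ∀ v x y, (H v).evalEval x y =
      (dX P).evalEval x y + v * (Polynomial.derivative P).evalEval x y := by
    intro v x y
    simp only [H, Polynomial.evalEval_add, Polynomial.evalEval_mul, Polynomial.evalEval_C,
      Polynomial.eval_C]
  have hHd : ∀ v, BiDegLE (H v) d := by
    intro v
    refine hPd.dX.add fun i j hij => hPd.derivative i j fun h0 => hij ?_
    rw [Polynomial.coeff_C_mul, Polynomial.coeff_C_mul, h0, mul_zero]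
  by_cases hv : ∃ v, P ∣ H v
  · obtain ⟨v, Q, hQ⟩ := hv
    have hconst : ∀ x ∈ ball c R, deriv f x = v := by
      intro x hx
      have h1 := hH v x (f x)
      rw [hQ, Polynomial.evalEval_mul, hfP x hx, zero_mul] at h1
      have h2 := hode x hx
      have h3 := ((hreg x hx).2 _ (hfP x hx)).1
      apply mul_right_cancel₀ h3
      linear_combination h2 + h1
    intro x hx
    rw [hconst x (ball_subset_ball (by nlinarith) hx), hconst c (mem_ball_self hR)]
    simp only [sub_self, norm_zero]
    positivity
  · refine hκ (deriv f) c R hR (hf.deriv isOpen_ball) hne fun v S hS => ?_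
    obtain ⟨r, hr0, hr1, hr2⟩ := exists_eliminant hP hdeg (fun h => hv ⟨v, h⟩) hPd (hHd v)
    refine le_trans (Finset.card_le_card (t := r.roots.toFinset) fun x hx => ?_)
      ((Multiset.toFinset_card_le _).trans ((Polynomial.card_roots' _).trans hr1))
    obtain ⟨hx1, hx2⟩ := hS x hx
    rw [Multiset.mem_toFinset, Polynomial.mem_roots hr0]
    exact hr2 x (f x) (hfP x hx1) (by rw [hH, ← hx2]; exact hode x hx1)

lemma evalEval_derivative_swap (P : ℂ[X][Y]) (x y : ℂ) :
    (Polynomial.derivative (swap P)).evalEval x y = (dX P).evalEval y x := by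
  rw [dX, evalEval_swap]

/-- Over a disc of regular points the curve is, near a given point, either a graph of small
slope over the first coordinate or such a graph over the second one. -/
lemma hasBranch_or_hasBranch_swap (d : ℕ) : ∃ c : ℝ, 0 < c ∧ c ≤ 1 ∧ ∀ (P : ℂ[X][Y]),
    Irreducible P → 1 ≤ P.natDegree → BiDegLE P d → ∀ (p : ℂ × ℂ) (s₁ s₂ : ℝ), 0 < s₁ → 0 < s₂ →
    (∀ x ∈ ball p.1 s₁, RegularOver P x) → P.evalEval p.1 p.2 = 0 →
    HasBranch P p (c * s₁) (2 * s₂) ∨ HasBranch (swap P) p.swap (c * s₂) (2 * s₁) := by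
  obtain ⟨κ, hκ0, hκ1, hκ⟩ := exists_nearly_affine d
  refine ⟨κ / 8, by positivity, by linarith, fun P hP hdeg hPd p s₁ s₂ hs₁ hs₂ hreg hp => ?_⟩
  obtain ⟨f, hf, hfp, hfP⟩ := exists_branch hdeg hs₁ hreg hp
  obtain ⟨hne, haff⟩ := hκ P hP hdeg hPd p.1 s₁ hs₁ hreg f hf hfP
  set a := deriv f p.1
  have ha : 0 < ‖a‖ := norm_pos_iff.2 (hne _ (mem_ball_self hs₁))
  have hκs : 0 < κ * s₁ := by positivity
  have hsub : ball p.1 (κ * s₁) ⊆ ball p.1 s₁ := ball_subset_ball (by nlinarith)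
  have hest := fun x hx y hy => norm_sub_affine_le (x := x) (y := y) (convex_ball p.1 (κ * s₁))
    isOpen_ball (hf.mono hsub) haff hx hy
  have hup : ∀ x ∈ ball p.1 (κ * s₁), ∀ y ∈ ball p.1 (κ * s₁),
      ‖f y - f x‖ ≤ 3 / 2 * (‖a‖ * ‖y - x‖) := by
    intro x hx y hy
    have h1 := hest x hx y hy
    have h2 := norm_sub_norm_le (f y - f x) (a * (y - x))
    rw [norm_mul] at h2
    linarith
  have hlow : ∀ x ∈ ball p.1 (κ * s₁), ∀ y ∈ ball p.1 (κ * s₁),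
      1 / 2 * (‖a‖ * ‖y - x‖) ≤ ‖f y - f x‖ := by
    intro x hx y hy
    have h1 := hest x hx y hy
    have h2 := norm_sub_norm_le (a * (y - x)) (f y - f x)
    rw [norm_mul, norm_sub_rev (a * (y - x))] at h2
    linarith
  have hpm : p.1 ∈ ball p.1 (κ * s₁) := mem_ball_self hκs
  rcases le_or_gt (‖a‖ * s₁) s₂ with h | h
  · left
    have hsub2 : ball p.1 (κ / 8 * s₁) ⊆ ball p.1 (κ * s₁) := ball_subset_ball (by nlinarith)
    refine ⟨f, hf.mono (hsub2.trans hsub), hfp, fun x hx => ?_, fun x hx => ?_⟩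
    · have hx' := hsub (hsub2 hx)
      exact ⟨hfP x hx', ((hreg x hx').2 _ (hfP x hx')).1⟩
    · have h1 := hup p.1 hpm x (hsub2 hx)
      have h2 : ‖x - p.1‖ ≤ s₁ := by
        have := hsub (hsub2 hx)
        rw [mem_ball, dist_eq_norm] at this
        exact this.le
      rw [hfp] at h1
      have h3 : ‖a‖ * ‖x - p.1‖ ≤ ‖a‖ * s₁ := by gcongr
      linarith
  · right
    have hcl : closedBall p.1 (κ * s₁ / 2) ⊆ ball p.1 (κ * s₁) :=
      closedBall_subset_ball (by linarith)
    have himg := DiffContOnCl.ball_subset_image_closedBall (f := f) (z₀ := p.1) (r := κ * s₁ / 2)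
      (ε := ‖a‖ * κ * s₁ / 4)
      ((hf.mono (hcl.trans hsub)).diffContOnCl_ball subset_rfl) (by positivity)
      (fun z hz => by
        have h1 := hlow p.1 hpm z (hcl (sphere_subset_closedBall hz))
        rw [mem_sphere, dist_eq_norm] at hz
        rw [hz] at h1
        linarith)
      (by
        refine Filter.Eventually.frequently (f := nhdsWithin p.1 {p.1}ᶜ) ?_ |>.filter_mono
          nhdsWithin_le_nhds
        filter_upwards [self_mem_nhdsWithin, mem_nhdsWithin_of_mem_nhds
          (ball_mem_nhds p.1 hκs)] with x hx hx2 heq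
        have := hlow p.1 hpm x hx2
        rw [heq, sub_self, norm_zero] at this
        have h3 : 0 < ‖x - p.1‖ := norm_pos_iff.2 (sub_ne_zero.2 hx)
        have : 0 < 1 / 2 * (‖a‖ * ‖x - p.1‖) := by positivity
        linarith)
    rw [hfp] at himg
    have hsub3 : ∀ y ∈ ball p.2 (κ / 8 * s₂), ∃ x ∈ closedBall p.1 (κ * s₁ / 2), f x = y :=
      fun y hy => himg (ball_subset_ball (by nlinarith) hy)
    choose! g hg1 hg2 using hsub3
    have hgm : ∀ y ∈ ball p.2 (κ / 8 * s₂), g y ∈ ball p.1 (κ * s₁) := fun y hy => hcl (hg1 _ hy)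
    have hpm2 : p.2 ∈ ball p.2 (κ / 8 * s₂) := mem_ball_self (by positivity)
    have hlip : ∀ y ∈ ball p.2 (κ / 8 * s₂), ∀ z ∈ ball p.2 (κ / 8 * s₂),
        ‖a‖ * ‖g z - g y‖ ≤ 2 * ‖z - y‖ := by
      intro y hy z hz
      have := hlow _ (hgm y hy) _ (hgm z hz)
      rw [hg2 _ hy, hg2 _ hz] at this
      linarith
    have hgp : g p.2 = p.1 := by
      have := hlow _ hpm _ (hgm _ hpm2)
      rw [hg2 _ hpm2, hfp, sub_self, norm_zero] at this
      have h2 : ‖g p.2 - p.1‖ = 0 := by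
        by_contra h0
        have h3 : 0 < ‖g p.2 - p.1‖ := lt_of_le_of_ne (norm_nonneg _) (Ne.symm h0)
        have : 0 < 1 / 2 * (‖a‖ * ‖g p.2 - p.1‖) := by positivity
        linarith
      exact sub_eq_zero.1 (norm_eq_zero.1 h2)
    refine ⟨g, fun y hy => ?_, hgp, fun y hy => ?_, fun y hy => ?_⟩
    · have hlipg : LipschitzOnWith (Real.toNNReal (2 / ‖a‖)) g (ball p.2 (κ / 8 * s₂)) := by
        refine LipschitzOnWith.of_dist_le_mul fun y hy z hz => ?_
        rw [Real.coe_toNNReal _ (by positivity), dist_eq_norm, dist_eq_norm, div_mul_eq_mul_div,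
          le_div_iff₀ ha, mul_comm]
        exact hlip z hz y hy
      have hcont : ContinuousAt g y := hlipg.continuousOn.continuousAt (isOpen_ball.mem_nhds hy)
      have hm := hsub (hgm y hy)
      exact (HasDerivAt.of_local_left_inverse hcont
        (hf.differentiableAt (isOpen_ball.mem_nhds hm)).hasDerivAt (hne _ hm)
        (by filter_upwards [isOpen_ball.mem_nhds hy] with z hz using hg2 _ hz)).differentiableAt
          |>.differentiableWithinAt
    · have hm := hsub (hgm y hy)
      have h1 := hfP _ hm
      have h2 := ((hreg _ hm).2 _ h1).2
      rw [hg2 _ hy] at h1 h2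
      rw [evalEval_swap, evalEval_derivative_swap]
      exact ⟨h1, h2⟩
    · have h1 := hlip _ hpm2 y hy
      rw [hgp] at h1
      have h2 : ‖y - p.2‖ < κ / 8 * s₂ := by simpa [dist_eq_norm] using hy
      have h3 : ‖a‖ * ‖g y - p.1‖ ≤ ‖a‖ * (2 * s₁) := by nlinarith
      exact le_of_mul_le_mul_left h3 ha

/-- `A` is divided into cells, each with a scale that bounds its radius. -/
def CellSystem (A : Finset ℂ) (s : ℂ → ℝ) (cell : ℂ → ℕ) : Prop :=
  (∀ a ∈ A, 0 < s a) ∧ ∀ a ∈ A, ∀ b ∈ A, cell a = cell b → s a = s b ∧ ‖a - b‖ ≤ 2 * s a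

/-- Any two points of `Q` are far apart, relative to the scales, in one of the coordinates. -/
def NonClose (K : ℝ) (s₁ s₂ : ℂ → ℝ) (Q : Finset (ℂ × ℂ)) : Prop :=
  ∀ p ∈ Q, ∀ q ∈ Q, p ≠ q →
    K * min (s₁ p.1) (s₁ q.1) < ‖p.1 - q.1‖ ∨ K * min (s₂ p.2) (s₂ q.2) < ‖p.2 - q.2‖

lemma NonClose.subset {K : ℝ} {s₁ s₂ : ℂ → ℝ} {Q Q' : Finset (ℂ × ℂ)} (h : NonClose K s₁ s₂ Q)
    (hQ : Q' ⊆ Q) : NonClose K s₁ s₂ Q' :=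
  fun p hp q hq => h p (hQ hp) q (hQ hq)

lemma NonClose.swap {K : ℝ} {s₁ s₂ : ℂ → ℝ} {Q : Finset (ℂ × ℂ)} (h : NonClose K s₁ s₂ Q) :
    NonClose K s₂ s₁ (Q.image Prod.swap) := by
  intro p hp q hq hpq
  obtain ⟨p, hpQ, rfl⟩ := Finset.mem_image.1 hp
  obtain ⟨q, hqQ, rfl⟩ := Finset.mem_image.1 hq
  exact (h p hpQ q hqQ fun h => hpq (by rw [h])).symm

lemma card_image_swap (Q : Finset (ℂ × ℂ)) : (Q.image Prod.swap).card = Q.card :=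
  Finset.card_image_of_injective _ Prod.swap_injective

lemma image_swap_subset {Q : Finset (ℂ × ℂ)} {A B : Finset ℂ} (h : Q ⊆ A ×ˢ B) :
    Q.image Prod.swap ⊆ B ×ˢ A := by
  intro p hp
  obtain ⟨p, hpQ, rfl⟩ := Finset.mem_image.1 hp
  have := Finset.mem_product.1 (h hpQ)
  exact Finset.mem_product.2 ⟨this.2, this.1⟩

lemma abs_sub_lt_of_floor_cast_eq {M : ℕ} {h x y : ℝ} (hh : 0 < h) (hxy : |x - y| < (M - 1) * h)
    (hcol : ((⌊x / h⌋ : ℤ) : ZMod M) = (⌊y / h⌋ : ℤ)) : |x - y| < h := by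
  have hd : |x / h - y / h| < M - 1 := by
    rw [← sub_div, abs_div, abs_of_pos hh, div_lt_iff₀ hh]
    exact hxy
  rw [ZMod.intCast_eq_intCast_iff_dvd_sub] at hcol
  have hfl : ⌊y / h⌋ - ⌊x / h⌋ = 0 := by
    refine Int.eq_zero_of_abs_lt_dvd hcol ?_
    have h1 := Int.floor_le (x / h)
    have h2 := Int.lt_floor_add_one (x / h)
    have h3 := Int.floor_le (y / h)
    have h4 := Int.lt_floor_add_one (y / h)
    rw [abs_lt] at hd ⊢
    constructor
    · have : (-(M : ℝ)) < ⌊y / h⌋ - ⌊x / h⌋ := by linarith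
      exact_mod_cast this
    · have : (⌊y / h⌋ : ℝ) - ⌊x / h⌋ < M := by linarith
      exact_mod_cast this
  have hfl' : ⌊x / h⌋ = ⌊y / h⌋ := by omega
  have := Int.abs_sub_lt_one_of_floor_eq_floor hfl'
  rwa [← sub_div, abs_div, abs_of_pos hh, div_lt_iff₀ hh, one_mul] at this

/-- Boundedly many colours suffice so that, at bounded distance, points of equal colour are
close. -/
lemma exists_colouring (K c : ℝ) (hc : 0 < c) : ∃ G : ℕ, ∀ s : ℝ, 0 < s → ∃ col : ℂ → Fin G,
    ∀ a b, ‖a - b‖ ≤ K * s → col a = col b → ‖a - b‖ < c * s := by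
  obtain ⟨M, hM⟩ := exists_nat_gt (2 * K / c + 1)
  refine ⟨Fintype.card (ZMod (M + 1) × ZMod (M + 1)), fun s hs => ?_⟩
  set h := c * s / 2 with hh
  have hh0 : 0 < h := by positivity
  refine ⟨fun a => Fintype.equivFin _ (((⌊a.re / h⌋ : ℤ) : ZMod (M + 1)),
    ((⌊a.im / h⌋ : ℤ) : ZMod (M + 1))), fun a b hab hcol => ?_⟩
  have hcol := (Fintype.equivFin _).injective hcol
  rw [Prod.mk.injEq] at hcol
  have hb : K * s < ((M + 1 : ℕ) - 1 : ℝ) * h := by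
    have h1 : 2 * K < (M - 1) * c := by
      have := lt_sub_iff_add_lt.2 hM
      rwa [div_lt_iff₀ hc] at this
    have h2 : K * s = 2 * K * (s / 2) := by ring
    have h3 : 2 * K * (s / 2) < (M - 1) * c * (s / 2) := by gcongr
    have h4 : 0 < c * (s / 2) := by positivity
    rw [h2, hh]
    push_cast
    nlinarith
  have hre := abs_sub_lt_of_floor_cast_eq hh0
    (lt_of_le_of_lt ((Complex.abs_re_le_norm (a - b)).trans hab) hb) hcol.1
  have him := abs_sub_lt_of_floor_cast_eq hh0
    (lt_of_le_of_lt ((Complex.abs_im_le_norm (a - b)).trans hab) hb) hcol.2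
  have := Complex.norm_le_abs_re_add_abs_im (a - b)
  rw [Complex.sub_re, Complex.sub_im] at this
  linarith

/-- Points with branches are boundedly many per cell. -/
lemma card_le_of_hasBranch (c : ℝ) (hc : 0 < c) (hc1 : c ≤ 1) : ∃ G : ℕ, ∀ (P : ℂ[X][Y])
    (Q : Finset (ℂ × ℂ)) (A B : Finset ℂ) (s₁ s₂ : ℂ → ℝ) (c₁ : ℂ → ℕ) (K : ℝ), 2 ≤ K →
    CellSystem A s₁ c₁ → (∀ b ∈ B, 0 < s₂ b) → Q ⊆ A ×ˢ B → NonClose K s₁ s₂ Q →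
    (∀ p ∈ Q, HasBranch P p (c * s₁ p.1) (2 * s₂ p.2)) →
    Q.card ≤ P.natDegree * ((A.image c₁).card * G) := by
  obtain ⟨G, hG⟩ := exists_colouring 2 c hc
  refine ⟨G, fun P Q A B s₁ s₂ c₁ K hK hA hB hQ hnc hbr => ?_⟩
  have : Nonempty (Fin G) := ⟨(hG 1 one_pos).choose 0⟩
  choose! col hcol using hG
  have hm : ∀ p ∈ Q, p.1 ∈ A ∧ p.2 ∈ B := fun p hp => Finset.mem_product.1 (hQ hp)
  have := Finset.card_le_mul_card_image_of_maps_to (s := Q)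
    (t := A.image c₁ ×ˢ (Finset.univ : Finset (Fin G)))
    (f := fun p => (c₁ p.1, col (s₁ p.1) p.1))
    (fun p hp => Finset.mem_product.2 ⟨Finset.mem_image_of_mem _ (hm p hp).1, Finset.mem_univ _⟩)
    P.natDegree (by
      rintro ⟨k, g⟩ -
      by_contra! hlt
      set S := Q.filter fun p => (c₁ p.1, col (s₁ p.1) p.1) = (k, g)
      have hS : ∀ p ∈ S, p ∈ Q ∧ c₁ p.1 = k ∧ col (s₁ p.1) p.1 = g := by
        intro p hp
        simpa [S] using hp
      obtain ⟨o, ho⟩ : S.Nonempty := Finset.card_pos.1 (by omega)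
      obtain ⟨hoQ, hok, hog⟩ := hS o ho
      have hs : ∀ p ∈ S, s₁ p.1 = s₁ o.1 := fun p hp =>
        (hA.2 _ (hm p (hS p hp).1).1 _ (hm o hoQ).1 ((hS p hp).2.1.trans hok.symm)).1
      have hso : 0 < s₁ o.1 := hA.1 _ (hm o hoQ).1
      have hd : ∀ p ∈ S, ∀ q ∈ S, ‖p.1 - q.1‖ < c * s₁ o.1 := by
        intro p hp q hq
        refine hcol _ hso _ _ ?_ ?_
        · rw [← hs p hp]
          exact (hA.2 _ (hm p (hS p hp).1).1 _ (hm q (hS q hq).1).1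
            ((hS p hp).2.1.trans (hS q hq).2.1.symm)).2
        · have h1 := (hS p hp).2.2
          have h2 := (hS q hq).2.2
          rw [hs p hp] at h1
          rw [hs q hq] at h2
          rw [h1, h2]
      obtain ⟨p, hp, q, hq, hpq, hle⟩ := exists_close_of_branches (P := P) (S := S)
        (r := c * s₁ o.1) (b := fun p => 2 * s₂ p.2) (by positivity)
        (fun p hp => by rw [← hs p hp]; exact hbr p (hS p hp).1) hlt hd
      have hp0 := hB _ (hm p (hS p hp).1).2
      have hq0 := hB _ (hm q (hS q hq).1).2
      rcases hnc p (hS p hp).1 q (hS q hq).1 hpq with h | h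
      · have := hd p hp q hq
        rw [hs p hp, hs q hq, min_self] at h
        nlinarith
      · rw [← mul_min_of_nonneg _ _ (by norm_num : (0:ℝ) ≤ 2)] at hle
        have := lt_min hp0 hq0
        nlinarith)
  rwa [Finset.card_product, Finset.card_univ, Fintype.card_fin] at this

lemma card_le_of_hasBranch_swap (c : ℝ) (hc : 0 < c) (hc1 : c ≤ 1) : ∃ G : ℕ, ∀ (P : ℂ[X][Y])
    (Q : Finset (ℂ × ℂ)) (A B : Finset ℂ) (s₁ s₂ : ℂ → ℝ) (c₂ : ℂ → ℕ) (K : ℝ), 2 ≤ K →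
    CellSystem B s₂ c₂ → (∀ a ∈ A, 0 < s₁ a) → Q ⊆ A ×ˢ B → NonClose K s₁ s₂ Q →
    (∀ p ∈ Q, HasBranch P p.swap (c * s₂ p.2) (2 * s₁ p.1)) →
    Q.card ≤ P.natDegree * ((B.image c₂).card * G) := by
  obtain ⟨G, hG⟩ := card_le_of_hasBranch c hc hc1
  refine ⟨G, fun P Q A B s₁ s₂ c₂ K hK hB hA hQ hnc hbr => ?_⟩
  rw [← card_image_swap Q]
  refine hG P _ B A s₂ s₁ c₂ K hK hB hA (image_swap_subset hQ) hnc.swap fun p hp => ?_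
  obtain ⟨p, hpQ, rfl⟩ := Finset.mem_image.1 hp
  exact hbr p hpQ

lemma card_le_of_increasing {ι : Type*} {Q : Finset ι} {u v s₁ s₂ : ι → ℝ} {c₁ c₂ : ι → ℕ}
    (hu : ∀ p ∈ Q, u p < s₁ p) (hv : ∀ p ∈ Q, v p < s₂ p)
    (h₁ : ∀ p ∈ Q, ∀ q ∈ Q, c₁ p = c₁ q → s₁ p = s₁ q)
    (h₂ : ∀ p ∈ Q, ∀ q ∈ Q, c₂ p = c₂ q → s₂ p = s₂ q)
    (hcmp : ∀ p ∈ Q, ∀ q ∈ Q, p ≠ q → s₁ p < u q ∨ s₁ q < u p ∨ s₂ p < v q ∨ s₂ q < v p)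
    (hmono : ∀ p ∈ Q, ∀ q ∈ Q, p ≠ q → (u p < u q ∧ v p < v q) ∨ (u q < u p ∧ v q < v p)) :
    Q.card ≤ (Q.image c₁).card + (Q.image c₂).card := by
  set F := Q.filter fun p => ∀ q ∈ Q, c₁ q = c₁ p → u q ≤ u p
  set G := Q.filter fun p => ∀ q ∈ Q, c₂ q = c₂ p → u q ≤ u p
  have hF : F.card ≤ (Q.image c₁).card := by
    refine Finset.card_le_card_of_injOn c₁
      (fun p hp => Finset.mem_image_of_mem _ (Finset.mem_filter.1 hp).1) fun p hp q hq hpq => ?_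
    obtain ⟨hp, hp'⟩ := Finset.mem_filter.1 hp
    obtain ⟨hq, hq'⟩ := Finset.mem_filter.1 hq
    by_contra hne
    have h3 := hp' q hq hpq.symm
    have h4 := hq' p hp hpq
    rcases hmono p hp q hq hne with h | h <;> linarith [h.1]
  have hG : G.card ≤ (Q.image c₂).card := by
    refine Finset.card_le_card_of_injOn c₂
      (fun p hp => Finset.mem_image_of_mem _ (Finset.mem_filter.1 hp).1) fun p hp q hq hpq => ?_
    obtain ⟨hp, hp'⟩ := Finset.mem_filter.1 hp
    obtain ⟨hq, hq'⟩ := Finset.mem_filter.1 hq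
    by_contra hne
    have h3 := hp' q hq hpq.symm
    have h4 := hq' p hp hpq
    rcases hmono p hp q hq hne with h | h <;> linarith [h.1]
  have hsub : Q ⊆ F ∪ G := by
    intro p hp
    by_contra hcon
    simp only [F, G, Finset.mem_union, Finset.mem_filter, hp, true_and, not_or] at hcon
    push Not at hcon
    obtain ⟨⟨q, hq, hqc, hqu⟩, ⟨q', hq', hqc', hqu'⟩⟩ := hcon
    have hpq : p ≠ q := fun h => by rw [h] at hqu; exact lt_irrefl _ hqu
    have hpq' : p ≠ q' := fun h => by rw [h] at hqu'; exact lt_irrefl _ hqu'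
    have e1 := h₁ q hq p hp hqc
    have e2 := h₂ q' hq' p hp hqc'
    have a1 := hu p hp
    have a2 := hu q hq
    have a3 := hu q' hq'
    have a4 := hv p hp
    have a5 := hv q hq
    have a6 := hv q' hq'
    have m1 := hmono p hp q hq hpq
    have m2 := hmono p hp q' hq' hpq'
    have k1 := hcmp p hp q hq hpq
    have k2 := hcmp p hp q' hq' hpq'
    by_cases hqq : q = q'
    · subst hqq
      rcases m1 with m | m <;> rcases k1 with k | k | k | k <;> linarith [m.1, m.2]
    · have m3 := hmono q hq q' hq' hqq
      rcases m1 with m1 | m1 <;> rcases m2 with m2 | m2 <;> rcases m3 with m3 | m3 <;>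
      rcases k1 with k1 | k1 | k1 | k1 <;> rcases k2 with k2 | k2 | k2 | k2 <;>
      linarith [m1.1, m1.2, m2.1, m2.2, m3.1, m3.2]
  calc Q.card ≤ (F ∪ G).card := Finset.card_le_card hsub
    _ ≤ F.card + G.card := Finset.card_union_le _ _
    _ ≤ _ := by omega

lemma card_le_of_decreasing {ι : Type*} {Q : Finset ι} {u v s₁ s₂ : ι → ℝ} {c₁ c₂ : ι → ℕ}
    (hu : ∀ p ∈ Q, u p < s₁ p) (hv : ∀ p ∈ Q, v p < s₂ p)
    (h₁ : ∀ p ∈ Q, ∀ q ∈ Q, c₁ p = c₁ q → s₁ p = s₁ q)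
    (h₂ : ∀ p ∈ Q, ∀ q ∈ Q, c₂ p = c₂ q → s₂ p = s₂ q)
    (hcmp : ∀ p ∈ Q, ∀ q ∈ Q, p ≠ q → s₁ p < u q ∨ s₁ q < u p ∨ s₂ p < v q ∨ s₂ q < v p)
    (hmono : ∀ p ∈ Q, ∀ q ∈ Q, p ≠ q → (u p < u q ∧ v q < v p) ∨ (u q < u p ∧ v p < v q)) :
    Q.card ≤ (Q.image c₁).card + (Q.image c₂).card := by
  set F := Q.filter fun p => ∀ q ∈ Q, c₁ q = c₁ p → u q ≤ u p with hFd
  set G := Q.filter fun p => ∀ q ∈ Q, c₂ q = c₂ p → u p ≤ u q with hGd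
  have hF : F.card ≤ (Q.image c₁).card := by
    refine Finset.card_le_card_of_injOn c₁
      (fun p hp => Finset.mem_image_of_mem _ (Finset.mem_filter.1 hp).1) fun p hp q hq hpq => ?_
    obtain ⟨hp, hp'⟩ := Finset.mem_filter.1 hp
    obtain ⟨hq, hq'⟩ := Finset.mem_filter.1 hq
    by_contra hne
    have h3 := hp' q hq hpq.symm
    have h4 := hq' p hp hpq
    rcases hmono p hp q hq hne with h | h <;> linarith [h.1]
  have hG : G.card ≤ (Q.image c₂).card := by
    refine Finset.card_le_card_of_injOn c₂
      (fun p hp => Finset.mem_image_of_mem _ (Finset.mem_filter.1 hp).1) fun p hp q hq hpq => ?_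
    obtain ⟨hp, hp'⟩ := Finset.mem_filter.1 hp
    obtain ⟨hq, hq'⟩ := Finset.mem_filter.1 hq
    by_contra hne
    have h3 := hp' q hq hpq.symm
    have h4 := hq' p hp hpq
    rcases hmono p hp q hq hne with h | h <;> linarith [h.1]
  -- the successor, with respect to `u`, of an element that is not last in its first cell
  have hsucc : ∀ p ∈ Q \ F, ∃ q ∈ G, u p < u q ∧ ∀ r ∈ Q, u p < u r → u q ≤ u r := by
    intro p hp
    obtain ⟨hp, hpF⟩ := Finset.mem_sdiff.1 hp
    rw [hFd, Finset.mem_filter] at hpF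
    push Not at hpF
    obtain ⟨t, ht, htc, htu⟩ := hpF hp
    obtain ⟨q, hq, hqmin⟩ := Finset.exists_min_image (Q.filter fun r => u p < u r) u
      ⟨t, Finset.mem_filter.2 ⟨ht, htu⟩⟩
    obtain ⟨hq, hpq⟩ := Finset.mem_filter.1 hq
    have hmin : ∀ r ∈ Q, u p < u r → u q ≤ u r := fun r hr h =>
      hqmin r (Finset.mem_filter.2 ⟨hr, h⟩)
    refine ⟨q, Finset.mem_filter.2 ⟨hq, fun r hr hrc => ?_⟩, hpq, hmin⟩
    by_contra! hlt
    have hrp : u r ≤ u p := by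
      by_contra! h
      linarith [hmin r hr h]
    have hne : p ≠ q := fun h => by rw [h] at hpq; exact lt_irrefl _ hpq
    have e1 := h₁ t ht p hp htc
    have e2 := h₂ r hr q hq hrc
    have a1 := hu p hp
    have a2 := hu q hq
    have a3 := hu t ht
    have a4 := hv p hp
    have a5 := hv q hq
    have a6 := hv r hr
    have htq := hmin t ht htu
    have m1 := hmono p hp q hq hne
    have hvr : v p ≤ v r := by
      by_cases hpr : p = r
      · rw [hpr]
      · rcases hmono p hp r hr hpr with h | h <;> linarith [h.1, h.2]
    rcases m1 with m | m <;> rcases hcmp p hp q hq hne with k | k | k | k <;>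
      linarith [m.1, m.2]
  choose! f hfG hfu hfmin using hsucc
  have hsd : (Q \ F).card ≤ G.card := by
    refine Finset.card_le_card_of_injOn f (fun p hp => hfG p hp) fun p hp q hq hpq => ?_
    by_contra hne
    have hp' := (Finset.mem_sdiff.1 hp).1
    have hq' := (Finset.mem_sdiff.1 hq).1
    have b1 := hfu p hp
    have b2 := hfu q hq
    rw [hpq] at b1
    rcases hmono p hp' q hq' hne with h | h
    · have := hfmin p hp q hq' h.1
      rw [hpq] at this
      linarith
    · have := hfmin q hq p hp' h.1
      linarith
  have hFQ : F ⊆ Q := Finset.filter_subset _ _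
  have := Finset.card_sdiff_add_card_eq_card hFQ
  omega

/-- Points along a tropical line, pairwise separated in one coordinate. -/
lemma card_le_of_tropical_line {ι : Type*} {Q : Finset ι} {u v s₁ s₂ : ι → ℝ} {c₁ c₂ : ι → ℕ}
    {Λ L α β : ℝ} (hΛ : 0 ≤ Λ) (hL : Λ < L)
    (hu0 : ∀ p ∈ Q, 0 < u p) (hv0 : ∀ p ∈ Q, 0 < v p)
    (hu : ∀ p ∈ Q, u p < s₁ p) (hv : ∀ p ∈ Q, v p < s₂ p)
    (h₁ : ∀ p ∈ Q, ∀ q ∈ Q, c₁ p = c₁ q → s₁ p = s₁ q)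
    (h₂ : ∀ p ∈ Q, ∀ q ∈ Q, c₂ p = c₂ q → s₂ p = s₂ q)
    (hcmp : ∀ p ∈ Q, ∀ q ∈ Q, p ≠ q → Real.exp L * s₁ p < u q ∨ Real.exp L * s₁ q < u p ∨
      Real.exp L * s₂ p < v q ∨ Real.exp L * s₂ q < v p)
    (hα : α = 0 ∨ 1 ≤ |α|) (hβ : β = 0 ∨ 1 ≤ |β|) (hαβ : ¬ (α = 0 ∧ β = 0))
    (hlin : ∀ p ∈ Q, ∀ q ∈ Q, |α * (Real.log (u p) - Real.log (u q)) +
      β * (Real.log (v p) - Real.log (v q))| ≤ Λ) :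
    Q.card ≤ (Q.image c₁).card + (Q.image c₂).card := by
  have hE : 1 ≤ Real.exp L := Real.one_le_exp (by linarith)
  have hlog : ∀ {x s y : ℝ}, 0 < x → x < s → Real.exp L * s < y →
      s < y ∧ L < Real.log y - Real.log x := by
    intro x s y hx hxs hsy
    have hs : 0 < s := hx.trans hxs
    refine ⟨by nlinarith, ?_⟩
    have h1 : Real.exp L * x < y := by nlinarith [Real.exp_pos L]
    have := Real.log_lt_log (by positivity) h1
    rw [Real.log_mul (Real.exp_pos L).ne' hx.ne', Real.log_exp] at this
    linarith
  have hcmp' : ∀ p ∈ Q, ∀ q ∈ Q, p ≠ q →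
      (s₁ p < u q ∨ s₁ q < u p) ∧ L < |Real.log (u p) - Real.log (u q)| ∨
      (s₂ p < v q ∨ s₂ q < v p) ∧ L < |Real.log (v p) - Real.log (v q)| := by
    intro p hp q hq hpq
    rcases hcmp p hp q hq hpq with h | h | h | h
    · obtain ⟨h3, h4⟩ := hlog (hu0 p hp) (hu p hp) h
      exact Or.inl ⟨Or.inl h3, by rw [abs_sub_comm]; exact h4.trans_le (le_abs_self _)⟩
    · obtain ⟨h3, h4⟩ := hlog (hu0 q hq) (hu q hq) h
      exact Or.inl ⟨Or.inr h3, h4.trans_le (le_abs_self _)⟩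
    · obtain ⟨h3, h4⟩ := hlog (hv0 p hp) (hv p hp) h
      exact Or.inr ⟨Or.inl h3, by rw [abs_sub_comm]; exact h4.trans_le (le_abs_self _)⟩
    · obtain ⟨h3, h4⟩ := hlog (hv0 q hq) (hv q hq) h
      exact Or.inr ⟨Or.inr h3, h4.trans_le (le_abs_self _)⟩
  have hcmp'' : ∀ p ∈ Q, ∀ q ∈ Q, p ≠ q →
      s₁ p < u q ∨ s₁ q < u p ∨ s₂ p < v q ∨ s₂ q < v p := by
    intro p hp q hq hpq
    have := hcmp' p hp q hq hpq
    tauto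
  have hsmall : ∀ {a x : ℝ}, 1 ≤ |a| → |a * x| ≤ Λ → ¬ L < |x| := by
    intro a x ha hax hx
    rw [abs_mul] at hax
    nlinarith [abs_nonneg x]
  rcases hα with hα | hα
  · have hβ' : 1 ≤ |β| := hβ.resolve_left fun h => hαβ ⟨hα, h⟩
    refine le_trans ?_ (Nat.le_add_right _ _)
    refine Finset.card_le_card_of_injOn c₁ (fun p hp => Finset.mem_image_of_mem _ hp)
      fun p hp q hq hpq => ?_
    by_contra hne
    have h3 := hlin p hp q hq
    rw [hα, zero_mul, zero_add] at h3
    have h4 := (hcmp' p hp q hq hne).resolve_right fun h => hsmall hβ' h3 h.2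
    have e := h₁ p hp q hq hpq
    have := hu p hp
    have := hu q hq
    rcases h4.1 with h | h <;> linarith
  rcases hβ with hβ | hβ
  · refine le_trans ?_ (Nat.le_add_left _ _)
    refine Finset.card_le_card_of_injOn c₂ (fun p hp => Finset.mem_image_of_mem _ hp)
      fun p hp q hq hpq => ?_
    by_contra hne
    have h3 := hlin p hp q hq
    rw [hβ, zero_mul, add_zero] at h3
    have h4 := (hcmp' p hp q hq hne).resolve_left fun h => hsmall hα h3 h.2
    have e := h₂ p hp q hq hpq
    have := hv p hp
    have := hv q hq
    rcases h4.1 with h | h <;> linarith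
  have hneg : ∀ {a x y : ℝ}, 1 ≤ |a| → L < |x| → |a * x + y| ≤ Λ → (a * x) * y < 0 := by
    intro a x y ha hx hxy
    have h1 : Λ < |a * x| := by rw [abs_mul]; nlinarith [abs_nonneg x]
    rw [abs_le] at hxy
    rcases lt_abs.1 h1 with h | h <;> nlinarith
  have hprod : ∀ p ∈ Q, ∀ q ∈ Q, p ≠ q → (α * (Real.log (u p) - Real.log (u q))) *
      (β * (Real.log (v p) - Real.log (v q))) < 0 := by
    intro p hp q hq hpq
    rcases hcmp' p hp q hq hpq with h | h
    · exact hneg hα h.2 (hlin p hp q hq)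
    · rw [mul_comm]
      refine hneg hβ h.2 ?_
      rw [add_comm]
      exact hlin p hp q hq
  have hα0 : α ≠ 0 := fun h => by rw [h] at hα; norm_num at hα
  have hβ0 : β ≠ 0 := fun h => by rw [h] at hβ; norm_num at hβ
  have hlt : ∀ {x y : ℝ}, 0 < x → 0 < y → 0 < Real.log x - Real.log y → y < x :=
    fun hx hy h => (Real.log_lt_log_iff hy hx).1 (by linarith)
  have hlt' : ∀ {x y : ℝ}, 0 < x → 0 < y → Real.log x - Real.log y < 0 → x < y :=
    fun hx hy h => (Real.log_lt_log_iff hx hy).1 (by linarith)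
  rcases lt_or_gt_of_ne (mul_ne_zero hα0 hβ0) with hs | hs
  · refine card_le_of_increasing hu hv h₁ h₂ hcmp'' fun p hp q hq hpq => ?_
    have h3 : 0 < (Real.log (u p) - Real.log (u q)) * (Real.log (v p) - Real.log (v q)) := by
      have := hprod p hp q hq hpq
      have e : (α * β) * ((Real.log (u p) - Real.log (u q)) * (Real.log (v p) - Real.log (v q)))
        < 0 := by linarith
      nlinarith
    rcases pos_and_pos_or_neg_and_neg_of_mul_pos h3 with h | h
    · exact Or.inr ⟨hlt (hu0 p hp) (hu0 q hq) h.1, hlt (hv0 p hp) (hv0 q hq) h.2⟩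
    · exact Or.inl ⟨hlt' (hu0 p hp) (hu0 q hq) h.1, hlt' (hv0 p hp) (hv0 q hq) h.2⟩
  · refine card_le_of_decreasing hu hv h₁ h₂ hcmp'' fun p hp q hq hpq => ?_
    have h3 : (Real.log (u p) - Real.log (u q)) * (Real.log (v p) - Real.log (v q)) < 0 := by
      have := hprod p hp q hq hpq
      have e : (α * β) * ((Real.log (u p) - Real.log (u q)) * (Real.log (v p) - Real.log (v q)))
        < 0 := by linarith
      exact (pos_iff_neg_of_mul_neg e).1 hs
    rcases mul_neg_iff.1 h3 with h | h
    · exact Or.inr ⟨hlt (hu0 p hp) (hu0 q hq) h.1, hlt' (hv0 p hp) (hv0 q hq) h.2⟩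
    · exact Or.inl ⟨hlt' (hu0 p hp) (hu0 q hq) h.1, hlt (hv0 p hp) (hv0 q hq) h.2⟩

/-- In a vanishing sum two terms are of comparable size. -/
lemma exists_comparable_terms {ι : Type*} {M : Finset ι} {t : ι → ℂ} (h0 : ∑ m ∈ M, t m = 0)
    (hne : ∃ m ∈ M, t m ≠ 0) : ∃ m ∈ M, ∃ n ∈ M, m ≠ n ∧ t n ≠ 0 ∧ ‖t n‖ ≤ ‖t m‖ ∧
      ‖t m‖ ≤ M.card * ‖t n‖ := by
  obtain ⟨k, hk, hk0⟩ := hne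
  obtain ⟨m, hm, hmax⟩ := Finset.exists_max_image M (fun i => ‖t i‖) ⟨k, hk⟩
  have hm0 : 0 < ‖t m‖ := (norm_pos_iff.2 hk0).trans_le (hmax k hk)
  have hsum : ‖t m‖ ≤ ∑ i ∈ M.erase m, ‖t i‖ := by
    rw [← Finset.add_sum_erase M t hm] at h0
    rw [eq_neg_of_add_eq_zero_left h0, norm_neg]
    exact norm_sum_le _ _
  have hne' : (M.erase m).Nonempty := by
    by_contra h
    rw [Finset.not_nonempty_iff_eq_empty.1 h, Finset.sum_empty] at hsum
    linarith
  obtain ⟨n, hn, hnmax⟩ := Finset.exists_max_image (M.erase m) (fun i => ‖t i‖) hne'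
  have h2 : ‖t m‖ ≤ M.card * ‖t n‖ := by
    refine hsum.trans ((Finset.sum_le_card_nsmul _ _ _ hnmax).trans ?_)
    rw [nsmul_eq_mul]
    gcongr
    exact Finset.erase_subset _ _
  refine ⟨m, hm, n, Finset.mem_of_mem_erase hn, (Finset.ne_of_mem_erase hn).symm, ?_,
    hmax n (Finset.mem_of_mem_erase hn), h2⟩
  intro h
  rw [h, norm_zero, mul_zero] at h2
  linarith

lemma eval_add_eq_sum {d : ℕ} (p : ℂ[X]) (hp : p.natDegree ≤ d) (z x : ℂ) :
    p.eval (z + x) = ∑ j ∈ Finset.range (d + 1), (Polynomial.taylor z p).coeff j * x ^ j := by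
  rw [add_comm, ← Polynomial.taylor_eval, Polynomial.eval_eq_sum_range' (n := d + 1)]
  rw [Polynomial.natDegree_taylor]
  omega

lemma exists_expansion {d : ℕ} (P : ℂ[X][Y]) (hP : BiDegLE P d) (z w : ℂ) :
    ∃ a : ℕ × ℕ → ℂ, ∀ x y, P.evalEval (z + x) (w + y) =
      ∑ m ∈ Finset.range (d + 1) ×ˢ Finset.range (d + 1), a m * (x ^ m.1 * y ^ m.2) := by
  set b : ℕ → ℂ[X] := fun j => ∑ i ∈ Finset.range (P.natDegree + 1),
    Polynomial.C ((Polynomial.taylor z (P.coeff i)).coeff j) * Polynomial.X ^ i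
  have hb : ∀ j, (b j).natDegree ≤ d := by
    intro j
    refine Polynomial.natDegree_sum_le_of_forall_le _ _ fun i hi => ?_
    refine (Polynomial.natDegree_C_mul_X_pow_le _ _).trans ?_
    have := hP.natDegree_le
    have := Finset.mem_range.1 hi
    omega
  refine ⟨fun m => (Polynomial.taylor w (b m.1)).coeff m.2, fun x y => ?_⟩
  rw [Finset.sum_product, evalEval_eq_sum_range]
  simp only [eval_add_eq_sum _ (hP.natDegree_coeff_le _) z x]
  simp only [Finset.sum_mul]
  rw [Finset.sum_comm]
  refine Finset.sum_congr rfl fun j _ => ?_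
  have := eval_add_eq_sum (b j) (hb j) w y
  simp only [b, Polynomial.eval_finsetSum, Polynomial.eval_mul, Polynomial.eval_C,
    Polynomial.eval_pow, Polynomial.eval_X] at this
  calc _ = x ^ j * ∑ i ∈ Finset.range (P.natDegree + 1),
        (Polynomial.taylor z (P.coeff i)).coeff j * (w + y) ^ i := by
        rw [Finset.mul_sum]
        exact Finset.sum_congr rfl fun i _ => by ring
    _ = _ := by
        rw [this, Finset.mul_sum]
        exact Finset.sum_congr rfl fun i _ => by ring

lemma exists_evalEval_ne_zero {P : ℂ[X][Y]} (hP : P ≠ 0) : ∃ x y, P.evalEval x y ≠ 0 := by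
  obtain ⟨x, hx⟩ := Polynomial.exists_eval_ne_zero_of_natDegree_lt_card P.leadingCoeff
    (Polynomial.leadingCoeff_ne_zero.2 hP) (by
      rw [Cardinal.mk_complex]; exact Cardinal.natCast_lt_aleph0.trans Cardinal.aleph0_lt_continuum)
  have hm : P.map (Polynomial.evalRingHom x) ≠ 0 := by
    intro h
    have := congrArg (fun q => q.coeff P.natDegree) h
    simp only [Polynomial.coeff_map, Polynomial.coeff_zero] at this
    exact hx this
  obtain ⟨y, hy⟩ := Polynomial.exists_eval_ne_zero_of_natDegree_lt_card _ hm (by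
      rw [Cardinal.mk_complex]; exact Cardinal.natCast_lt_aleph0.trans Cardinal.aleph0_lt_continuum)
  rw [Polynomial.map_evalRingHom_eval] at hy
  exact ⟨x, y, hy⟩

lemma card_le_of_fst_eq {K : ℝ} {Q : Finset (ℂ × ℂ)} {A B : Finset ℂ} {s₁ s₂ : ℂ → ℝ}
    {c₂ : ℂ → ℕ} (hK : 2 ≤ K) (hA : ∀ a ∈ A, 0 < s₁ a) (hB : CellSystem B s₂ c₂)
    (hQ : Q ⊆ A ×ˢ B) (hnc : NonClose K s₁ s₂ Q) {x : ℂ} (hx : ∀ p ∈ Q, p.1 = x) :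
    Q.card ≤ (B.image c₂).card := by
  have hm : ∀ p ∈ Q, p.1 ∈ A ∧ p.2 ∈ B := fun p hp => Finset.mem_product.1 (hQ hp)
  refine Finset.card_le_card_of_injOn (fun p => c₂ p.2)
    (fun p hp => Finset.mem_image_of_mem _ (hm p hp).2) fun p hp q hq hpq => ?_
  by_contra hne
  obtain ⟨h1, h2⟩ := hB.2 _ (hm p hp).2 _ (hm q hq).2 hpq
  have hs2 := hB.1 _ (hm p hp).2
  rcases hnc p hp q hq hne with h | h
  · rw [hx p hp, hx q hq, sub_self, norm_zero, min_self] at h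
    have := hA _ (hm p hp).1
    rw [hx p hp] at this
    nlinarith
  · rw [← h1, min_self] at h
    nlinarith

lemma card_le_of_snd_eq {K : ℝ} {Q : Finset (ℂ × ℂ)} {A B : Finset ℂ} {s₁ s₂ : ℂ → ℝ}
    {c₁ : ℂ → ℕ} (hK : 2 ≤ K) (hA : CellSystem A s₁ c₁) (hB : ∀ b ∈ B, 0 < s₂ b)
    (hQ : Q ⊆ A ×ˢ B) (hnc : NonClose K s₁ s₂ Q) {y : ℂ} (hy : ∀ p ∈ Q, p.2 = y) :
    Q.card ≤ (A.image c₁).card := by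
  rw [← card_image_swap Q]
  refine card_le_of_fst_eq (x := y) hK hB hA (image_swap_subset hQ) hnc.swap fun p hp => ?_
  obtain ⟨p, hpQ, rfl⟩ := Finset.mem_image.1 hp
  exact hy p hpQ

lemma lt_of_far {K s s' : ℝ} {a b z : ℂ} (ha : ‖a - z‖ < s) (hb : ‖b - z‖ < s')
    (hab : (K + 1) * min s s' < ‖a - b‖) : K * s < ‖b - z‖ ∨ K * s' < ‖a - z‖ := by
  have h1 : ‖a - b‖ ≤ ‖a - z‖ + ‖b - z‖ := by
    rw [show a - b = (a - z) - (b - z) by ring]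
    exact norm_sub_le _ _
  rcases min_cases s s' with h | h <;> rw [h.1] at hab
  · left; linarith
  · right; linarith

/-- The points of a curve that are, relative to the scales, near a given point. -/
lemma card_le_of_near (d : ℕ) : ∃ (K₀ : ℝ) (N : ℕ), 2 ≤ K₀ ∧ ∀ (P : ℂ[X][Y])
    (Q : Finset (ℂ × ℂ)) (A B : Finset ℂ) (s₁ s₂ : ℂ → ℝ) (c₁ c₂ : ℂ → ℕ), P ≠ 0 →
    BiDegLE P d → CellSystem A s₁ c₁ → CellSystem B s₂ c₂ → Q ⊆ A ×ˢ B → NonClose K₀ s₁ s₂ Q →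
    (∀ p ∈ Q, P.evalEval p.1 p.2 = 0) → ∀ z w : ℂ,
    (∀ p ∈ Q, ‖p.1 - z‖ < s₁ p.1 ∧ ‖p.2 - w‖ < s₂ p.2) →
    Q.card ≤ N * ((A.image c₁).card + (B.image c₂).card) := by
  set D := Finset.range (d + 1) ×ˢ Finset.range (d + 1) with hD
  have hD0 : 0 < D.card := Finset.card_pos.2 ⟨(0, 0), by simp [hD]⟩
  have hD1 : (1 : ℝ) ≤ D.card := by exact_mod_cast hD0
  set Λ := Real.log D.card
  have hΛ : 0 ≤ Λ := Real.log_nonneg hD1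
  have hE : 1 ≤ Real.exp (Λ + 1) := Real.one_le_exp (by linarith)
  refine ⟨Real.exp (Λ + 1) + 1, D.card * D.card + 1, by linarith, ?_⟩
  intro P Q A B s₁ s₂ c₁ c₂ hP hPd hA hB hQ hnc hPQ z w hnear
  have hK : 2 ≤ Real.exp (Λ + 1) + 1 := by linarith
  have hm : ∀ p ∈ Q, p.1 ∈ A ∧ p.2 ∈ B := fun p hp => Finset.mem_product.1 (hQ hp)
  obtain ⟨a, ha⟩ := exists_expansion P hPd z w
  set Q₁ := Q.filter fun p => p.1 = z
  set Q₂ := Q.filter fun p => p.2 = w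
  set R := Q.filter fun p => p.1 ≠ z ∧ p.2 ≠ w
  have hR : ∀ p ∈ R, p ∈ Q ∧ p.1 ≠ z ∧ p.2 ≠ w := fun p hp => Finset.mem_filter.1 hp
  have hcov : Q ⊆ Q₁ ∪ Q₂ ∪ R := by
    intro p hp
    simp only [Q₁, Q₂, R, Finset.mem_union, Finset.mem_filter, hp, true_and]
    tauto
  have hQ₁ : Q₁.card ≤ (B.image c₂).card :=
    card_le_of_fst_eq (x := z) hK hA.1 hB ((Finset.filter_subset _ _).trans hQ)
      (hnc.subset (Finset.filter_subset _ _)) fun p hp => (Finset.mem_filter.1 hp).2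
  have hQ₂ : Q₂.card ≤ (A.image c₁).card :=
    card_le_of_snd_eq (y := w) hK hA hB.1 ((Finset.filter_subset _ _).trans hQ)
      (hnc.subset (Finset.filter_subset _ _)) fun p hp => (Finset.mem_filter.1 hp).2
  have hpair : ∀ p ∈ R, ∃ mn : (ℕ × ℕ) × (ℕ × ℕ), mn ∈ D ×ˢ D ∧ mn.1 ≠ mn.2 ∧
      |(Real.log ‖a mn.1‖ - Real.log ‖a mn.2‖) +
        ((mn.1.1 : ℝ) - mn.2.1) * Real.log ‖p.1 - z‖ +
        ((mn.1.2 : ℝ) - mn.2.2) * Real.log ‖p.2 - w‖ - Λ / 2| ≤ Λ / 2 := by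
    intro p hp
    obtain ⟨hpQ, hpz, hpw⟩ := hR p hp
    have hz0 : p.1 - z ≠ 0 := sub_ne_zero.2 hpz
    have hw0 : p.2 - w ≠ 0 := sub_ne_zero.2 hpw
    have hsum := ha (p.1 - z) (p.2 - w)
    rw [add_sub_cancel, add_sub_cancel, hPQ p hpQ] at hsum
    obtain ⟨m, hm, n, hn, hmn, hn0, hle1, hle2⟩ := exists_comparable_terms hsum.symm (by
      by_contra! h
      obtain ⟨x, y, hxy⟩ := exists_evalEval_ne_zero hP
      apply hxy
      have := ha (x - z) (y - w)
      rw [add_sub_cancel, add_sub_cancel] at this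
      rw [this]
      refine Finset.sum_eq_zero fun m hm => ?_
      rw [(mul_eq_zero.1 (h m hm)).resolve_right
        (mul_ne_zero (pow_ne_zero _ hz0) (pow_ne_zero _ hw0)), zero_mul])
    have hn0' := norm_pos_iff.2 hn0
    have hm0' := hn0'.trans_le hle1
    have hlog : ∀ k : ℕ × ℕ, 0 < ‖a k * ((p.1 - z) ^ k.1 * (p.2 - w) ^ k.2)‖ →
        Real.log ‖a k * ((p.1 - z) ^ k.1 * (p.2 - w) ^ k.2)‖ = Real.log ‖a k‖ +
          k.1 * Real.log ‖p.1 - z‖ + k.2 * Real.log ‖p.2 - w‖ := by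
      intro k hk
      have hak : a k ≠ 0 := left_ne_zero_of_mul (norm_pos_iff.1 hk)
      rw [norm_mul, norm_mul, norm_pow, norm_pow, Real.log_mul (norm_ne_zero_iff.2 hak)
        (by positivity), Real.log_mul (by positivity) (by positivity), Real.log_pow,
        Real.log_pow, add_assoc]
    have l1 := Real.log_le_log hn0' hle1
    have l2 := Real.log_le_log hm0' hle2
    rw [Real.log_mul (by positivity) hn0'.ne'] at l2
    rw [hlog m hm0', hlog n hn0'] at l1 l2
    refine ⟨(m, n), Finset.mem_product.2 ⟨hm, hn⟩, hmn, ?_⟩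
    rw [abs_le]
    constructor <;> simp only [] <;> linarith
  choose! f hfD hfne hf using hpair
  have hRc := Finset.card_le_mul_card_image_of_maps_to (s := R) (t := D ×ˢ D) (f := f) hfD
    ((A.image c₁).card + (B.image c₂).card) (by
      rintro ⟨m, n⟩ -
      set S := R.filter fun p => f p = (m, n)
      have hS : ∀ p ∈ S, p ∈ R ∧ f p = (m, n) := fun p hp => Finset.mem_filter.1 hp
      have hSQ : ∀ p ∈ S, p ∈ Q := fun p hp => (hR p (hS p hp).1).1
      rcases S.eq_empty_or_nonempty with hS0 | ⟨o, ho⟩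
      · rw [hS0]; simp
      have hmn : m ≠ n := by
        have := hfne o (hS o ho).1
        rwa [(hS o ho).2] at this
      have hdiff : ∀ i j : ℕ, ((i : ℝ) - j) = 0 ∨ 1 ≤ |(i : ℝ) - j| := by
        intro i j
        by_cases h : (i : ℤ) - j = 0
        · left; exact_mod_cast h
        · right; exact_mod_cast Int.one_le_abs h
      have key := card_le_of_tropical_line (Q := S) (u := fun p => ‖p.1 - z‖)
        (v := fun p => ‖p.2 - w‖) (s₁ := fun p => s₁ p.1) (s₂ := fun p => s₂ p.2)
        (c₁ := fun p => c₁ p.1) (c₂ := fun p => c₂ p.2) (Λ := Λ) (L := Λ + 1)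
        (α := (m.1 : ℝ) - n.1) (β := (m.2 : ℝ) - n.2) hΛ (by linarith)
        (fun p hp => norm_pos_iff.2 (sub_ne_zero.2 (hR p (hS p hp).1).2.1))
        (fun p hp => norm_pos_iff.2 (sub_ne_zero.2 (hR p (hS p hp).1).2.2))
        (fun p hp => (hnear p (hSQ p hp)).1) (fun p hp => (hnear p (hSQ p hp)).2)
        (fun p hp q hq h => (hA.2 _ (hm p (hSQ p hp)).1 _ (hm q (hSQ q hq)).1 h).1)
        (fun p hp q hq h => (hB.2 _ (hm p (hSQ p hp)).2 _ (hm q (hSQ q hq)).2 h).1)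
        (fun p hp q hq hpq => by
          have n1 := hnear p (hSQ p hp)
          have n2 := hnear q (hSQ q hq)
          rcases hnc p (hSQ p hp) q (hSQ q hq) hpq with h | h
          · rcases lt_of_far n1.1 n2.1 h with h | h
            · exact Or.inl h
            · exact Or.inr (Or.inl h)
          · rcases lt_of_far n1.2 n2.2 h with h | h
            · exact Or.inr (Or.inr (Or.inl h))
            · exact Or.inr (Or.inr (Or.inr h)))
        (hdiff _ _) (hdiff _ _)
        (fun h => hmn (Prod.ext (by exact_mod_cast sub_eq_zero.1 h.1)
          (by exact_mod_cast sub_eq_zero.1 h.2)))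
        (fun p hp q hq => by
          have h1 := hf p (hS p hp).1
          have h2 := hf q (hS q hq).1
          rw [(hS p hp).2, abs_le] at h1
          rw [(hS q hq).2, abs_le] at h2
          simp only [] at h1 h2
          rw [abs_le]
          constructor <;> simp only [mul_sub] <;> linarith)
      refine key.trans (add_le_add (Finset.card_le_card ?_) (Finset.card_le_card ?_))
      · intro k hk
        obtain ⟨p, hp, rfl⟩ := Finset.mem_image.1 hk
        exact Finset.mem_image_of_mem _ (hm p (hSQ p hp)).1
      · intro k hk
        obtain ⟨p, hp, rfl⟩ := Finset.mem_image.1 hk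
        exact Finset.mem_image_of_mem _ (hm p (hSQ p hp)).2)
  rw [Finset.card_product] at hRc
  calc Q.card ≤ (Q₁ ∪ Q₂ ∪ R).card := Finset.card_le_card hcov
    _ ≤ Q₁.card + Q₂.card + R.card :=
      (Finset.card_union_le _ _).trans (Nat.add_le_add_right (Finset.card_union_le _ _) _)
    _ ≤ _ := by rw [mul_comm] at hRc; rw [add_mul, one_mul]; omega

lemma card_le_of_natDegree_eq_zero {d : ℕ} {K : ℝ} {P : ℂ[X][Y]} {Q : Finset (ℂ × ℂ)}
    {A B : Finset ℂ} {s₁ s₂ : ℂ → ℝ} {c₂ : ℂ → ℕ} (hP : P ≠ 0) (hPd : BiDegLE P d)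
    (hdeg : P.natDegree = 0) (hK : 2 ≤ K) (hA : ∀ a ∈ A, 0 < s₁ a) (hB : CellSystem B s₂ c₂)
    (hQ : Q ⊆ A ×ˢ B) (hnc : NonClose K s₁ s₂ Q) (hPQ : ∀ p ∈ Q, P.evalEval p.1 p.2 = 0) :
    Q.card ≤ d * (B.image c₂).card := by
  have hPC := Polynomial.eq_C_of_natDegree_eq_zero hdeg
  have hq0 : P.coeff 0 ≠ 0 := fun h => hP (by rw [hPC, h, Polynomial.C_0])
  have := Finset.card_le_mul_card_image_of_maps_to (s := Q) (t := (P.coeff 0).roots.toFinset)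
    (f := Prod.fst) (fun p hp => by
      rw [Multiset.mem_toFinset, Polynomial.mem_roots hq0]
      have := hPQ p hp
      rwa [hPC, Polynomial.evalEval_C] at this)
    (B.image c₂).card (fun x _ => card_le_of_fst_eq (x := x) hK hA hB
      ((Finset.filter_subset _ _).trans hQ) (hnc.subset (Finset.filter_subset _ _))
      fun p hp => (Finset.mem_filter.1 hp).2)
  refine this.trans ?_
  rw [mul_comm]
  exact Nat.mul_le_mul_right _ ((Multiset.toFinset_card_le _).trans
    ((Polynomial.card_roots' _).trans (hPd.natDegree_coeff_le 0)))

lemma irreducible_swap {P : ℂ[X][Y]} (hP : Irreducible P) : Irreducible (swap P) :=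
  (MulEquiv.irreducible_iff (swap (R := ℂ))).2 hP

lemma card_le_of_irreducible (d : ℕ) : ∃ (K : ℝ) (N : ℕ), 2 ≤ K ∧ ∀ (P : ℂ[X][Y])
    (Q : Finset (ℂ × ℂ)) (A B : Finset ℂ) (s₁ s₂ : ℂ → ℝ) (c₁ c₂ : ℂ → ℕ), Irreducible P →
    BiDegLE P d → CellSystem A s₁ c₁ → CellSystem B s₂ c₂ → Q ⊆ A ×ˢ B → NonClose K s₁ s₂ Q →
    (∀ p ∈ Q, P.evalEval p.1 p.2 = 0) →
    Q.card ≤ N * ((A.image c₁).card + (B.image c₂).card) := by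
  obtain ⟨K, N₀, hK, hnear⟩ := card_le_of_near d
  obtain ⟨c, hc0, hc1, hbr⟩ := hasBranch_or_hasBranch_swap d
  obtain ⟨G, hG⟩ := card_le_of_hasBranch c hc0 hc1
  obtain ⟨G', hG'⟩ := card_le_of_hasBranch_swap c hc0 hc1
  set e := d + 4 * d * d
  refine ⟨K, d + d * G + d * G' + N₀ * (e * e), hK, ?_⟩
  intro P Q A B s₁ s₂ c₁ c₂ hP hPd hA hB hQ hnc hPQ
  set n₁ := (A.image c₁).card
  set n₂ := (B.image c₂).card
  have hm : ∀ p ∈ Q, p.1 ∈ A ∧ p.2 ∈ B := fun p hp => Finset.mem_product.1 (hQ hp)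
  rcases Nat.eq_zero_or_pos P.natDegree with hdeg | hdeg
  · have := card_le_of_natDegree_eq_zero hP.ne_zero hPd hdeg hK hA.1 hB hQ hnc hPQ
    refine this.trans (Nat.mul_le_mul ?_ (Nat.le_add_left _ _))
    omega
  rcases Nat.eq_zero_or_pos (swap P).natDegree with hdeg' | hdeg'
  · have := card_le_of_natDegree_eq_zero (irreducible_swap hP).ne_zero hPd.swap hdeg' hK hB.1 hA
      (image_swap_subset hQ) hnc.swap (fun p hp => by
        obtain ⟨p, hpQ, rfl⟩ := Finset.mem_image.1 hp
        rw [evalEval_swap]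
        exact hPQ p hpQ)
    rw [card_image_swap] at this
    refine this.trans (Nat.mul_le_mul ?_ (Nat.le_add_right _ _))
    omega
  obtain ⟨Z, hZc, hZ⟩ := exists_special hP hdeg hdeg' hPd
  obtain ⟨W, hWc, hW⟩ := exists_special (irreducible_swap hP) hdeg'
    (by rwa [Polynomial.Bivariate.swap_swap_apply]) hPd.swap
  set Q₁ := Q.filter fun p => HasBranch P p (c * s₁ p.1) (2 * s₂ p.2)
  set Q₂ := Q.filter fun p => HasBranch (swap P) p.swap (c * s₂ p.2) (2 * s₁ p.1)
  set R := Q \ (Q₁ ∪ Q₂)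
  have hQ₁ : Q₁.card ≤ d * G * n₁ := by
    refine (hG P Q₁ A B s₁ s₂ c₁ K hK hA hB.1 ((Finset.filter_subset _ _).trans hQ)
      (hnc.subset (Finset.filter_subset _ _)) fun p hp => (Finset.mem_filter.1 hp).2).trans ?_
    rw [mul_assoc, mul_comm G]
    exact Nat.mul_le_mul_right _ hPd.natDegree_le
  have hQ₂ : Q₂.card ≤ d * G' * n₂ := by
    refine (hG' (swap P) Q₂ A B s₁ s₂ c₂ K hK hB hA.1 ((Finset.filter_subset _ _).trans hQ)
      (hnc.subset (Finset.filter_subset _ _)) fun p hp => (Finset.mem_filter.1 hp).2).trans ?_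
    rw [mul_assoc, mul_comm G']
    exact Nat.mul_le_mul_right _ hPd.swap.natDegree_le
  have hR : ∀ p ∈ R, ∃ zw : ℂ × ℂ, zw ∈ Z ×ˢ W ∧ ‖p.1 - zw.1‖ < s₁ p.1 ∧
      ‖p.2 - zw.2‖ < s₂ p.2 := by
    intro p hp
    simp only [R, Q₁, Q₂, Finset.mem_sdiff, Finset.mem_union, Finset.mem_filter, not_or] at hp
    obtain ⟨hpQ, h1, h2⟩ := hp
    have h1 := fun h => h1 ⟨hpQ, h⟩
    have h2 := fun h => h2 ⟨hpQ, h⟩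
    have hp1 := hA.1 _ (hm p hpQ).1
    have hp2 := hB.1 _ (hm p hpQ).2
    obtain ⟨z, hz, hzZ⟩ : ∃ z ∈ ball p.1 (s₁ p.1), z ∈ Z := by
      by_contra! h
      rcases hbr P hP hdeg hPd p _ _ hp1 hp2 (fun x hx => hZ x (h x hx)) (hPQ p hpQ) with h3 | h3
      · exact h1 h3
      · exact h2 h3
    obtain ⟨w, hw, hwW⟩ : ∃ w ∈ ball p.2 (s₂ p.2), w ∈ W := by
      by_contra! h
      rcases hbr (swap P) (irreducible_swap hP) hdeg' hPd.swap p.swap _ _ hp2 hp1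
        (fun x hx => hW x (h x hx)) (by rw [evalEval_swap]; exact hPQ p hpQ) with h3 | h3
      · exact h2 h3
      · rw [Polynomial.Bivariate.swap_swap_apply, Prod.swap_swap] at h3
        exact h1 h3
    rw [mem_ball', dist_eq_norm] at hz hw
    exact ⟨(z, w), Finset.mem_product.2 ⟨hzZ, hwW⟩, hz, hw⟩
  choose! f hfm hf using hR
  have hRQ : R ⊆ Q := Finset.sdiff_subset
  have hRc := Finset.card_le_mul_card_image_of_maps_to (s := R) (t := Z ×ˢ W) (f := f) hfm
    (N₀ * (n₁ + n₂)) (by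
      rintro ⟨z, w⟩ -
      have hsub : (R.filter fun p => f p = (z, w)) ⊆ Q := (Finset.filter_subset _ _).trans hRQ
      refine hnear P _ A B s₁ s₂ c₁ c₂ hP.ne_zero hPd hA hB (hsub.trans hQ) (hnc.subset hsub)
        (fun p hp => hPQ p (hsub hp)) z w fun p hp => ?_
      obtain ⟨hp, hpf⟩ := Finset.mem_filter.1 hp
      have := hf p hp
      rwa [hpf] at this)
  have hRc' : R.card ≤ N₀ * (e * e) * (n₁ + n₂) := by
    refine hRc.trans ?_
    rw [Finset.card_product]
    calc N₀ * (n₁ + n₂) * (Z.card * W.card) ≤ N₀ * (n₁ + n₂) * (e * e) :=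
          Nat.mul_le_mul_left _ (Nat.mul_le_mul hZc hWc)
      _ = _ := by ring
  have hcov : Q.card ≤ (Q₁ ∪ Q₂).card + R.card := by
    rw [add_comm]
    exact Finset.card_le_card_sdiff_add_card
  have hu := Finset.card_union_le Q₁ Q₂
  calc Q.card ≤ d * G * n₁ + d * G' * n₂ + N₀ * (e * e) * (n₁ + n₂) := by omega
    _ ≤ d * G * (n₁ + n₂) + d * G' * (n₁ + n₂) + N₀ * (e * e) * (n₁ + n₂) := by
        gcongr <;> omega
    _ ≤ d * (n₁ + n₂) + d * G * (n₁ + n₂) + d * G' * (n₁ + n₂) +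
        N₀ * (e * e) * (n₁ + n₂) := by omega
    _ = _ := by ring

lemma BiDegLE.iff_natDegree {P : ℂ[X][Y]} {d : ℕ} :
    BiDegLE P d ↔ P.natDegree ≤ d ∧ (Polynomial.Bivariate.swap P).natDegree ≤ d := by
  refine ⟨fun h => ⟨h.natDegree_le, h.swap.natDegree_le⟩, fun h i j hij => ⟨?_, ?_⟩⟩
  · by_contra! hi
    apply hij
    rw [Polynomial.coeff_eq_zero_of_natDegree_lt (h.1.trans_lt hi), Polynomial.coeff_zero]
  · by_contra! hj
    apply hij
    rw [← coeff_coeff_swap, Polynomial.coeff_eq_zero_of_natDegree_lt (h.2.trans_lt hj),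
      Polynomial.coeff_zero]

lemma one_le_natDegree_add_of_irreducible {P : ℂ[X][Y]} (hP : Irreducible P) :
    1 ≤ P.natDegree + (swap P).natDegree := by
  by_contra! h
  have hd : BiDegLE P 0 := BiDegLE.iff_natDegree.2 ⟨by omega, by omega⟩
  have h1 := Polynomial.eq_C_of_natDegree_eq_zero (Nat.le_zero.1 hd.natDegree_le)
  have h2 := Polynomial.eq_C_of_natDegree_eq_zero (Nat.le_zero.1 (hd.natDegree_coeff_le 0))
  apply hP.not_isUnit
  rw [h1, Polynomial.isUnit_C, h2, Polynomial.isUnit_C, isUnit_iff_ne_zero]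
  intro h0
  rw [h0, Polynomial.C_0] at h2
  rw [h2, Polynomial.C_0] at h1
  exact hP.ne_zero h1

/-- A set of pairwise separated points on a curve has size at most proportional to the number
of cells. -/
lemma card_le_of_nonClose (d : ℕ) : ∃ (K : ℝ) (N : ℕ), 2 ≤ K ∧ ∀ (P : ℂ[X][Y])
    (Q : Finset (ℂ × ℂ)) (A B : Finset ℂ) (s₁ s₂ : ℂ → ℝ) (c₁ c₂ : ℂ → ℕ), P ≠ 0 →
    BiDegLE P d → CellSystem A s₁ c₁ → CellSystem B s₂ c₂ → Q ⊆ A ×ˢ B → NonClose K s₁ s₂ Q →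
    (∀ p ∈ Q, P.evalEval p.1 p.2 = 0) →
    Q.card ≤ N * ((A.image c₁).card + (B.image c₂).card) := by
  obtain ⟨K, N, hK, hirr⟩ := card_le_of_irreducible d
  refine ⟨K, N * (2 * d), hK, ?_⟩
  intro P Q A B s₁ s₂ c₁ c₂ hP hPd hA hB hQ hnc hPQ
  set n := (A.image c₁).card + (B.image c₂).card
  suffices h : ∀ (P : ℂ[X][Y]), P ≠ 0 → BiDegLE P d → ∀ Q : Finset (ℂ × ℂ), Q ⊆ A ×ˢ B →
      NonClose K s₁ s₂ Q → (∀ p ∈ Q, P.evalEval p.1 p.2 = 0) →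
      Q.card ≤ N * (P.natDegree + (swap P).natDegree) * n by
    refine (h P hP hPd Q hQ hnc hPQ).trans ?_
    have := hPd.natDegree_le
    have := hPd.swap.natDegree_le
    gcongr
    omega
  intro P
  induction P using WfDvdMonoid.induction_on_irreducible with
  | zero => exact fun h => absurd rfl h
  | unit u hu =>
    intro _ _ Q _ _ hPQ
    rcases Q.eq_empty_or_nonempty with rfl | ⟨p, hp⟩
    · simp
    · exfalso
      obtain ⟨v, hv⟩ := hu.exists_right_inv
      have := congrArg (Polynomial.evalEval p.1 p.2) hv
      rw [Polynomial.evalEval_mul, hPQ p hp, zero_mul, Polynomial.evalEval_one] at this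
      exact zero_ne_one this
  | mul a i ha hi ih =>
    intro _ hd Q hQ hnc hPQ
    have hi0 := hi.ne_zero
    have hsi0 : swap i ≠ 0 := (irreducible_swap hi).ne_zero
    have hsa0 : swap a ≠ 0 := (map_ne_zero_iff _ (swap (R := ℂ)).injective).2 ha
    have e1 : (i * a).natDegree = i.natDegree + a.natDegree := Polynomial.natDegree_mul hi0 ha
    have e2 : (swap (i * a)).natDegree = (swap i).natDegree + (swap a).natDegree := by
      rw [map_mul, Polynomial.natDegree_mul hsi0 hsa0]
    have hd' := BiDegLE.iff_natDegree.1 hd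
    rw [e1, e2] at hd'
    have hid : BiDegLE i d := BiDegLE.iff_natDegree.2 ⟨by omega, by omega⟩
    have had : BiDegLE a d := BiDegLE.iff_natDegree.2 ⟨by omega, by omega⟩
    set Q₁ := Q.filter fun p => i.evalEval p.1 p.2 = 0
    set Q₂ := Q.filter fun p => a.evalEval p.1 p.2 = 0
    have h1 : Q₁.card ≤ N * n := hirr i Q₁ A B s₁ s₂ c₁ c₂ hi hid hA hB ((Finset.filter_subset _ _).trans hQ)
      (hnc.subset (Finset.filter_subset _ _)) fun p hp => (Finset.mem_filter.1 hp).2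
    have h2 := ih ha had Q₂ ((Finset.filter_subset _ _).trans hQ)
      (hnc.subset (Finset.filter_subset _ _)) fun p hp => (Finset.mem_filter.1 hp).2
    have h3 : Q ⊆ Q₁ ∪ Q₂ := by
      intro p hp
      have := hPQ p hp
      rw [Polynomial.evalEval_mul, mul_eq_zero] at this
      simpa [Q₁, Q₂, hp] using this
    have h4 := (Finset.card_le_card h3).trans (Finset.card_union_le _ _)
    have h5 := one_le_natDegree_add_of_irreducible hi
    rw [e1, e2]
    calc Q.card ≤ N * 1 * n + N * (a.natDegree + (swap a).natDegree) * n := by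
          rw [mul_one]; omega
      _ ≤ N * (i.natDegree + (swap i).natDegree) * n +
          N * (a.natDegree + (swap a).natDegree) * n := by gcongr
      _ = _ := by ring

/-- No point of scale at least `r` has `T` such points within distance `r`. -/
def Sparse (T : ℕ) (A : Finset ℂ) (s : ℂ → ℝ) : Prop :=
  ∀ r : ℝ, ∀ a ∈ A, r ≤ s a → (A.filter fun b => r ≤ s b ∧ ‖a - b‖ < r).card < T

/-- The smallest disc centred in `A` with at least `T` points of `A`. -/
lemma exists_minimal_disc {T : ℕ} (hT : 2 ≤ T) {A : Finset ℂ} (hA : T ≤ A.card) :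
    ∃ c ∈ A, ∃ r : ℝ, 0 < r ∧ T ≤ (A.filter fun b => ‖c - b‖ ≤ r).card ∧
      ∀ a ∈ A, (A.filter fun b => ‖a - b‖ < r).card < T := by
  set D := (A ×ˢ A).filter fun x => T ≤ (A.filter fun b => ‖x.1 - b‖ ≤ ‖x.1 - x.2‖).card with hD
  -- a point set of size at least `T` lies in a disc reaching its farthest point
  have hfar : ∀ a ∈ A, ∀ S : Finset ℂ, S ⊆ A → T ≤ S.card → ∃ b ∈ S, (a, b) ∈ D := by
    intro a ha S hS hTS
    obtain ⟨b, hb, hbmax⟩ := Finset.exists_max_image S (fun b => ‖a - b‖)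
      (Finset.card_pos.1 (by omega))
    refine ⟨b, hb, Finset.mem_filter.2 ⟨Finset.mem_product.2 ⟨ha, hS hb⟩, ?_⟩⟩
    refine hTS.trans (Finset.card_le_card fun x hx => ?_)
    exact Finset.mem_filter.2 ⟨hS hx, hbmax x hx⟩
  obtain ⟨a₀, ha₀⟩ : A.Nonempty := Finset.card_pos.1 (by omega)
  obtain ⟨b₀, -, hb₀⟩ := hfar a₀ ha₀ A subset_rfl hA
  obtain ⟨x, hx, hxmin⟩ := Finset.exists_min_image D (fun x => ‖x.1 - x.2‖) ⟨_, hb₀⟩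
  obtain ⟨hxA, hxT⟩ := Finset.mem_filter.1 hx
  obtain ⟨hx1, hx2⟩ := Finset.mem_product.1 hxA
  refine ⟨x.1, hx1, ‖x.1 - x.2‖, ?_, hxT, fun a ha => ?_⟩
  · rw [norm_pos_iff]
    intro h0
    rw [h0, norm_zero] at hxT
    have : (A.filter fun b => ‖x.1 - b‖ ≤ 0) ⊆ {x.1} := by
      intro b hb
      have := (Finset.mem_filter.1 hb).2
      rw [norm_le_zero_iff, sub_eq_zero] at this
      simp [this]
    have := Finset.card_le_card this
    rw [Finset.card_singleton] at this
    omega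
  · by_contra! hge
    obtain ⟨b, hb, hab⟩ := hfar a ha _ (Finset.filter_subset _ _) hge
    have h1 := hxmin _ hab
    have h2 := (Finset.mem_filter.1 hb).2
    simp only [] at h1
    linarith

/-- Division of a finite set of complex numbers into cells of about `T` points. -/
lemma exists_carving {T : ℕ} (hT : 2 ≤ T) (A : Finset ℂ) : ∃ (s : ℂ → ℝ) (cell : ℂ → ℕ),
    CellSystem A s cell ∧ (A.image cell).card * T ≤ A.card + T ∧ Sparse T A s := by
  induction A using Finset.strongInduction with
  | H A ih =>
  rcases lt_or_ge A.card T with hlt | hge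
  · refine ⟨fun _ => 1 + ∑ a ∈ A, ‖a‖, fun _ => 0, ⟨fun a _ => by positivity,
      fun a ha b hb _ => ⟨rfl, ?_⟩⟩, ?_, fun r a _ _ => ?_⟩
    · have h1 := Finset.single_le_sum (f := fun a : ℂ => ‖a‖) (fun i _ => norm_nonneg i) ha
      have h2 := Finset.single_le_sum (f := fun a : ℂ => ‖a‖) (fun i _ => norm_nonneg i) hb
      have h3 := norm_sub_le a b
      linarith
    · have : (A.image fun _ : ℂ => (0:ℕ)).card ≤ 1 :=
        Finset.card_le_one.2 fun x hx y hy => by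
          obtain ⟨_, _, rfl⟩ := Finset.mem_image.1 hx
          obtain ⟨_, _, rfl⟩ := Finset.mem_image.1 hy
          rfl
      nlinarith
    · exact (Finset.card_le_card (Finset.filter_subset _ _)).trans_lt hlt
  obtain ⟨c, hc, r₁, hr₁, hcard, hmin⟩ := exists_minimal_disc hT hge
  set D := A.filter fun b => ‖c - b‖ ≤ r₁ with hDdef
  have hDA : D ⊆ A := Finset.filter_subset _ _
  have hsum : (A \ D).card + D.card = A.card := Finset.card_sdiff_add_card_eq_card hDA
  have hss : A \ D ⊂ A := Finset.sdiff_ssubset hDA (Finset.card_pos.1 (by omega))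
  obtain ⟨s, cell, ⟨hs0, hs⟩, hn, hsp⟩ := ih _ hss
  refine ⟨fun x => if x ∈ D then r₁ else s x, fun x => if x ∈ D then 0 else cell x + 1,
    ⟨fun a ha => ?_, fun a ha b hb hab => ?_⟩, ?_, fun r a ha har => ?_⟩
  · simp only []
    split_ifs with h
    · exact hr₁
    · exact hs0 a (Finset.mem_sdiff.2 ⟨ha, h⟩)
  · by_cases haD : a ∈ D <;> by_cases hbD : b ∈ D <;> simp only [haD, hbD, if_true, if_false] at hab ⊢
    · refine ⟨trivial, ?_⟩
      have h1 := (Finset.mem_filter.1 haD).2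
      have h2 := (Finset.mem_filter.1 hbD).2
      have h3 : ‖a - b‖ ≤ ‖c - b‖ + ‖c - a‖ := by
        rw [show a - b = (c - b) - (c - a) by ring]
        exact norm_sub_le _ _
      linarith
    · omega
    · omega
    · exact hs a (Finset.mem_sdiff.2 ⟨ha, haD⟩) b (Finset.mem_sdiff.2 ⟨hb, hbD⟩) (by omega)
  · have hsub : (A.image fun x => if x ∈ D then 0 else cell x + 1) ⊆
        insert 0 (((A \ D).image cell).image (· + 1)) := by
      intro k hk
      obtain ⟨x, hx, rfl⟩ := Finset.mem_image.1 hk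
      by_cases h : x ∈ D
      · simp [h]
      · simp only [h, if_false]
        exact Finset.mem_insert_of_mem (Finset.mem_image_of_mem _
          (Finset.mem_image_of_mem _ (Finset.mem_sdiff.2 ⟨hx, h⟩)))
    have h1 := (Finset.card_le_card hsub).trans (Finset.card_insert_le _ _)
    have h2 : (((A \ D).image cell).image (· + 1)).card ≤ ((A \ D).image cell).card :=
      Finset.card_image_le
    calc _ ≤ (((A \ D).image cell).card + 1) * T := Nat.mul_le_mul_right _ (by omega)
      _ = ((A \ D).image cell).card * T + T := by ring
      _ ≤ _ := by omega
  · rcases le_or_gt r r₁ with hr | hr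
    · refine lt_of_le_of_lt (Finset.card_le_card fun b hb => ?_) (hmin a ha)
      obtain ⟨hb, -, hb'⟩ := Finset.mem_filter.1 hb
      exact Finset.mem_filter.2 ⟨hb, hb'.trans_le hr⟩
    · have hout : ∀ b, r ≤ (if b ∈ D then r₁ else s b) → b ∉ D ∧ r ≤ s b := by
        intro b hb
        split_ifs at hb with h
        · linarith
        · exact ⟨h, hb⟩
      obtain ⟨haD, har⟩ := hout a har
      refine lt_of_le_of_lt (Finset.card_le_card fun b hb => ?_)
        (hsp r a (Finset.mem_sdiff.2 ⟨ha, haD⟩) har)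
      obtain ⟨hb, hbs, hb'⟩ := Finset.mem_filter.1 hb
      obtain ⟨hbD, hbs⟩ := hout b hbs
      exact Finset.mem_filter.2 ⟨Finset.mem_sdiff.2 ⟨hb, hbD⟩, hbs, hb'⟩

/-- In a sparse set few pairs are close relative to their scales. -/
lemma card_close_pairs_le (K : ℝ) : ∃ C : ℕ, ∀ (T : ℕ) (A : Finset ℂ) (s : ℂ → ℝ),
    (∀ a ∈ A, 0 < s a) → Sparse T A s →
    ((A ×ˢ A).filter fun x => ‖x.1 - x.2‖ ≤ K * min (s x.1) (s x.2)).card ≤ C * T * A.card := by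
  obtain ⟨G, hG⟩ := exists_colouring (2 * K) 1 one_pos
  refine ⟨2 * G, fun T A s hs hsp => ?_⟩
  have hfib : ∀ a ∈ A, (A.filter fun b => s a ≤ s b ∧ ‖a - b‖ ≤ K * s a).card ≤ T * G := by
    intro a ha
    obtain ⟨col, hcol⟩ := hG (s a) (hs a ha)
    set S := A.filter fun b => s a ≤ s b ∧ ‖a - b‖ ≤ K * s a
    have := Finset.card_le_mul_card_image_of_maps_to (s := S)
      (t := (Finset.univ : Finset (Fin G))) (f := col) (fun _ _ => Finset.mem_univ _) T (by
        intro g _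
        rcases (S.filter fun b => col b = g).eq_empty_or_nonempty with h | ⟨o, ho⟩
        · rw [h]; simp
        obtain ⟨hoS, hog⟩ := Finset.mem_filter.1 ho
        obtain ⟨hoA, hos, hoa⟩ := Finset.mem_filter.1 hoS
        refine (lt_of_le_of_lt (Finset.card_le_card fun b hb => ?_) (hsp (s a) o hoA hos)).le
        obtain ⟨hbS, hbg⟩ := Finset.mem_filter.1 hb
        obtain ⟨hbA, hbs, hba⟩ := Finset.mem_filter.1 hbS
        refine Finset.mem_filter.2 ⟨hbA, hbs, ?_⟩
        have h1 : ‖o - b‖ ≤ ‖a - b‖ + ‖a - o‖ := by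
          rw [show o - b = (a - b) - (a - o) by ring]
          exact norm_sub_le _ _
        have := hcol o b (by linarith) (hog.trans hbg.symm)
        rwa [one_mul] at this)
    rwa [Finset.card_univ, Fintype.card_fin] at this
  set D₁ := (A ×ˢ A).filter fun x => s x.1 ≤ s x.2 ∧ ‖x.1 - x.2‖ ≤ K * s x.1
  set D₂ := (A ×ˢ A).filter fun x => s x.2 ≤ s x.1 ∧ ‖x.2 - x.1‖ ≤ K * s x.2
  have h1 : D₁.card ≤ T * G * A.card := by
    refine Finset.card_le_mul_card_image_of_maps_to (f := Prod.fst) (t := A)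
      (fun x hx => (Finset.mem_product.1 (Finset.mem_filter.1 hx).1).1) _ fun a ha => ?_
    refine le_trans (Finset.card_le_card_of_injOn Prod.snd (fun x hx => ?_)
      fun x hx y hy hxy => ?_) (hfib a ha)
    · obtain ⟨hxD, rfl⟩ := Finset.mem_filter.1 hx
      obtain ⟨hxA, hxs⟩ := Finset.mem_filter.1 hxD
      exact Finset.mem_filter.2 ⟨(Finset.mem_product.1 hxA).2, hxs⟩
    · exact Prod.ext ((Finset.mem_filter.1 hx).2.trans (Finset.mem_filter.1 hy).2.symm) hxy
  have h2 : D₂.card ≤ T * G * A.card := by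
    refine Finset.card_le_mul_card_image_of_maps_to (f := Prod.snd) (t := A)
      (fun x hx => (Finset.mem_product.1 (Finset.mem_filter.1 hx).1).2) _ fun a ha => ?_
    refine le_trans (Finset.card_le_card_of_injOn Prod.fst (fun x hx => ?_)
      fun x hx y hy hxy => ?_) (hfib a ha)
    · obtain ⟨hxD, rfl⟩ := Finset.mem_filter.1 hx
      obtain ⟨hxA, hxs⟩ := Finset.mem_filter.1 hxD
      exact Finset.mem_filter.2 ⟨(Finset.mem_product.1 hxA).1, hxs⟩
    · exact Prod.ext hxy ((Finset.mem_filter.1 hx).2.trans (Finset.mem_filter.1 hy).2.symm)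
  have h3 : ((A ×ˢ A).filter fun x => ‖x.1 - x.2‖ ≤ K * min (s x.1) (s x.2)) ⊆ D₁ ∪ D₂ := by
    intro x hx
    obtain ⟨hx, hx'⟩ := Finset.mem_filter.1 hx
    rcases le_total (s x.1) (s x.2) with h | h
    · rw [min_eq_left h] at hx'
      exact Finset.mem_union_left _ (Finset.mem_filter.2 ⟨hx, h, hx'⟩)
    · rw [min_eq_right h, norm_sub_rev] at hx'
      exact Finset.mem_union_right _ (Finset.mem_filter.2 ⟨hx, h, hx'⟩)
  have h4 := (Finset.card_le_card h3).trans (Finset.card_union_le _ _)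
  calc _ ≤ T * G * A.card + T * G * A.card := by omega
    _ = _ := by ring

lemma exists_independent_set {ι : Type*} (E : ι → ι → Prop)
    [DecidablePred fun x : ι × ι => E x.1 x.2] (S : Finset ι) :
    ∃ Q ⊆ S, (∀ p ∈ Q, ∀ q ∈ Q, ¬ E p q) ∧
      S.card ≤ Q.card + ((S ×ˢ S).filter fun x => E x.1 x.2).card := by
  induction S using Finset.strongInduction with
  | H S ih =>
  by_cases h : ∀ p ∈ S, ∀ q ∈ S, ¬ E p q
  · exact ⟨S, subset_rfl, h, Nat.le_add_right _ _⟩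
  push Not at h
  obtain ⟨p, hp, q, hq, hpq⟩ := h
  obtain ⟨Q, hQ, hind, hcard⟩ := ih (S.erase p) (Finset.erase_ssubset hp)
  refine ⟨Q, hQ.trans (Finset.erase_subset _ _), hind, ?_⟩
  have h1 : ((S.erase p ×ˢ S.erase p).filter fun x => E x.1 x.2).card <
      ((S ×ˢ S).filter fun x => E x.1 x.2).card := by
    refine Finset.card_lt_card ((Finset.ssubset_iff_of_subset fun x hx => ?_).2
      ⟨(p, q), Finset.mem_filter.2 ⟨Finset.mem_product.2 ⟨hp, hq⟩, hpq⟩, fun hx => ?_⟩)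
    · obtain ⟨hx, hx'⟩ := Finset.mem_filter.1 hx
      obtain ⟨hx1, hx2⟩ := Finset.mem_product.1 hx
      exact Finset.mem_filter.2 ⟨Finset.mem_product.2
        ⟨Finset.mem_of_mem_erase hx1, Finset.mem_of_mem_erase hx2⟩, hx'⟩
    · exact Finset.ne_of_mem_erase (Finset.mem_product.1 (Finset.mem_filter.1 hx).1).1 rfl
  have h2 := Finset.card_erase_add_one hp
  omega

lemma exists_independent_set_of_degree_le {ι : Type*} (X : ι → ι → Prop)
    [∀ p, DecidablePred fun q => q ≠ p ∧ X p q]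
    (hsymm : ∀ p q, X p q → X q p) (l : ℕ) (S : Finset ι)
    (hdeg : ∀ p ∈ S, (S.filter fun q => q ≠ p ∧ X p q).card ≤ l) :
    ∃ Q ⊆ S, (∀ p ∈ Q, ∀ q ∈ Q, p ≠ q → ¬ X p q) ∧ S.card ≤ (l + 1) * Q.card := by
  induction S using Finset.strongInduction with
  | H S ih =>
  rcases S.eq_empty_or_nonempty with rfl | ⟨p, hp⟩
  · exact ⟨∅, subset_rfl, by simp, by simp⟩
  set S' := S.filter fun q => q ≠ p ∧ ¬ X p q with hS'
  have hsub : S' ⊆ S := Finset.filter_subset _ _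
  have hpS' : p ∉ S' := fun h => (Finset.mem_filter.1 h).2.1 rfl
  obtain ⟨Q, hQ, hind, hcard⟩ := ih S' ((Finset.ssubset_iff_of_subset hsub).2 ⟨p, hp, hpS'⟩)
    fun q hq => (Finset.card_le_card (Finset.filter_subset_filter _ hsub)).trans
      (hdeg q (hsub hq))
  have hpQ : p ∉ Q := fun h => hpS' (hQ h)
  have hXp : ∀ q ∈ Q, ¬ X p q := fun q hq => (Finset.mem_filter.1 (hQ hq)).2.2
  refine ⟨insert p Q, Finset.insert_subset hp (hQ.trans hsub), fun a ha b hb hab => ?_, ?_⟩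
  · rcases Finset.mem_insert.1 ha with rfl | haQ
    · rcases Finset.mem_insert.1 hb with rfl | hbQ
      · exact absurd rfl hab
      · exact hXp b hbQ
    · rcases Finset.mem_insert.1 hb with rfl | hbQ
      · exact fun h => hXp a haQ (hsymm _ _ h)
      · exact hind a haQ b hbQ hab
  · have hcov : S ⊆ insert p (S.filter fun q => q ≠ p ∧ X p q) ∪ S' := by
      intro q hq
      by_cases h1 : q = p
      · exact Finset.mem_union_left _ (Finset.mem_insert.2 (Or.inl h1))
      · by_cases h2 : X p q
        · exact Finset.mem_union_left _ (Finset.mem_insert_of_mem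
            (Finset.mem_filter.2 ⟨hq, h1, h2⟩))
        · exact Finset.mem_union_right _ (Finset.mem_filter.2 ⟨hq, h1, h2⟩)
    have h1 := (Finset.card_le_card hcov).trans (Finset.card_union_le _ _)
    have h2 := Finset.card_insert_le p (S.filter fun q => q ≠ p ∧ X p q)
    have h3 := hdeg p hp
    rw [Finset.card_insert_of_notMem hpQ, mul_add, mul_one]
    omega

lemma sum_map_card_filter {α β : Type*} (Γ : Multiset α) (D : Finset β) (R : α → β → Prop)
    [∀ γ, DecidablePred (R γ)] [∀ x, DecidablePred fun γ => R γ x] :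
    (Γ.map fun γ => (D.filter (R γ)).card).sum =
      ∑ x ∈ D, Multiset.card (Γ.filter fun γ => R γ x) := by
  induction Γ using Multiset.induction_on with
  | empty => simp
  | cons γ Γ ih =>
    rw [Multiset.map_cons, Multiset.sum_cons, ih, Finset.card_filter, ← Finset.sum_add_distrib]
    refine Finset.sum_congr rfl fun x _ => ?_
    by_cases h : R γ x
    · rw [Multiset.filter_cons_of_pos (p := fun γ => R γ x) _ h, Multiset.card_cons, if_pos h, add_comm]
    · rw [Multiset.filter_cons_of_neg (p := fun γ => R γ x) _ h, if_neg h, zero_add]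

lemma sum_map_le_of_forall_le {α : Type*} (Γ : Multiset α) (f g : α → ℕ) (n : ℕ)
    (h : ∀ γ ∈ Γ, f γ ≤ n + g γ) : (Γ.map f).sum ≤ Multiset.card Γ * n + (Γ.map g).sum := by
  refine (Multiset.sum_map_le_sum_map f (fun γ => n + g γ) h).trans ?_
  rw [Multiset.sum_map_add, Multiset.map_const', Multiset.sum_replicate, smul_eq_mul]

/-- `γ` is the zero set of a nonzero polynomial of degree at most `d` in each variable. -/
def IsCurve (d : ℕ) (γ : Set (ℂ × ℂ)) : Prop :=
  ∃ P : ℂ[X][Y], P ≠ 0 ∧ BiDegLE P d ∧ ∀ p : ℂ × ℂ, p ∈ γ ↔ P.evalEval p.1 p.2 = 0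

/-- The incidence bound with free parameters. -/
lemma incidences_le_of_carving (d lam mu : ℕ) : ∃ N C : ℕ, ∀ (A B : Finset ℂ)
    (S : Finset (ℂ × ℂ)) (Γ : Multiset (Set (ℂ × ℂ))) (T₁ T₂ : ℕ), 2 ≤ T₁ → 2 ≤ T₂ →
    S ⊆ A ×ˢ B → (∀ γ ∈ Γ, IsCurve d γ) → BddMult S Γ lam mu →
    ∃ n₁ n₂ : ℕ, n₁ * T₁ ≤ A.card + T₁ ∧ n₂ * T₂ ≤ B.card + T₂ ∧
    incidences S Γ ≤ Multiset.card Γ * (N * (n₁ + n₂)) +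
      C * ((T₁ * A.card) * (T₂ * B.card)) := by
  obtain ⟨K, N, hK, hN⟩ := card_le_of_nonClose d
  obtain ⟨C, hC⟩ := card_close_pairs_le K
  refine ⟨(lam + 1) * N, C * C * mu, fun A B S Γ T₁ T₂ hT₁ hT₂ hS hΓ hmult => ?_⟩
  obtain ⟨s₁, c₁, hA, hn₁, hsp₁⟩ := exists_carving hT₁ A
  obtain ⟨s₂, c₂, hB, hn₂, hsp₂⟩ := exists_carving hT₂ B
  refine ⟨(A.image c₁).card, (B.image c₂).card, hn₁, hn₂, ?_⟩
  set n := (A.image c₁).card + (B.image c₂).card with hn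
  set close : ℂ × ℂ → ℂ × ℂ → Prop := fun p q => ‖p.1 - q.1‖ ≤ K * min (s₁ p.1) (s₁ q.1) ∧
    ‖p.2 - q.2‖ ≤ K * min (s₂ p.2) (s₂ q.2) with hclose
  set heavy : ℂ × ℂ → ℂ × ℂ → Prop := fun p q =>
    mu < Multiset.card (Γ.filter fun γ => p ∈ γ ∧ q ∈ γ) with hheavy
  have hsymm : ∀ p q, heavy p q → heavy q p := by
    intro p q h
    simp only [hheavy] at h ⊢
    simpa only [and_comm] using h
  set E : ℂ × ℂ → ℂ × ℂ → Prop := fun p q => p ≠ q ∧ close p q ∧ ¬ heavy p q with hE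
  set D := (S ×ˢ S).filter fun x => E x.1 x.2 with hD
  have hcurve : ∀ γ ∈ Γ, (S.filter fun p => p ∈ γ).card ≤ (lam + 1) * N * n +
      (D.filter fun x => x.1 ∈ γ ∧ x.2 ∈ γ).card := by
    intro γ hγ
    obtain ⟨P, hP, hPd, hPγ⟩ := hΓ γ hγ
    set V := S.filter fun p => p ∈ γ
    have hVS : V ⊆ S := Finset.filter_subset _ _
    obtain ⟨Q, hQ, hQE, hQc⟩ := exists_independent_set E V
    obtain ⟨Q', hQ', hQX, hQc'⟩ := exists_independent_set_of_degree_le heavy hsymm lam Q (by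
      intro p hp
      refine le_trans (Finset.card_le_card fun q hq => ?_) (hmult.2 p (hVS (hQ hp)))
      obtain ⟨hq, hqp, hpq⟩ := Finset.mem_filter.1 hq
      exact Finset.mem_filter.2 ⟨Finset.mem_erase.2 ⟨hqp, hVS (hQ hq)⟩, hpq⟩)
    have hQV := hQ'.trans hQ
    have h1 : Q'.card ≤ N * n := by
      refine hN P Q' A B s₁ s₂ c₁ c₂ hP hPd hA hB ((hQV.trans hVS).trans hS) ?_
        fun p hp => (hPγ p).1 (Finset.mem_filter.1 (hQV hp)).2
      intro p hp q hq hpq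
      by_contra! hcl
      exact hQE p (hQ' hp) q (hQ' hq) ⟨hpq, hcl, hQX p hp q hq hpq⟩
    have h2 : ((V ×ˢ V).filter fun x => E x.1 x.2).card ≤
        (D.filter fun x => x.1 ∈ γ ∧ x.2 ∈ γ).card := by
      refine Finset.card_le_card fun x hx => ?_
      obtain ⟨hx, hx'⟩ := Finset.mem_filter.1 hx
      obtain ⟨hx1, hx2⟩ := Finset.mem_product.1 hx
      obtain ⟨h3, h4⟩ := Finset.mem_filter.1 hx1
      obtain ⟨h5, h6⟩ := Finset.mem_filter.1 hx2
      exact Finset.mem_filter.2 ⟨Finset.mem_filter.2 ⟨Finset.mem_product.2 ⟨h3, h5⟩, hx'⟩, h4, h6⟩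
    calc V.card ≤ Q.card + ((V ×ˢ V).filter fun x => E x.1 x.2).card := hQc
      _ ≤ (lam + 1) * (N * n) + (D.filter fun x => x.1 ∈ γ ∧ x.2 ∈ γ).card :=
        add_le_add (hQc'.trans (Nat.mul_le_mul_left _ h1)) h2
      _ = _ := by ring
  have hsum := sum_map_le_of_forall_le Γ _ _ _ hcurve
  rw [sum_map_card_filter Γ D fun γ x => x.1 ∈ γ ∧ x.2 ∈ γ] at hsum
  have hDmu : ∑ x ∈ D, Multiset.card (Γ.filter fun γ => x.1 ∈ γ ∧ x.2 ∈ γ) ≤ D.card * mu := by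
    refine (Finset.sum_le_card_nsmul _ _ mu fun x hx => ?_).trans (by rw [smul_eq_mul])
    exact not_lt.1 (Finset.mem_filter.1 hx).2.2.2
  have hDc : D.card ≤ (C * T₁ * A.card) * (C * T₂ * B.card) := by
    refine le_trans ?_ (Nat.mul_le_mul (hC T₁ A s₁ hA.1 hsp₁) (hC T₂ B s₂ hB.1 hsp₂))
    rw [← Finset.card_product]
    refine Finset.card_le_card_of_injOn (fun x => ((x.1.1, x.2.1), (x.1.2, x.2.2)))
      (fun x hx => ?_) fun x _ y _ hxy => ?_
    · obtain ⟨hx, -, ⟨hx1, hx2⟩, -⟩ := Finset.mem_filter.1 hx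
      obtain ⟨h1, h2⟩ := Finset.mem_product.1 hx
      have h1 := Finset.mem_product.1 (hS h1)
      have h2 := Finset.mem_product.1 (hS h2)
      exact Finset.mem_product.2 ⟨Finset.mem_filter.2 ⟨Finset.mem_product.2 ⟨h1.1, h2.1⟩, hx1⟩,
        Finset.mem_filter.2 ⟨Finset.mem_product.2 ⟨h1.2, h2.2⟩, hx2⟩⟩
    · simp only [Prod.mk.injEq] at hxy
      exact Prod.ext (Prod.ext hxy.1.1 hxy.2.1) (Prod.ext hxy.1.2 hxy.2.2)
  calc incidences S Γ ≤ Multiset.card Γ * ((lam + 1) * N * n) + D.card * mu :=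
        hsum.trans (Nat.add_le_add_left hDmu _)
    _ ≤ Multiset.card Γ * ((lam + 1) * N * n) +
        (C * T₁ * A.card) * (C * T₂ * B.card) * mu :=
        Nat.add_le_add_left (Nat.mul_le_mul_right _ hDc) _
    _ = _ := by ring

/-- Incidences counted along the fibres of a projection. -/
lemma incidences_le_of_fibers {d lam mu b : ℕ} {A : Finset ℂ} {S : Finset (ℂ × ℂ)}
    {Γ : Multiset (Set (ℂ × ℂ))} (f : ℂ × ℂ → ℂ) (hf : ∀ a, {p | f p = a}.Infinite)
    (hSA : ∀ p ∈ S, f p ∈ A) (hb : ∀ a ∈ A, (S.filter fun p => f p = a).card ≤ b)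
    (hΓ : ∀ γ ∈ Γ, ∀ a, {p | f p = a} ⊆ γ ∨ (S.filter fun p => p ∈ γ ∧ f p = a).card ≤ d)
    (hmult : BddMult S Γ lam mu) :
    incidences S Γ ≤ d * Multiset.card Γ * A.card + (lam + 1) * A.card * b := by
  have hcol : ∀ a, Multiset.card (Γ.filter fun γ => {p | f p = a} ⊆ γ) ≤ lam + 1 := by
    intro a
    set Γ' := Γ.filter fun γ => {p | f p = a} ⊆ γ with hΓ'
    rcases Multiset.empty_or_exists_mem Γ' with h | ⟨γ, hγ⟩
    · rw [h]; simp
    have hγΓ := (Multiset.mem_filter.1 hγ)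
    have h1 : Γ'.erase γ ≤ (Γ.erase γ).filter fun γ' =>
        (γ ∩ γ' : Set (ℂ × ℂ)).Infinite ∨ mu < (γ ∩ γ' : Set (ℂ × ℂ)).ncard := by
      rw [Multiset.le_filter]
      refine ⟨Multiset.erase_le_erase _ (Multiset.filter_le _ _), fun γ' hγ' => Or.inl ?_⟩
      have := (Multiset.mem_filter.1 (Multiset.mem_of_mem_erase hγ')).2
      exact (hf a).mono (Set.subset_inter hγΓ.2 this)
    have h2 := (Multiset.card_le_card h1).trans (hmult.1 γ hγΓ.1)
    rw [Multiset.card_erase_of_mem hγ, Nat.pred_eq_sub_one] at h2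
    omega
  have hcurve : ∀ γ ∈ Γ, (S.filter fun p => p ∈ γ).card ≤ d * A.card +
      b * (A.filter fun a => {p | f p = a} ⊆ γ).card := by
    intro γ hγ
    rw [Finset.card_eq_sum_card_fiberwise (f := f) (t := A)
      fun p hp => hSA p (Finset.mem_filter.1 hp).1]
    calc _ ≤ ∑ a ∈ A, (d + b * if {p | f p = a} ⊆ γ then 1 else 0) := by
          refine Finset.sum_le_sum fun a ha => ?_
          rw [Finset.filter_filter]
          split_ifs with h
          · refine le_trans (Finset.card_le_card fun p hp => ?_) ((hb a ha).trans (by omega))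
            obtain ⟨h1, h2⟩ := Finset.mem_filter.1 hp
            exact Finset.mem_filter.2 ⟨h1, h2.2⟩
          · exact ((hΓ γ hγ a).resolve_left h).trans (by omega)
      _ = _ := by
          rw [Finset.sum_add_distrib, Finset.sum_const, smul_eq_mul, ← Finset.mul_sum,
            Finset.card_filter, mul_comm d]
  have hsum := sum_map_le_of_forall_le Γ _ _ _ hcurve
  rw [Multiset.sum_map_mul_left, sum_map_card_filter Γ A fun γ a => {p | f p = a} ⊆ γ] at hsum
  have h1 : ∑ a ∈ A, Multiset.card (Γ.filter fun γ => {p | f p = a} ⊆ γ) ≤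
      A.card * (lam + 1) :=
    (Finset.sum_le_card_nsmul _ _ _ fun a _ => hcol a).trans (by rw [smul_eq_mul])
  calc incidences S Γ ≤ Multiset.card Γ * (d * A.card) + b * (A.card * (lam + 1)) :=
        hsum.trans (Nat.add_le_add_left (Nat.mul_le_mul_left _ h1) _)
    _ = _ := by ring

lemma biDegLE_sum {ι : Type*} (s : Finset ι) (f : ι → ℂ[X][Y]) {d : ℕ}
    (h : ∀ i ∈ s, BiDegLE (f i) d) : BiDegLE (∑ i ∈ s, f i) d := by
  induction s using Finset.induction_on with
  | empty => intro i j hij; simp at hij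
  | insert i s hi ih =>
    rw [Finset.sum_insert hi]
    exact (h i (Finset.mem_insert_self _ _)).add
      (ih fun j hj => h j (Finset.mem_insert_of_mem hj))

lemma biDegLE_equivMvPolynomial_symm {g : MvPolynomial (Fin 2) ℂ} {d : ℕ}
    (hg : g.totalDegree ≤ d) :
    BiDegLE ((Polynomial.Bivariate.equivMvPolynomial ℂ).symm g) d := by
  rw [g.as_sum, map_sum]
  refine biDegLE_sum _ _ fun m hm => ?_
  have hm1 : m 0 + m 1 ≤ d := by
    have := (MvPolynomial.le_totalDegree hm).trans hg
    rwa [Finsupp.sum_fintype _ _ (by simp), Fin.sum_univ_two] at this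
  rw [MvPolynomial.monomial_eq, Finsupp.prod_fintype _ _ (by simp), Fin.prod_univ_two]
  simp only [map_mul, map_pow, Polynomial.Bivariate.equivMvPolynomial_symm_C,
    Polynomial.Bivariate.equivMvPolynomial_symm_X_0,
    Polynomial.Bivariate.equivMvPolynomial_symm_X_1]
  intro i j hij
  rw [← mul_assoc, ← Polynomial.C_pow, ← Polynomial.C_mul, Polynomial.coeff_C_mul_X_pow] at hij
  split_ifs at hij with h
  · rw [Polynomial.coeff_C_mul_X_pow] at hij
    split_ifs at hij with h'
    · omega
    · exact absurd rfl hij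
  · simp at hij

lemma evalEval_equivMvPolynomial_symm (g : MvPolynomial (Fin 2) ℂ) (x y : ℂ) :
    ((Polynomial.Bivariate.equivMvPolynomial ℂ).symm g).evalEval x y =
      MvPolynomial.eval ![x, y] g := by
  induction g using MvPolynomial.induction_on with
  | C a => simp
  | add p q hp hq => rw [map_add, Polynomial.evalEval_add, hp, hq, map_add]
  | mul_X p i hp =>
    rw [map_mul, Polynomial.evalEval_mul, hp, map_mul]
    fin_cases i <;> simp [Polynomial.evalEval]

lemma isCurve_of_totalDegree_le {g : MvPolynomial (Fin 2) ℂ} {d : ℕ} (hg : g ≠ 0)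
    (hd : g.totalDegree ≤ d) : IsCurve d {p | ev2 g p = 0} :=
  ⟨(Polynomial.Bivariate.equivMvPolynomial ℂ).symm g,
    (map_ne_zero_iff _ (Polynomial.Bivariate.equivMvPolynomial ℂ).symm.injective).2 hg,
    biDegLE_equivMvPolynomial_symm hd,
    fun p => by rw [evalEval_equivMvPolynomial_symm]; rfl⟩

lemma evalEval_eq_eval_map (P : ℂ[X][Y]) (x y : ℂ) :
    P.evalEval x y = (P.map (Polynomial.evalRingHom x)).eval y := by
  rw [Polynomial.map_evalRingHom_eval]

/-- A curve either contains a given vertical line or meets it in few points. -/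
lemma IsCurve.vertical {d : ℕ} {γ : Set (ℂ × ℂ)} (h : IsCurve d γ) (S : Finset (ℂ × ℂ)) (a : ℂ) :
    {p : ℂ × ℂ | p.1 = a} ⊆ γ ∨ (S.filter fun p => p ∈ γ ∧ p.1 = a).card ≤ d := by
  obtain ⟨P, -, hPd, hPγ⟩ := h
  by_cases h0 : P.map (Polynomial.evalRingHom a) = 0
  · left
    rintro ⟨x, y⟩ rfl
    rw [hPγ, evalEval_eq_eval_map, h0, Polynomial.eval_zero]
  right
  refine le_trans (b := (P.map (Polynomial.evalRingHom a)).roots.toFinset.card) ?_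
    ((Multiset.toFinset_card_le _).trans ((Polynomial.card_roots' _).trans
      (Polynomial.natDegree_map_le.trans hPd.natDegree_le)))
  refine Finset.card_le_card_of_injOn Prod.snd (fun p hp => ?_) fun p hp q hq hpq => ?_
  · obtain ⟨-, h1, h2⟩ := Finset.mem_filter.1 hp
    rw [hPγ, evalEval_eq_eval_map, h2] at h1
    exact Multiset.mem_toFinset.2 ((Polynomial.mem_roots h0).2 h1)
  · exact Prod.ext ((Finset.mem_filter.1 hp).2.2.trans (Finset.mem_filter.1 hq).2.2.symm) hpq

lemma IsCurve.preimage_swap {d : ℕ} {γ : Set (ℂ × ℂ)} (h : IsCurve d γ) :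
    IsCurve d (Prod.swap ⁻¹' γ) := by
  obtain ⟨P, hP, hPd, hPγ⟩ := h
  exact ⟨swap P, (map_ne_zero_iff _ (swap (R := ℂ)).injective).2 hP, hPd.swap,
    fun p => by rw [evalEval_swap]; exact hPγ _⟩

/-- A curve either contains a given horizontal line or meets it in few points. -/
lemma IsCurve.horizontal {d : ℕ} {γ : Set (ℂ × ℂ)} (h : IsCurve d γ) (S : Finset (ℂ × ℂ))
    (a : ℂ) :
    {p : ℂ × ℂ | p.2 = a} ⊆ γ ∨ (S.filter fun p => p ∈ γ ∧ p.2 = a).card ≤ d := by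
  refine (h.preimage_swap.vertical (S.image Prod.swap) a).imp (fun h p hp => ?_) fun h => ?_
  · exact h (show p.swap ∈ {p : ℂ × ℂ | p.1 = a} from hp)
  · refine (Finset.card_le_card_of_injOn Prod.swap (fun p hp => ?_)
      Prod.swap_injective.injOn).trans h
    obtain ⟨h1, h2, h3⟩ := Finset.mem_filter.1 hp
    exact Finset.mem_filter.2 ⟨Finset.mem_image_of_mem _ h1, h2, h3⟩

lemma incidences_le_of_vertical {d lam mu : ℕ} {A B : Finset ℂ} {S : Finset (ℂ × ℂ)}
    {Γ : Multiset (Set (ℂ × ℂ))} (hS : S ⊆ A ×ˢ B) (hΓ : ∀ γ ∈ Γ, IsCurve d γ)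
    (hmult : BddMult S Γ lam mu) :
    incidences S Γ ≤ d * Multiset.card Γ * A.card + (lam + 1) * A.card * B.card := by
  refine incidences_le_of_fibers Prod.fst (fun a => ?_)
    (fun p hp => (Finset.mem_product.1 (hS hp)).1) (fun a _ => ?_)
    (fun γ hγ a => (hΓ γ hγ).vertical S a) hmult
  · exact Set.infinite_of_injective_forall_mem (Prod.mk_right_injective a) fun _ => rfl
  · refine Finset.card_le_card_of_injOn Prod.snd
      (fun p hp => (Finset.mem_product.1 (hS (Finset.mem_filter.1 hp).1)).2) fun p hp q hq hpq => ?_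
    exact Prod.ext ((Finset.mem_filter.1 hp).2.trans (Finset.mem_filter.1 hq).2.symm) hpq

lemma incidences_le_of_horizontal {d lam mu : ℕ} {A B : Finset ℂ} {S : Finset (ℂ × ℂ)}
    {Γ : Multiset (Set (ℂ × ℂ))} (hS : S ⊆ A ×ˢ B) (hΓ : ∀ γ ∈ Γ, IsCurve d γ)
    (hmult : BddMult S Γ lam mu) :
    incidences S Γ ≤ d * Multiset.card Γ * B.card + (lam + 1) * B.card * A.card := by
  refine incidences_le_of_fibers Prod.snd (fun a => ?_)
    (fun p hp => (Finset.mem_product.1 (hS hp)).2) (fun a _ => ?_)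
    (fun γ hγ a => (hΓ γ hγ).horizontal S a) hmult
  · exact Set.infinite_of_injective_forall_mem (Prod.mk_left_injective a) fun _ => rfl
  · refine Finset.card_le_card_of_injOn Prod.fst
      (fun p hp => (Finset.mem_product.1 (hS (Finset.mem_filter.1 hp).1)).1) fun p hp q hq hpq => ?_
    exact Prod.ext hpq ((Finset.mem_filter.1 hp).2.trans (Finset.mem_filter.1 hq).2.symm)

/-- Rounding `a / κ` down to a natural number at least `2`. -/
lemma exists_nat_scale {a : ℕ} {κ : ℝ} (hκ : 1 ≤ κ) (h : κ ≤ a / 2) :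
    ∃ T : ℕ, 2 ≤ T ∧ T * κ ≤ a ∧ ∀ n : ℕ, n * T ≤ a + T → (n : ℝ) ≤ 3 * κ := by
  have hκ0 : 0 < κ := by linarith
  have h2 : 2 ≤ a / κ := by rw [le_div_iff₀ hκ0]; linarith
  have hT2 : 2 ≤ ⌊a / κ⌋₊ := Nat.le_floor (by exact_mod_cast h2)
  refine ⟨⌊a / κ⌋₊, hT2, ?_, fun n hn => ?_⟩
  · rw [← le_div_iff₀ hκ0]
    exact Nat.floor_le (by linarith)
  · have hT : (2 : ℝ) ≤ ⌊a / κ⌋₊ := by exact_mod_cast hT2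
    have h3 := Nat.lt_floor_add_one (a / κ)
    rw [div_lt_iff₀ hκ0] at h3
    have hn' : (n : ℝ) * ⌊a / κ⌋₊ ≤ a + ⌊a / κ⌋₊ := by exact_mod_cast hn
    set T : ℝ := (⌊a / κ⌋₊ : ℝ)
    by_contra! hlt
    nlinarith [mul_lt_mul_of_pos_right hlt (by linarith : 0 < T)]

lemma incidences_le_real (d lam mu : ℕ) : ∃ c : ℝ, 0 < c ∧ ∀ (A B : Finset ℂ)
    (S : Finset (ℂ × ℂ)) (Γ : Multiset (Set (ℂ × ℂ))), S ⊆ A ×ˢ B →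
    (∀ γ ∈ Γ, IsCurve d γ) → BddMult S Γ lam mu → ∀ κ : ℝ, 0 ≤ κ →
    κ ^ 3 * Multiset.card Γ = (A.card * B.card : ℝ) ^ 2 →
    (incidences S Γ : ℝ) ≤ c * (κ * Multiset.card Γ + A.card * B.card + Multiset.card Γ) := by
  obtain ⟨N, C, hNC⟩ := incidences_le_of_carving d lam mu
  refine ⟨10 * N + 5 * C + 2 * d + lam + 1, by positivity,
    fun A B S Γ hS hΓ hmult κ hκ hκ3 => ?_⟩
  rcases S.eq_empty_or_nonempty with rfl | ⟨p, hp⟩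
  · have : incidences ∅ Γ = 0 := by simp [incidences]
    rw [this, Nat.cast_zero]
    positivity
  have hpAB := Finset.mem_product.1 (hS hp)
  have ha : 1 ≤ A.card := Finset.card_pos.2 ⟨_, hpAB.1⟩
  have hb : 1 ≤ B.card := Finset.card_pos.2 ⟨_, hpAB.2⟩
  have hV := incidences_le_of_vertical hS hΓ hmult
  have hH := incidences_le_of_horizontal hS hΓ hmult
  have hcarve := fun T₁ T₂ h₁ h₂ => hNC A B S Γ T₁ T₂ h₁ h₂ hS hΓ hmult
  clear hNC
  generalize incidences S Γ = I at *
  generalize A.card = a at *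
  generalize B.card = b at *
  generalize Multiset.card Γ = m at *
  have hV' : (I : ℝ) ≤ d * m * a + (lam + 1) * a * b := by exact_mod_cast hV
  have hH' : (I : ℝ) ≤ d * m * b + (lam + 1) * b * a := by exact_mod_cast hH
  have hm0 : (0 : ℝ) ≤ m := Nat.cast_nonneg m
  have hN0 : (0 : ℝ) ≤ N := Nat.cast_nonneg N
  have hC0 : (0 : ℝ) ≤ C := Nat.cast_nonneg C
  have hd0 : (0 : ℝ) ≤ d := Nat.cast_nonneg d
  have hl0 : (0 : ℝ) ≤ lam := Nat.cast_nonneg lam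
  have ha' : (1 : ℝ) ≤ a := by exact_mod_cast ha
  have hb' : (1 : ℝ) ≤ b := by exact_mod_cast hb
  have hκm : 0 ≤ κ * m := mul_nonneg hκ hm0
  have hab0 : (0 : ℝ) ≤ a * b := by positivity
  have hbound : ∀ x y z : ℝ, 0 ≤ x → x ≤ 10 * N + 5 * C + 2 * d + lam + 1 → 0 ≤ y →
      y ≤ 10 * N + 5 * C + 2 * d + lam + 1 → 0 ≤ z → z ≤ 10 * N + 5 * C + 2 * d + lam + 1 →
      x * (κ * m) + y * (a * b) + z * m ≤
        (10 * N + 5 * C + 2 * d + lam + 1) * (κ * m + a * b + m) := by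
    intro x y z _ hx _ hy _ hz
    rw [mul_add, mul_add]
    gcongr
  rcases lt_or_ge κ 1 with h1 | h1
  · obtain ⟨n₁, n₂, hn₁, hn₂, hI⟩ := hcarve (2 * a) (2 * b) (by omega) (by omega)
    have hn₁' : n₁ ≤ 1 := by
      by_contra! h
      nlinarith
    have hn₂' : n₂ ≤ 1 := by
      by_contra! h
      nlinarith
    have hI' : (I : ℝ) ≤ m * (N * (n₁ + n₂)) + C * ((2 * a * a) * (2 * b * b)) := by
      exact_mod_cast hI
    have hn : (n₁ : ℝ) + n₂ ≤ 2 := by exact_mod_cast (by omega : n₁ + n₂ ≤ 2)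
    have h2 : (a * b : ℝ) ^ 2 ≤ m := by
      rw [← hκ3]
      exact mul_le_of_le_one_left hm0 (pow_le_one₀ hκ h1.le)
    refine le_trans ?_ (hbound 0 0 (2 * N + 4 * C) le_rfl (by positivity) le_rfl (by positivity)
      (by positivity) (by linarith))
    calc (I : ℝ) ≤ m * (N * (n₁ + n₂)) + C * (4 * (a * b) ^ 2) := by
          refine hI'.trans (le_of_eq ?_); ring
      _ ≤ m * (N * 2) + C * (4 * m) := by gcongr
      _ = _ := by ring
  rcases lt_or_ge (a / 2 : ℝ) κ with h2 | h2
  · refine le_trans ?_ (hbound (2 * d) (lam + 1) 0 (by positivity) (by linarith) (by positivity)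
      (by linarith) le_rfl (by positivity))
    have : d * m * a ≤ 2 * d * (κ * m) := by
      calc (d * m * a : ℝ) ≤ d * m * (2 * κ) := by gcongr; linarith
        _ = _ := by ring
    linarith
  rcases lt_or_ge (b / 2 : ℝ) κ with h3 | h3
  · refine le_trans ?_ (hbound (2 * d) (lam + 1) 0 (by positivity) (by linarith) (by positivity)
      (by linarith) le_rfl (by positivity))
    have : d * m * b ≤ 2 * d * (κ * m) := by
      calc (d * m * b : ℝ) ≤ d * m * (2 * κ) := by gcongr; linarith
        _ = _ := by ring
    linarith
  obtain ⟨T₁, hT₁, hT₁a, hn₁⟩ := exists_nat_scale h1 h2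
  obtain ⟨T₂, hT₂, hT₂b, hn₂⟩ := exists_nat_scale h1 h3
  obtain ⟨n₁, n₂, h4, h5, hI⟩ := hcarve T₁ T₂ hT₁ hT₂
  have hI' : (I : ℝ) ≤ m * (N * (n₁ + n₂)) + C * ((T₁ * a) * (T₂ * b)) := by exact_mod_cast hI
  have h6 := hn₁ n₁ h4
  have h7 := hn₂ n₂ h5
  have h8 : ((T₁ * a) * (T₂ * b) : ℝ) ≤ κ * m := by
    have hκ2 : 0 < κ ^ 2 := by positivity
    refine le_of_mul_le_mul_right ?_ hκ2
    calc ((T₁ * a) * (T₂ * b) * κ ^ 2 : ℝ) = (T₁ * κ) * (T₂ * κ) * (a * b) := by ring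
      _ ≤ a * b * (a * b) := by gcongr
      _ = κ ^ 3 * m := by rw [hκ3]; ring
      _ = _ := by ring
  refine le_trans ?_ (hbound (6 * N + C) 0 0 (by positivity) (by linarith) le_rfl (by positivity)
    le_rfl (by positivity))
  calc (I : ℝ) ≤ m * (N * (3 * κ + 3 * κ)) + C * (κ * m) := by
        refine hI'.trans ?_
        gcongr
    _ = _ := by ring

end

/-- **Proposition 2.6** (incidence bound, after Solymosi–De Zeeuw). If `Π ⊆ A₁×A₂` and `Γ`
is a finite multiset of plane algebraic curves of degree at most `δ` such that `(Π,Γ)` has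
`(λ,μ)`-bounded multiplicity, then
`I(Π,Γ) ≤ c·(|A₁|^{2/3}|A₂|^{2/3}|Γ|^{2/3} + |A₁||A₂| + |Γ|)`,
with `c` depending only (polynomially) on `δ`, `λ`, `μ`. -/
theorem incidence_bound (δ lam mu : ℕ) :
    ∃ c : ℝ, 0 < c ∧
    ∀ (A₁ A₂ : Finset ℂ) (Pi : Finset (ℂ × ℂ)) (Γ : Multiset (Set (ℂ × ℂ))),
      Pi ⊆ A₁ ×ˢ A₂ →
      (∀ γ ∈ Γ, ∃ g : MvPolynomial (Fin 2) ℂ, g ≠ 0 ∧ g.totalDegree ≤ δ ∧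
        γ = {p : ℂ × ℂ | ev2 g p = 0}) →
      BddMult Pi Γ lam mu →
      (incidences Pi Γ : ℝ) ≤
        c * ((A₁.card : ℝ) ^ ((2:ℝ)/3) * (A₂.card : ℝ) ^ ((2:ℝ)/3) *
              (Multiset.card Γ : ℝ) ^ ((2:ℝ)/3)
            + (A₁.card : ℝ) * A₂.card + (Multiset.card Γ : ℝ)) := by
  obtain ⟨c, hc, h⟩ := incidences_le_real δ lam mu
  refine ⟨c, hc, fun A₁ A₂ Pi Γ hPi hΓ hmult => ?_⟩
  have hcurve : ∀ γ ∈ Γ, IsCurve δ γ := by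
    intro γ hγ
    obtain ⟨g, hg, hd, rfl⟩ := hΓ γ hγ
    exact isCurve_of_totalDegree_le hg hd
  rcases eq_or_ne Γ 0 with rfl | hΓ0
  · have : incidences Pi 0 = 0 := rfl
    rw [this, Nat.cast_zero]
    positivity
  have hm : (0 : ℝ) < Multiset.card Γ := by exact_mod_cast Multiset.card_pos.2 hΓ0
  set X : ℝ := (A₁.card : ℝ) ^ ((2:ℝ)/3) * (A₂.card : ℝ) ^ ((2:ℝ)/3) *
    (Multiset.card Γ : ℝ) ^ ((2:ℝ)/3) with hX
  have hX3 : X ^ 3 = ((A₁.card : ℝ) * A₂.card * Multiset.card Γ) ^ 2 := by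
    have hpow : ∀ x : ℝ, 0 ≤ x → (x ^ ((2:ℝ)/3)) ^ 3 = x ^ 2 := by
      intro x hx
      rw [← Real.rpow_natCast, ← Real.rpow_mul hx, ← Real.rpow_natCast x 2]
      norm_num
    rw [hX, mul_pow, mul_pow, hpow _ (Nat.cast_nonneg _), hpow _ (Nat.cast_nonneg _),
      hpow _ (Nat.cast_nonneg _)]
    ring
  have hκ := h A₁ A₂ Pi Γ hPi hcurve hmult (X / Multiset.card Γ) (by positivity) (by
    rw [div_pow, hX3]
    field_simp)
  rwa [div_mul_cancel₀ _ hm.ne'] at hκ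
end
end

section
/- Let F ∈ ℂ[x,y,s,t] be an irreducible polynomial of total degree δ such that none of F_x, F_y, F_s, F_t is identically zero. Define V := {(x,y,x',y',s,t) ∈ ℂ⁶ : F(x,y,s,t) = 0, F(x',y',s,t) = 0}, G := F_s(x,y,s,t)·F_t(x',y',s,t) − F_s(x',y',s,t)·F_t(x,y,s,t), W := V ∩ Z(G), V₀ := ℂ⁴×𝒯, and let W̃ be the union of the irreducible components of W not contained in V₀. Assume W̃ has dimension 4. Then there exists an algebraic subvariety Z₀ ⊆ Z(F) of dimension at most 2 such that for every (x,y,s,t) ∈ Z(F)\Z₀ there exist x', y' ∈ ℂ such that (a) (x,y,x',y',s,t) is a regular (smooth) point of W̃, and (b) none of the partial derivatives F_x, F_y, F_s, F_t vanishes at (x,y,s,t) or at (x',y',s,t). -/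
open MvPolynomial

noncomputable section

def ev4 (F : MvPolynomial (Fin 4) ℂ) (x y s t : ℂ) : ℂ := eval ![x, y, s, t] F

def TT (F : MvPolynomial (Fin 4) ℂ) : Set (ℂ × ℂ) :=
  {q : ℂ × ℂ | ∀ x y : ℂ, ev4 F x y q.1 q.2 = 0}

def zeroSetOf {n : ℕ} (I : Set (MvPolynomial (Fin n) ℂ)) : Set (Fin n → ℂ) :=
  {p | ∀ f ∈ I, eval p f = 0}

def IsAlgSet {n : ℕ} (S : Set (Fin n → ℂ)) : Prop :=
  ∃ I : Set (MvPolynomial (Fin n) ℂ), S = zeroSetOf I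

def IsIrredAlgSet {n : ℕ} (S : Set (Fin n → ℂ)) : Prop :=
  IsAlgSet S ∧ S.Nonempty ∧
    ∀ S₁ S₂ : Set (Fin n → ℂ), IsAlgSet S₁ → IsAlgSet S₂ → S = S₁ ∪ S₂ → S = S₁ ∨ S = S₂

def algDimLE {n : ℕ} (S : Set (Fin n → ℂ)) (d : ℕ) : Prop :=
  ∀ Z : Fin (d + 2) → Set (Fin n → ℂ),
    (∀ i, IsIrredAlgSet (Z i) ∧ Z i ⊆ S) → ¬ StrictMono Z

def algDimGE {n : ℕ} (S : Set (Fin n → ℂ)) (d : ℕ) : Prop :=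
  ∃ Z : Fin (d + 1) → Set (Fin n → ℂ),
    (∀ i, IsIrredAlgSet (Z i) ∧ Z i ⊆ S) ∧ StrictMono Z

/-- `S` is an irreducible component of `W`: a maximal irreducible algebraic subset of `W`. -/
def IsComponentOf {n : ℕ} (S W : Set (Fin n → ℂ)) : Prop :=
  IsIrredAlgSet S ∧ S ⊆ W ∧
    ∀ S' : Set (Fin n → ℂ), IsIrredAlgSet S' → S' ⊆ W → S ⊆ S' → S = S'

/-- The variety `V ⊂ ℂ⁶`, with coordinates `(x, y, x', y', s, t)`. -/
def Vvar (F : MvPolynomial (Fin 4) ℂ) : Set (Fin 6 → ℂ) :=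
  {w | eval ![w 0, w 1, w 4, w 5] F = 0 ∧ eval ![w 2, w 3, w 4, w 5] F = 0}

/-- The value of `G = F_s(x,y,s,t)·F_t(x',y',s,t) − F_s(x',y',s,t)·F_t(x,y,s,t)`. -/
def Gval (F : MvPolynomial (Fin 4) ℂ) (w : Fin 6 → ℂ) : ℂ :=
  eval ![w 0, w 1, w 4, w 5] (pderiv 2 F) * eval ![w 2, w 3, w 4, w 5] (pderiv 3 F) -
    eval ![w 2, w 3, w 4, w 5] (pderiv 2 F) * eval ![w 0, w 1, w 4, w 5] (pderiv 3 F)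

/-- `W = V ∩ Z(G)`. -/
def Wvar (F : MvPolynomial (Fin 4) ℂ) : Set (Fin 6 → ℂ) :=
  Vvar F ∩ {w | Gval F w = 0}

/-- `V₀ = ℂ⁴ × 𝒯`. -/
def V0 (F : MvPolynomial (Fin 4) ℂ) : Set (Fin 6 → ℂ) :=
  {w | (w 4, w 5) ∈ TT F}

/-- `W̃`: the union of the irreducible components of `W` that are not contained in `V₀`. -/
def Wtilde (F : MvPolynomial (Fin 4) ℂ) : Set (Fin 6 → ℂ) :=
  ⋃₀ {S | IsComponentOf S (Wvar F) ∧ ¬ S ⊆ V0 F}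

/-- The Zariski tangent vectors to `X ⊆ ℂⁿ` at `w`: vectors annihilated by the differential
at `w` of every polynomial vanishing on `X`. -/
def TangentVecs {n : ℕ} (X : Set (Fin n → ℂ)) (w : Fin n → ℂ) : Set (Fin n → ℂ) :=
  {u | ∀ f : MvPolynomial (Fin n) ℂ, (∀ z ∈ X, eval z f = 0) →
    ∑ i, u i * eval w (pderiv i f) = 0}

/-- The Zariski tangent space of `X` at `w` has dimension at most `d`. -/
def TangentDimLE {n : ℕ} (X : Set (Fin n → ℂ)) (w : Fin n → ℂ) (d : ℕ) : Prop :=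
  ∀ v : Fin (d + 1) → (Fin n → ℂ), (∀ i, v i ∈ TangentVecs X w) → ¬ LinearIndependent ℂ v

/-- The local dimension of `X` at `w` is at least `d`: there is a strictly increasing chain
of `d+1` irreducible algebraic subsets of `X` whose smallest member contains `w`. -/
def LocalDimGE {n : ℕ} (X : Set (Fin n → ℂ)) (w : Fin n → ℂ) (d : ℕ) : Prop :=
  ∃ Z : Fin (d + 1) → Set (Fin n → ℂ),
    (∀ i, IsIrredAlgSet (Z i) ∧ Z i ⊆ X) ∧ StrictMono Z ∧ w ∈ Z 0

/-- `w` is a regular (smooth) point of `X`: the dimension of the Zariski tangent space of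
`X` at `w` equals the local dimension of `X` at `w`. -/
def IsRegularPt {n : ℕ} (X : Set (Fin n → ℂ)) (w : Fin n → ℂ) : Prop :=
  w ∈ X ∧ ∃ d : ℕ, LocalDimGE X w d ∧ ¬ LocalDimGE X w (d + 1) ∧ TangentDimLE X w d

theorem MvPolynomial.height_eq_of_isMaximal {k : Type*} [Field k] (n : ℕ)
    (M : Ideal (MvPolynomial (Fin n) k)) [hM : M.IsMaximal] : M.height = n := by
  induction n with
  | zero =>
    have : M = ⊥ := by
      let e := MvPolynomial.isEmptyRingEquiv k (Fin 0)
      have := (MulEquiv.isField (Field.toIsField k) e.toMulEquiv)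
      exact (Ring.isField_iff_maximal_bot.mp this).eq_of_le hM.ne_top bot_le |>.symm
    simp [this]
  | succ n ih =>
    let e : MvPolynomial (Fin (n + 1)) k ≃+* Polynomial (MvPolynomial (Fin n) k) :=
      (finSuccEquiv k n).toRingEquiv
    have : (M.map e).IsMaximal := Ideal.map_isMaximal_of_equiv e
    have hover : (M.map e).LiesOver ((M.map e).under (MvPolynomial (Fin n) k)) := ⟨rfl⟩
    have h2 : ((M.map e).under (MvPolynomial (Fin n) k)).IsMaximal :=
      Polynomial.isMaximal_comap_C_of_isJacobsonRing _
    rw [← e.height_map, Polynomial.height_eq_height_add_one ((M.map e).under _) (M.map e), ih]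
    simp

theorem exists_trdeg_eq_and_le_height (k A : Type*) [Field k] [CommRing A] [IsDomain A]
    [Algebra k A] [Algebra.FiniteType k A] :
    ∃ s : ℕ, Algebra.trdeg k A = s ∧ ringKrullDim A ≤ s ∧
      ∀ m : Ideal A, m.IsMaximal → (s : ℕ∞) ≤ m.height := by
  obtain ⟨s, g, hinj, hint⟩ := exists_integral_inj_algHom_of_fg k A
  algebraize [g.toRingHom]
  have : FaithfulSMul (MvPolynomial (Fin s) k) A :=
    (faithfulSMul_iff_algebraMap_injective _ _).mpr hinj
  have : Algebra.IsIntegral (MvPolynomial (Fin s) k) A := ⟨hint⟩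
  have : IsScalarTower k (MvPolynomial (Fin s) k) A := .of_algHom g
  have : IsNoetherianRing A := Algebra.FiniteType.isNoetherianRing k A
  refine ⟨s, ?_, ?_, fun m hm => ?_⟩
  · have := lift_trdeg_add_eq k (MvPolynomial (Fin s) k) A
    rw [trdeg_eq_zero (R := MvPolynomial (Fin s) k), MvPolynomial.trdeg_of_isDomain] at this
    simpa [eq_comm] using this
  · have h1 : ringKrullDim A ≤ ringKrullDim (MvPolynomial (Fin s) k) :=
      Order.krullDim_le_of_strictMono (PrimeSpectrum.comap (algebraMap (MvPolynomial (Fin s) k) A))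
        fun a b hab => Ideal.IsIntegral.comap_lt_comap (show a.asIdeal < b.asIdeal from hab)
    simpa [MvPolynomial.ringKrullDim_of_isNoetherianRing] using h1
  · have h1 : (m.under (MvPolynomial (Fin s) k)).IsMaximal :=
      Ideal.isMaximal_comap_of_isIntegral_of_isMaximal m
    rw [Ideal.height_eq_height_add_of_liesOver_of_hasGoingDown (m.under (MvPolynomial (Fin s) k)),
      MvPolynomial.height_eq_of_isMaximal]
    exact le_self_add

theorem trdeg_le_one_of_adjoin_pair {B A : Type*} [CommRing B] [IsDomain B] [CommRing A]
    [IsDomain A] [Algebra B A] [FaithfulSMul B A] (x y : A)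
    (hgen : Algebra.adjoin B {x, y} = ⊤) (p : MvPolynomial (Fin 2) B) (hp : p ≠ 0)
    (hxy : aeval ![x, y] p = 0) : Algebra.trdeg B A ≤ 1 := by
  have : Algebra.IsAlgebraic (Algebra.adjoin B {x, y}) A := by
    refine ⟨fun a => ?_⟩
    exact isAlgebraic_algebraMap (⟨a, hgen ▸ trivial⟩ : Algebra.adjoin B {x, y})
  obtain ⟨t, hts, ht⟩ := exists_isTranscendenceBasis_subset (R := B) ({x, y} : Set A)
  rw [← ht.cardinalMk_eq_trdeg]
  by_contra hlt
  rw [not_le, Cardinal.one_lt_iff_nontrivial, Set.nontrivial_coe_sort] at hlt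
  obtain ⟨a, ha, b, hb, hab⟩ := hlt
  have hx : x ∈ t ∧ y ∈ t ∧ x ≠ y := by
    have ha' := hts ha
    have hb' := hts hb
    simp only [Set.mem_insert_iff, Set.mem_singleton_iff] at ha' hb'
    rcases ha' with rfl | rfl <;> rcases hb' with rfl | rfl <;> simp_all
    exact fun h => hab h.symm
  have hind : AlgebraicIndependent B ![x, y] := by
    convert ht.1.comp ![⟨x, hx.1⟩, ⟨y, hx.2.1⟩] ?_ using 1
    · ext i; fin_cases i <;> rfl
    · intro i j hij
      fin_cases i <;> fin_cases j <;> simp_all [hx.2.2.symm]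
  exact hp (hind.eq_zero_of_aeval_eq_zero p hxy)

theorem ringKrullDim_le_of_surjective_of_not_dvd {n : ℕ} {k R : Type*} [Field k] [CommRing R]
    {F g : MvPolynomial (Fin (n + 2)) k} (hF : Prime F) (hg : ¬ F ∣ g)
    (f : MvPolynomial (Fin (n + 2)) k →+* R) (hf : Function.Surjective f)
    (hfF : f F = 0) (hfg : f g = 0) : ringKrullDim R ≤ n := by
  have : (Ideal.span {F}).IsPrime := (Ideal.span_singleton_prime hF.ne_zero).mpr hF
  have hker : ∀ a ∈ Ideal.span {F}, f a = 0 := fun a ha => by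
    obtain ⟨c, rfl⟩ := Ideal.mem_span_singleton.mp ha
    simp [hfF]
  have h1 := ringKrullDim_succ_le_of_surjective (Ideal.Quotient.lift _ f hker)
    (Ideal.Quotient.lift_surjective_of_surjective _ hker hf) (r := Ideal.Quotient.mk _ g)
    (mem_nonZeroDivisors_of_ne_zero
      (by rwa [Ne, Ideal.Quotient.eq_zero_iff_mem, Ideal.mem_span_singleton])) (by simpa)
  have h2 := ringKrullDim_quotient_succ_le_of_nonZeroDivisor
    (mem_nonZeroDivisors_of_ne_zero hF.ne_zero)
  rw [MvPolynomial.ringKrullDim_of_isNoetherianRing] at h2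
  have h3 : ringKrullDim R + 1 + 1 ≤ (n : WithBot ℕ∞) + 1 + 1 := by
    refine (add_le_add_left h1 1).trans (h2.trans ?_)
    simp [add_assoc, one_add_one_eq_two]
  exact ENat.WithBot.add_le_add_one_right_iff.mp (ENat.WithBot.add_le_add_one_right_iff.mp h3)

theorem dvd_of_aeval_eq_zero_of_four_le_trdeg {k A : Type*} [Field k] [CommRing A] [IsDomain A]
    [Algebra k A] {F : MvPolynomial (Fin 4) k} (hF : Prime F) {x y x' y' s t : A}
    (hgen : Algebra.adjoin k {x, y, x', y', s, t} = ⊤)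
    (hv : aeval ![x, y, s, t] F = 0) (hv' : aeval ![x', y', s, t] F = 0)
    (hne : ∃ a b : k, aeval ![algebraMap k A a, algebraMap k A b, s, t] F ≠ 0)
    (htr : 4 ≤ Algebra.trdeg k A) {g : MvPolynomial (Fin 4) k}
    (hg : aeval ![x, y, s, t] g = 0) : F ∣ g := by
  by_contra hFg
  let ψ : MvPolynomial (Fin 4) k →ₐ[k] A := aeval ![x, y, s, t]
  let B := ψ.range
  have : Algebra.FiniteType k B := .of_surjective ψ.rangeRestrict ψ.rangeRestrict_surjective
  obtain ⟨d, hd, -, hheight⟩ := exists_trdeg_eq_and_le_height k B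
  have hdle : d ≤ 2 := by
    have h1 := ringKrullDim_le_of_surjective_of_not_dvd (n := 2) hF hFg ψ.rangeRestrict.toRingHom
      ψ.rangeRestrict_surjective (Subtype.ext hv) (Subtype.ext hg)
    obtain ⟨m, hm⟩ := Ideal.exists_maximal B
    have h2 := (Ideal.height_le_ringKrullDim_of_ne_top hm.ne_top).trans h1
    exact Nat.cast_le.mp ((WithBot.coe_le_coe.mpr (hheight m hm)).trans h2 :
      (d : WithBot ℕ∞) ≤ (2 : ℕ))
  let s' : B := ⟨s, X 2, by simp [ψ]⟩
  let t' : B := ⟨t, X 3, by simp [ψ]⟩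
  have hgen' : Algebra.adjoin B {x', y'} = ⊤ := by
    rw [eq_top_iff]
    have : Algebra.adjoin k {x, y, x', y', s, t} ≤
        (Algebra.adjoin B {x', y'}).restrictScalars k := by
      rw [Algebra.adjoin_le_iff]
      have hB : ∀ i, ![x, y, s, t] i ∈ Algebra.adjoin B {x', y'} := fun i =>
        (Algebra.adjoin B {x', y'}).algebraMap_mem ⟨![x, y, s, t] i, X i, by simp [ψ]⟩
      have hx' : x' ∈ Algebra.adjoin B {x', y'} := Algebra.subset_adjoin (by simp)
      have hy' : y' ∈ Algebra.adjoin B {x', y'} := Algebra.subset_adjoin (by simp)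
      rintro a (rfl | rfl | rfl | rfl | rfl | rfl)
      exacts [hB 0, hB 1, hx', hy', hB 2, hB 3]
    intro a _
    exact this (hgen ▸ trivial)
  let p : MvPolynomial (Fin 2) B := aeval ![X 0, X 1, C s', C t'] F
  have hp : ∀ a b : A, aeval ![a, b] p = aeval ![a, b, s, t] F := fun a b => by
    have : ((aeval ![a, b] : MvPolynomial (Fin 2) B →ₐ[B] A).restrictScalars k).comp
        (aeval ![X 0, X 1, C s', C t']) = (aeval ![a, b, s, t] : _ →ₐ[k] A) := by
      ext i
      fin_cases i <;> simp [s', t']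
    exact DFunLike.congr_fun this F
  have h1 : Algebra.trdeg B A ≤ 1 := by
    refine trdeg_le_one_of_adjoin_pair x' y' hgen' p ?_ ((hp _ _).trans hv')
    rintro h0
    obtain ⟨a, b, hab⟩ := hne
    exact hab (by rw [← hp, h0, map_zero])
  have h2 : Algebra.trdeg k A ≤ 2 + 1 := by
    rw [← trdeg_add_eq k B (A := A), hd]
    exact add_le_add (by exact_mod_cast hdle) h1
  have h3 := htr.trans h2
  norm_num at h3

section Dictionary

variable {n : ℕ}

theorem isAlgSet_zeroLocus (I : Ideal (MvPolynomial (Fin n) ℂ)) : IsAlgSet (zeroLocus ℂ I) :=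
  ⟨I, by ext; simp [zeroSetOf, aeval_eq_eval]⟩

theorem IsAlgSet.zeroLocus_vanishingIdeal {S : Set (Fin n → ℂ)} (hS : IsAlgSet S) :
    zeroLocus ℂ (vanishingIdeal ℂ S) = S := by
  obtain ⟨I, rfl⟩ := hS
  refine (zeroLocus_vanishingIdeal_le _).antisymm' fun w hw f hf => ?_
  simpa [aeval_eq_eval] using hw f fun x hx => by simpa [aeval_eq_eval] using hx f hf

theorem IsIrredAlgSet.isPrime_vanishingIdeal {S : Set (Fin n → ℂ)} (hS : IsIrredAlgSet S) :
    (vanishingIdeal ℂ S).IsPrime := by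
  obtain ⟨halg, ⟨w, hw⟩, hirr⟩ := hS
  refine ⟨fun h => ?_, fun {f g} hfg => ?_⟩
  · simpa using (h ▸ Submodule.mem_top : (1 : MvPolynomial (Fin n) ℂ) ∈ vanishingIdeal ℂ S) w hw
  · have halg' : ∀ p : MvPolynomial (Fin n) ℂ, IsAlgSet {z ∈ S | aeval z p = 0} := fun p => by
      obtain ⟨I, rfl⟩ := halg
      refine ⟨insert p I, ?_⟩
      ext z
      simp [zeroSetOf, aeval_eq_eval, and_comm]
    have key : S = {z ∈ S | aeval z f = 0} ∪ {z ∈ S | aeval z g = 0} := by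
      ext z
      refine ⟨fun hz => ?_, fun hz => hz.elim And.left And.left⟩
      have := hfg z hz
      rw [map_mul, mul_eq_zero] at this
      exact this.imp (⟨hz, ·⟩) (⟨hz, ·⟩)
    exact (hirr _ _ (halg' f) (halg' g) key).imp (fun h z hz => (h ▸ hz).2)
      fun h z hz => (h ▸ hz).2

theorem isIrredAlgSet_zeroLocus (P : Ideal (MvPolynomial (Fin n) ℂ)) [hP : P.IsPrime] :
    IsIrredAlgSet (zeroLocus ℂ P) := by
  refine ⟨isAlgSet_zeroLocus P, ?_, fun S₁ S₂ h₁ h₂ h => ?_⟩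
  · by_contra hne
    rw [Set.not_nonempty_iff_eq_empty] at hne
    have := IsPrime.vanishingIdeal_zeroLocus (K := ℂ) P
    rw [hne, vanishingIdeal_empty] at this
    exact hP.ne_top this.symm
  · have hle : vanishingIdeal ℂ S₁ ⊓ vanishingIdeal ℂ S₂ ≤ P := by
      rw [← IsPrime.vanishingIdeal_zeroLocus (K := ℂ) P, h]
      exact fun p hp z hz => hz.elim (hp.1 z) (hp.2 z)
    refine (hP.inf_le.mp hle).imp (fun hl => ?_) fun hl => ?_
    · refine Set.Subset.antisymm ?_ (h ▸ Set.subset_union_left)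
      exact (zeroLocus_anti_mono hl).trans h₁.zeroLocus_vanishingIdeal.le
    · refine Set.Subset.antisymm ?_ (h ▸ Set.subset_union_right)
      exact (zeroLocus_anti_mono hl).trans h₂.zeroLocus_vanishingIdeal.le

theorem vanishingIdeal_lt_vanishingIdeal {S T : Set (Fin n → ℂ)} (hS : IsAlgSet S)
    (hT : IsAlgSet T) (h : S < T) : vanishingIdeal ℂ T < vanishingIdeal ℂ S := by
  refine (vanishingIdeal_anti_mono h.le).lt_of_ne fun heq => h.ne ?_
  rw [← hS.zeroLocus_vanishingIdeal, ← heq, hT.zeroLocus_vanishingIdeal]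

theorem zeroLocus_lt_zeroLocus {P Q : Ideal (MvPolynomial (Fin n) ℂ)} [P.IsPrime] [Q.IsPrime]
    (h : P < Q) : zeroLocus ℂ Q < zeroLocus ℂ P := by
  refine (zeroLocus_anti_mono h.le).lt_of_ne fun heq => h.ne ?_
  rw [← IsPrime.vanishingIdeal_zeroLocus (K := ℂ) P, ← heq, IsPrime.vanishingIdeal_zeroLocus]

/-- A chain of irreducible algebraic sets bounds the Krull dimension of a coordinate ring. -/
theorem le_ringKrullDim_quotient_of_strictMono {d : ℕ} {I : Ideal (MvPolynomial (Fin n) ℂ)}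
    {Z : Fin (d + 1) → Set (Fin n → ℂ)} (hZ : ∀ i, IsIrredAlgSet (Z i))
    (hI : ∀ i, I ≤ vanishingIdeal ℂ (Z i)) (hmono : StrictMono Z) :
    (d : WithBot ℕ∞) ≤ ringKrullDim (MvPolynomial (Fin n) ℂ ⧸ I) := by
  rw [ringKrullDim_quotient]
  let L : LTSeries (PrimeSpectrum.zeroLocus (I : Set (MvPolynomial (Fin n) ℂ))) :=
    LTSeries.mk d (fun i => ⟨⟨_, (hZ i.rev).isPrime_vanishingIdeal⟩, hI i.rev⟩)
      fun i j hij => vanishingIdeal_lt_vanishingIdeal (hZ _).1 (hZ _).1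
        (hmono (Fin.rev_lt_rev.mpr hij))
  exact Order.LTSeries.length_le_krullDim L

theorem localDimGE_of_le_height {d : ℕ} {P : Ideal (MvPolynomial (Fin n) ℂ)} [P.IsPrime]
    {X : Set (Fin n → ℂ)} (hX : zeroLocus ℂ P ⊆ X) {w : Fin n → ℂ} (hw : w ∈ zeroLocus ℂ P)
    (hd : ∀ m : Ideal (MvPolynomial (Fin n) ℂ ⧸ P), m.IsMaximal → (d : ℕ∞) ≤ m.height) :
    LocalDimGE X w d := by
  have hPm : P ≤ vanishingIdeal ℂ {w} :=
    le_zeroLocus_iff_le_vanishingIdeal.mp (Set.singleton_subset_iff.mpr hw)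
  let π := Ideal.Quotient.mk P
  have hker : RingHom.ker π ≤ vanishingIdeal ℂ {w} := by rwa [Ideal.mk_ker]
  have hmax : ((vanishingIdeal ℂ {w}).map π).IsMaximal :=
    Ideal.IsMaximal.map_of_surjective_of_ker_le Ideal.Quotient.mk_surjective hker
  have hht := hd _ hmax
  let m : PrimeSpectrum (MvPolynomial (Fin n) ℂ ⧸ P) := ⟨_, hmax.isPrime⟩
  obtain ⟨p, hp, rfl⟩ := Order.exists_series_of_le_height m (m.height_eq_orderHeight ▸ hht)
  refine ⟨fun i => zeroLocus ℂ ((p i.rev).asIdeal.comap π), fun i =>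
    ⟨isIrredAlgSet_zeroLocus _, (zeroLocus_anti_mono ?_).trans hX⟩, fun i j hij => ?_, ?_⟩
  · intro f hf
    simp [π, Ideal.Quotient.eq_zero_iff_mem.mpr hf]
  · refine zeroLocus_lt_zeroLocus ?_
    have h : (p j.rev).asIdeal < (p i.rev).asIdeal := p.strictMono (Fin.rev_lt_rev.mpr hij)
    exact (Ideal.comap_mono h.le).lt_of_not_ge fun hle => h.not_ge
      ((Ideal.comap_le_comap_iff_of_surjective _ Ideal.Quotient.mk_surjective _ _).mp hle)
  · beta_reduce
    rw [Fin.rev_zero]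
    change w ∈ zeroLocus ℂ (p.last.asIdeal.comap π)
    rw [hp]
    refine Set.singleton_subset_iff.mp (le_zeroLocus_iff_le_vanishingIdeal.mpr ?_)
    simp only [m]
    rw [Ideal.comap_map_of_surjective _ Ideal.Quotient.mk_surjective, sup_le_iff]
    exact ⟨le_rfl, hker⟩

theorem finite_setOf_isComponentOf {W : Set (Fin n → ℂ)} (hW : IsAlgSet W) :
    {S | IsComponentOf S W}.Finite := by
  refine Set.Finite.of_finite_image (f := vanishingIdeal ℂ)
    (((vanishingIdeal ℂ W).finite_minimalPrimes_of_isNoetherianRing _).subset ?_)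
    fun S hS T hT hST => ?_
  · rintro _ ⟨S, hS, rfl⟩
    refine ⟨⟨hS.1.isPrime_vanishingIdeal, vanishingIdeal_anti_mono hS.2.1⟩, ?_⟩
    rintro Q ⟨hQ, hWQ⟩ hQS
    rw [hS.2.2 (zeroLocus ℂ Q) (isIrredAlgSet_zeroLocus Q)
      ((zeroLocus_anti_mono hWQ).trans hW.zeroLocus_vanishingIdeal.le)
      (le_zeroLocus_iff_le_vanishingIdeal.mpr hQS), IsPrime.vanishingIdeal_zeroLocus]
  · rw [← hS.1.1.zeroLocus_vanishingIdeal, hST, hT.1.1.zeroLocus_vanishingIdeal]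

theorem IsIrredAlgSet.exists_subset_of_subset_sUnion {Z : Set (Fin n → ℂ)} (hZ : IsIrredAlgSet Z)
    {𝒮 : Set (Set (Fin n → ℂ))} (hfin : 𝒮.Finite) (halg : ∀ S ∈ 𝒮, IsAlgSet S)
    (h : Z ⊆ ⋃₀ 𝒮) : ∃ S ∈ 𝒮, Z ⊆ S := by
  have hle : hfin.toFinset.inf (vanishingIdeal ℂ) ≤ vanishingIdeal ℂ Z := fun p hp z hz => by
    obtain ⟨S, hS, hzS⟩ := h hz
    exact (Finset.inf_le (f := vanishingIdeal ℂ) (hfin.mem_toFinset.mpr hS) hp :) z hzS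
  obtain ⟨S, hS, hSZ⟩ := (Ideal.IsPrime.inf_le' hZ.isPrime_vanishingIdeal).mp hle
  rw [hfin.mem_toFinset] at hS
  refine ⟨S, hS, ?_⟩
  rw [← (halg S hS).zeroLocus_vanishingIdeal]
  exact le_zeroLocus_iff_le_vanishingIdeal.mpr hSZ

end Dictionary

namespace MvPolynomial

theorem totalDegree_pderiv_lt {σ R : Type*} [CommRing R] {p : MvPolynomial σ R} {i : σ}
    (h : pderiv i p ≠ 0) : (pderiv i p).totalDegree < p.totalDegree := by
  have key : ∀ m ∈ (pderiv i p).support, (m.sum fun _ e => e) < p.totalDegree := fun m hm => by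
    rw [mem_support_iff, coeff_pderiv] at hm
    have := le_totalDegree (mem_support_iff.mpr (left_ne_zero_of_mul hm))
    rw [Finsupp.sum_add_index' (fun _ => rfl) (fun _ _ _ => rfl),
      Finsupp.sum_single_index rfl] at this
    omega
  obtain ⟨m, hm⟩ := support_nonempty.mpr h
  exact (Finset.sup_lt_iff (bot_le.trans_lt (key m hm))).mpr key

theorem not_dvd_pderiv {σ R : Type*} [CommRing R] [IsDomain R] {p : MvPolynomial σ R} {i : σ}
    (h : pderiv i p ≠ 0) : ¬p ∣ pderiv i p := by
  rintro ⟨q, hq⟩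
  have hlt := totalDegree_pderiv_lt h
  rw [hq] at h hlt
  rw [totalDegree_mul_of_isDomain (left_ne_zero_of_mul h) (right_ne_zero_of_mul h)] at hlt
  omega

theorem sum_mul_eval_pderiv_rename {σ τ R : Type*} [CommRing R] [Fintype σ] [Fintype τ]
    {φ : σ → τ} (hφ : φ.Injective) (u w : τ → R) (p : MvPolynomial σ R) :
    ∑ i, u i * eval w (pderiv i (rename φ p)) =
      ∑ j, u (φ j) * eval (w ∘ φ) (pderiv j p) := by
  classical
  rw [← Finset.sum_subset (Finset.subset_univ (Finset.univ.image φ)),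
    Finset.sum_image hφ.injOn]
  · simp [pderiv_rename hφ, eval_rename]
  · intro i _ hi
    rw [pderiv_eq_zero_of_notMem_vars fun h => ?_, map_zero, mul_zero]
    obtain ⟨j, -, rfl⟩ := Finset.mem_image.mp (vars_rename φ p h)
    exact hi (Finset.mem_image_of_mem φ (Finset.mem_univ j))

theorem finitePresentation_rename {k : Type*} [Field k] {m n : ℕ} (φ : Fin m → Fin n) :
    (rename φ : MvPolynomial (Fin m) k →ₐ[k] MvPolynomial (Fin n) k).toRingHom.FinitePresentation := by
  refine RingHom.FinitePresentation.of_finiteType.mp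
    (RingHom.FiniteType.of_comp_finiteType (f := (C : k →+* _)) ?_)
  have : (rename φ : MvPolynomial (Fin m) k →ₐ[k] MvPolynomial (Fin n) k).toRingHom.comp C =
      algebraMap k _ := (rename φ : MvPolynomial (Fin m) k →ₐ[k] _).comp_algebraMap
  rw [this, RingHom.finiteType_algebraMap]
  infer_instance

/-- A dominant coordinate projection from an irreducible variety onto a hypersurface `F = 0`
hits every point of the hypersurface off a proper hypersurface section. -/
theorem exists_not_dvd_forall_exists_comp_eq {m n : ℕ} (φ : Fin m → Fin n)
    {F : MvPolynomial (Fin m) ℂ} {P : Ideal (MvPolynomial (Fin n) ℂ)} [hP : P.IsPrime]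
    (hcomap : ∀ g, rename φ g ∈ P ↔ F ∣ g) {b : MvPolynomial (Fin n) ℂ} (hb : b ∉ P) :
    ∃ f, ¬F ∣ f ∧ ∀ v, eval v F = 0 → eval v f ≠ 0 →
      ∃ w ∈ zeroLocus ℂ P, w ∘ φ = v ∧ eval w b ≠ 0 := by
  let ψ := (rename φ : MvPolynomial (Fin m) ℂ →ₐ[ℂ] MvPolynomial (Fin n) ℂ).toRingHom
  obtain ⟨l, c, hc⟩ := Submodule.fg_iff_exists_fin_generating_family.mp
    (IsNoetherian.noetherian P)
  let D : PrimeSpectrum.ConstructibleSetData (MvPolynomial (Fin n) ℂ) := {⟨b, l, c⟩}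
  have hmem : ∀ q, q ∈ D.toSet ↔ P ≤ q.asIdeal ∧ b ∉ q.asIdeal := fun q => by
    rw [← hc]
    simp [D, PrimeSpectrum.ConstructibleSetData.toSet,
      PrimeSpectrum.BasicConstructibleSetData.toSet, PrimeSpectrum.mem_zeroLocus,
      Submodule.span_le]
  obtain ⟨E, hE⟩ := PrimeSpectrum.exists_constructibleSetData_iff.mpr
    (PrimeSpectrum.isConstructible_comap_image (finitePresentation_rename φ)
      D.isConstructible_toSet)
  have hPE : PrimeSpectrum.comap ψ ⟨P, hP⟩ ∈ E.toSet :=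
    hE ▸ ⟨_, (hmem _).mpr ⟨le_rfl, hb⟩, rfl⟩
  simp only [PrimeSpectrum.ConstructibleSetData.toSet, Set.mem_iUnion] at hPE
  obtain ⟨B, hB, hg, hf⟩ := hPE
  refine ⟨B.f, fun hdvd => hf ?_, fun v hv hvf => ?_⟩
  · simpa [PrimeSpectrum.mem_zeroLocus, ψ] using (hcomap _).mpr hdvd
  have hvE : pointToPoint v ∈ E.toSet := by
    simp only [PrimeSpectrum.ConstructibleSetData.toSet, Set.mem_iUnion]
    refine ⟨B, hB, ?_, fun h => hvf ?_⟩
    · intro g hgr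
      obtain ⟨r, hr⟩ := (hcomap g).mp (hg hgr)
      simp [pointToPoint, hr, hv, aeval_eq_eval]
    · simpa [pointToPoint, PrimeSpectrum.mem_zeroLocus, aeval_eq_eval] using h
  rw [hE] at hvE
  obtain ⟨q, hq, hqv⟩ := hvE
  obtain ⟨hPq, hbq⟩ := (hmem q).mp hq
  rw [← IsPrime.vanishingIdeal_zeroLocus (K := ℂ) q.asIdeal] at hbq
  simp only [mem_vanishingIdeal_iff, not_forall] at hbq
  obtain ⟨w, hw, hwb⟩ := hbq
  refine ⟨w, zeroLocus_anti_mono hPq hw, ?_, by simpa [aeval_eq_eval] using hwb⟩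
  ext i
  have hi : X i - C (v i) ∈ (PrimeSpectrum.comap ψ q).asIdeal := by
    rw [hqv]
    simp [pointToPoint]
  have := hw _ hi
  simpa [ψ, sub_eq_zero] using this

end MvPolynomial

/-- The positions of `(x, y, s, t)` among `(x, y, x', y', s, t)`. -/
def fstIdx : Fin 4 → Fin 6 := ![0, 1, 4, 5]

/-- The positions of `(x', y', s, t)` among `(x, y, x', y', s, t)`. -/
def sndIdx : Fin 4 → Fin 6 := ![2, 3, 4, 5]

theorem fstIdx_injective : fstIdx.Injective := by unfold fstIdx; decide

theorem sndIdx_injective : sndIdx.Injective := by unfold sndIdx; decide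

theorem comp_fstIdx {α : Type*} (w : Fin 6 → α) : w ∘ fstIdx = ![w 0, w 1, w 4, w 5] := by
  ext i; fin_cases i <;> rfl

theorem comp_sndIdx {α : Type*} (w : Fin 6 → α) : w ∘ sndIdx = ![w 2, w 3, w 4, w 5] := by
  ext i; fin_cases i <;> rfl

theorem mem_Vvar_iff {F : MvPolynomial (Fin 4) ℂ} {w : Fin 6 → ℂ} :
    w ∈ Vvar F ↔ eval w (rename fstIdx F) = 0 ∧ eval w (rename sndIdx F) = 0 := by
  simp [Vvar, eval_rename, comp_fstIdx, comp_sndIdx]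

theorem isAlgSet_Wvar (F : MvPolynomial (Fin 4) ℂ) : IsAlgSet (Wvar F) := by
  refine ⟨{rename fstIdx F, rename sndIdx F,
    rename fstIdx (pderiv 2 F) * rename sndIdx (pderiv 3 F) -
      rename sndIdx (pderiv 2 F) * rename fstIdx (pderiv 3 F)}, ?_⟩
  ext w
  simp [Wvar, Vvar, Gval, zeroSetOf, eval_rename, comp_fstIdx, comp_sndIdx, and_assoc]

theorem Wtilde_subset_Vvar (F : MvPolynomial (Fin 4) ℂ) : Wtilde F ⊆ Vvar F :=
  Set.sUnion_subset fun _ hS => hS.1.2.1.trans Set.inter_subset_left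

theorem tangentDimLE_four {F : MvPolynomial (Fin 4) ℂ} {X : Set (Fin 6 → ℂ)} {w : Fin 6 → ℂ}
    (hX : X ⊆ Vvar F) (h : eval (w ∘ fstIdx) (pderiv 0 F) ≠ 0)
    (h' : eval (w ∘ sndIdx) (pderiv 0 F) ≠ 0) : TangentDimLE X w 4 := by
  intro v hv hli
  let π : (Fin 6 → ℂ) →ₗ[ℂ] (Fin 4 → ℂ) := LinearMap.funLeft ℂ ℂ ![1, 3, 4, 5]
  have hdep : ¬LinearIndependent ℂ (π ∘ v) := fun hl => by
    simpa using hl.fintype_card_le_finrank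
  obtain ⟨g, hg, i, hi⟩ := Fintype.not_linearIndependent_iff.mp hdep
  set u := ∑ i, g i • v i with hu_def
  have hπ : π u = 0 := by simpa [u] using hg
  have htan : u ∈ TangentVecs X w := fun f hf => by
    simp only [hu_def, Finset.sum_apply, Pi.smul_apply, smul_eq_mul, Finset.sum_mul, mul_assoc]
    rw [Finset.sum_comm]
    simp [← Finset.mul_sum, hv _ f hf]
  have hcoord : ∀ j, u ((![1, 3, 4, 5] : Fin 4 → Fin 6) j) = 0 := fun j => congrFun hπ j
  have h1 := hcoord 0
  have h3 := hcoord 1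
  have h4 := hcoord 2
  have h5 := hcoord 3
  simp only [Matrix.cons_val] at h1 h3 h4 h5
  have e := htan _ fun z hz => (mem_Vvar_iff.mp (hX hz)).1
  have e' := htan _ fun z hz => (mem_Vvar_iff.mp (hX hz)).2
  rw [sum_mul_eval_pderiv_rename fstIdx_injective] at e
  rw [sum_mul_eval_pderiv_rename sndIdx_injective] at e'
  have h0 : u 0 = 0 := by
    simp only [fstIdx] at e h
    simpa [Fin.sum_univ_four, h1, h4, h5, h] using e
  have h2 : u 2 = 0 := by
    simp only [sndIdx] at e' h'
    simpa [Fin.sum_univ_four, h3, h4, h5, h'] using e'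
  have hu : u = 0 := by
    ext j
    fin_cases j <;> assumption
  exact hi (Fintype.linearIndependent_iff.mp hli g hu i)

/-- Both coordinate projections of a variety of dimension at least four inside `V`, not contained
in `V₀`, are dominant onto the hypersurface `F = 0`. -/
theorem rename_mem_iff_dvd {F : MvPolynomial (Fin 4) ℂ} (hF : Prime F)
    {P : Ideal (MvPolynomial (Fin 6) ℂ)} [P.IsPrime] (hFP : rename fstIdx F ∈ P)
    (hFP' : rename sndIdx F ∈ P) {w : Fin 6 → ℂ} (hw : w ∈ zeroLocus ℂ P) {a b : ℂ}
    (hab : ev4 F a b (w 4) (w 5) ≠ 0)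
    (htr : 4 ≤ Algebra.trdeg ℂ (MvPolynomial (Fin 6) ℂ ⧸ P)) :
    (∀ g, rename fstIdx g ∈ P ↔ F ∣ g) ∧ ∀ g, rename sndIdx g ∈ P ↔ F ∣ g := by
  let π := Ideal.Quotient.mkₐ ℂ P
  have hX : aeval (fun i => π (X i)) = π := (aeval_unique π).symm
  have haeval : ∀ g, aeval ![π (X 0), π (X 1), π (X 4), π (X 5)] g = π (rename fstIdx g) := by
    intro g
    rw [← comp_fstIdx fun i => π (X i), ← aeval_rename, hX]
  have haeval' : ∀ g, aeval ![π (X 2), π (X 3), π (X 4), π (X 5)] g = π (rename sndIdx g) := by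
    intro g
    rw [← comp_sndIdx fun i => π (X i), ← aeval_rename, hX]
  have hπ : ∀ g, π g = 0 ↔ g ∈ P := fun g => Ideal.Quotient.eq_zero_iff_mem
  have hne : ∃ a b : ℂ, aeval ![algebraMap ℂ _ a, algebraMap ℂ _ b, π (X 4), π (X 5)] F ≠ 0 := by
    refine ⟨a, b, fun h0 => hab ?_⟩
    have h1 : aeval ![algebraMap ℂ _ a, algebraMap ℂ _ b, π (X 4), π (X 5)] =
        π.comp (aeval ![C a, C b, X 4, X 5]) := by
      ext i
      fin_cases i <;> simp [← algebraMap_eq]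
    rw [h1, AlgHom.comp_apply, hπ] at h0
    have h2 : (aeval w).comp (aeval ![C a, C b, X 4, X 5]) = aeval ![a, b, w 4, w 5] := by
      ext i
      fin_cases i <;> simp
    rw [ev4, ← aeval_eq_eval, ← h2]
    exact hw _ h0
  have hrange : Set.range (fun i => π (X i)) =
      {π (X 0), π (X 1), π (X 2), π (X 3), π (X 4), π (X 5)} := by
    ext z
    simp [Fin.exists_fin_succ, eq_comm]
  have hgen : Algebra.adjoin ℂ {π (X 0), π (X 1), π (X 2), π (X 3), π (X 4), π (X 5)} = ⊤ := by
    rw [← hrange, Algebra.adjoin_range_eq_range_aeval, hX]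
    exact (AlgHom.range_eq_top _).mpr (Ideal.Quotient.mkₐ_surjective _ _)
  have hgen' : Algebra.adjoin ℂ {π (X 2), π (X 3), π (X 0), π (X 1), π (X 4), π (X 5)} = ⊤ := by
    rw [← hgen]
    congr 1
    ext z
    simp only [Set.mem_insert_iff, Set.mem_singleton_iff]
    tauto
  have hv := (haeval F).trans ((hπ _).mpr hFP)
  have hv' := (haeval' F).trans ((hπ _).mpr hFP')
  refine ⟨fun g => ⟨fun hg => ?_, fun ⟨q, hq⟩ => ?_⟩, fun g => ⟨fun hg => ?_, fun ⟨q, hq⟩ => ?_⟩⟩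
  · exact dvd_of_aeval_eq_zero_of_four_le_trdeg hF hgen hv hv' hne htr
      ((haeval g).trans ((hπ _).mpr hg))
  · rw [hq, map_mul]
    exact P.mul_mem_right _ hFP
  · exact dvd_of_aeval_eq_zero_of_four_le_trdeg hF hgen' hv' hv hne htr
      ((haeval' g).trans ((hπ _).mpr hg))
  · rw [hq, map_mul]
    exact P.mul_mem_right _ hFP'

/-- If the dimension of `W̃` is at least four, then some component of `W` outside `V₀` has all its
local dimensions at least four and projects dominantly to `Z(F)` under both projections. -/
theorem exists_isPrime_of_algDimGE_four {F : MvPolynomial (Fin 4) ℂ} (hF : Prime F)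
    (hdim : algDimGE (Wtilde F) 4) :
    ∃ P : Ideal (MvPolynomial (Fin 6) ℂ), P.IsPrime ∧ zeroLocus ℂ P ⊆ Wtilde F ∧
      (∀ m : Ideal (MvPolynomial (Fin 6) ℂ ⧸ P), m.IsMaximal → ((4 : ℕ) : ℕ∞) ≤ m.height) ∧
      (∀ g, rename fstIdx g ∈ P ↔ F ∣ g) ∧ ∀ g, rename sndIdx g ∈ P ↔ F ∣ g := by
  obtain ⟨Z, hZ, hmono⟩ := hdim
  obtain ⟨S, ⟨hS, hSV⟩, hZS⟩ := (hZ (Fin.last 4)).1.exists_subset_of_subset_sUnion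
    ((finite_setOf_isComponentOf (isAlgSet_Wvar F)).subset fun S hS => hS.1)
    (fun S hS => hS.1.1.1) (hZ (Fin.last 4)).2
  have hP := hS.1.isPrime_vanishingIdeal
  have hzero := hS.1.1.zeroLocus_vanishingIdeal
  have hSW : S ⊆ Wtilde F := Set.subset_sUnion_of_mem ⟨hS, hSV⟩
  obtain ⟨s, htr, hkrull, hheight⟩ :=
    exists_trdeg_eq_and_le_height ℂ (MvPolynomial (Fin 6) ℂ ⧸ vanishingIdeal ℂ S)
  have h4 : 4 ≤ s := by
    have := (le_ringKrullDim_quotient_of_strictMono (I := vanishingIdeal ℂ S) (fun i => (hZ i).1)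
      (fun i => vanishingIdeal_anti_mono ((hmono.monotone (Fin.le_last i)).trans hZS))
      hmono).trans hkrull
    exact_mod_cast this
  obtain ⟨w, hwS, hw⟩ := Set.not_subset.mp hSV
  simp only [V0, TT, Set.mem_ofPred_eq, not_forall] at hw
  obtain ⟨a, b, hab⟩ := hw
  have hV : ∀ z ∈ S, _ := fun z hz => mem_Vvar_iff.mp (Wtilde_subset_Vvar F (hSW hz))
  refine ⟨_, hP, hzero.le.trans hSW, fun m hm => le_trans (by exact_mod_cast h4) (hheight m hm),
    rename_mem_iff_dvd hF (fun z hz => ?_) (fun z hz => ?_) (hzero.ge hwS) hab ?_⟩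
  · simpa [aeval_eq_eval] using (hV z hz).1
  · simpa [aeval_eq_eval] using (hV z hz).2
  · rw [htr]
    exact_mod_cast h4

theorem algDimLE_zeroLocus_span_pair {n : ℕ} {F f : MvPolynomial (Fin (n + 2)) ℂ} (hF : Prime F)
    (hf : ¬F ∣ f) : algDimLE (zeroLocus ℂ (Ideal.span {F, f})) n := by
  intro Z hZ hmono
  have h := (le_ringKrullDim_quotient_of_strictMono (fun i => (hZ i).1)
    (fun i => le_zeroLocus_iff_le_vanishingIdeal.mp (hZ i).2) hmono).trans
    (ringKrullDim_le_of_surjective_of_not_dvd hF hf _ Ideal.Quotient.mk_surjective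
      (Ideal.Quotient.eq_zero_iff_mem.mpr (Ideal.subset_span (by simp)))
      (Ideal.Quotient.eq_zero_iff_mem.mpr (Ideal.subset_span (by simp))))
  have : n + 1 ≤ n := by exact_mod_cast h
  omega

/-- **Lemma 3.3.** If `W̃` is four-dimensional, then there is a subvariety `Z₀ ⊆ Z(F)` of
dimension at most 2 such that every point of `Z(F)\Z₀` extends, by a choice of `x',y'`, to a
regular point of `W̃` at which no partial derivative of `F` vanishes in either group of
variables. -/
theorem regular_point_off_small_variety (F : MvPolynomial (Fin 4) ℂ) (δ : ℕ)
    (hirr : Irreducible F) (hdeg : F.totalDegree = δ)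
    (hder : ∀ i : Fin 4, pderiv i F ≠ 0)
    (hdim : algDimLE (Wtilde F) 4 ∧ algDimGE (Wtilde F) 4) :
    ∃ Z₀ : Set (Fin 4 → ℂ), IsAlgSet Z₀ ∧ Z₀ ⊆ {v | eval v F = 0} ∧ algDimLE Z₀ 2 ∧
      ∀ v : Fin 4 → ℂ, eval v F = 0 → v ∉ Z₀ →
        ∃ x' y' : ℂ,
          IsRegularPt (Wtilde F) ![v 0, v 1, x', y', v 2, v 3] ∧
          (∀ i : Fin 4, eval ![v 0, v 1, v 2, v 3] (pderiv i F) ≠ 0) ∧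
          (∀ i : Fin 4, eval ![x', y', v 2, v 3] (pderiv i F) ≠ 0) := by
  have hF : Prime F := hirr.prime
  obtain ⟨P, hP, hPW, hheight, hfst, hsnd⟩ := exists_isPrime_of_algDimGE_four hF hdim.2
  have hb : ∏ i, rename fstIdx (pderiv i F) * rename sndIdx (pderiv i F) ∉ P := by
    rw [hP.prod_mem_iff]
    rintro ⟨i, -, hi⟩
    rcases hP.mem_or_mem hi with hi | hi
    · exact not_dvd_pderiv (hder i) ((hfst _).mp hi)
    · exact not_dvd_pderiv (hder i) ((hsnd _).mp hi)
  obtain ⟨f, hf, hlift⟩ := exists_not_dvd_forall_exists_comp_eq fstIdx hfst hb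
  have hmem : ∀ v, v ∈ zeroLocus ℂ (Ideal.span {F, f}) ↔ eval v F = 0 ∧ eval v f = 0 := by
    simp [zeroLocus_span, aeval_eq_eval]
  refine ⟨zeroLocus ℂ (Ideal.span {F, f}), isAlgSet_zeroLocus _, fun v hv => ((hmem v).mp hv).1,
    algDimLE_zeroLocus_span_pair hF hf, fun v hv hvf => ?_⟩
  obtain ⟨w, hw, rfl, hwb⟩ := hlift v hv fun h => hvf ((hmem v).mpr ⟨hv, h⟩)
  simp only [map_prod, map_mul, eval_rename, Finset.prod_ne_zero_iff, Finset.mem_univ,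
    true_implies, mul_ne_zero_iff] at hwb
  have hww : ![w 0, w 1, w 2, w 3, w 4, w 5] = w := by
    ext i
    fin_cases i <;> rfl
  refine ⟨w 2, w 3, ?_, fun i => ?_, fun i => ?_⟩
  · change IsRegularPt (Wtilde F) ![w 0, w 1, w 2, w 3, w 4, w 5]
    rw [hww]
    refine ⟨hPW hw, 4, localDimGE_of_le_height hPW hw hheight, ?_,
      tangentDimLE_four (Wtilde_subset_Vvar F) (hwb 0).1 (hwb 0).2⟩
    rintro ⟨Z, hZ, hmono, -⟩
    exact hdim.1 Z hZ hmono
  · change eval ![w 0, w 1, w 4, w 5] _ ≠ 0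
    rw [← comp_fstIdx]
    exact (hwb i).1
  · change eval ![w 2, w 3, w 4, w 5] _ ≠ 0
    rw [← comp_sndIdx]
    exact (hwb i).2
end
end
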